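/- arXiv:1709.03335 — 3 statements merged into one kernel-verified Lean document; each statement's English description precedes it below -/
import Mathlib

section
/- Let s ≥ 2 and let G = P'_{8·3^s} be the generalized binary tetrahedral group. The group cohomology of G with coefficients in the trivial G-module ℤ is: H⁰(G; ℤ) ≅ ℤ; Hⁿ(G; ℤ) ≅ ℤ/(8·3^s)ℤ for n > 0 with n ≡ 0 (mod 4); Hⁿ(G; ℤ) = 0 for n odd; and Hⁿ(G; ℤ) ≅ ℤ/3^sℤ for n ≡ 2 (mod 4). -/
/-- Generators of the generalized binary tetrahedral group. -/
inductive Gen : Type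
  | p : Gen
  | q : Gen
  | z : Gen

/-- The relations of the presentation
`⟨p, q, z | p² = (pq)² = q², z p z⁻¹ = q, z q z⁻¹ = pq, z^{3^s} = 1⟩`. -/
def rels (s : ℕ) : Set (FreeGroup Gen) :=
  {FreeGroup.of Gen.p ^ 2 * (FreeGroup.of Gen.q ^ 2)⁻¹,
   (FreeGroup.of Gen.p * FreeGroup.of Gen.q) ^ 2 * (FreeGroup.of Gen.q ^ 2)⁻¹,
   FreeGroup.of Gen.z * FreeGroup.of Gen.p * (FreeGroup.of Gen.z)⁻¹ *
     (FreeGroup.of Gen.q)⁻¹,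
   FreeGroup.of Gen.z * FreeGroup.of Gen.q * (FreeGroup.of Gen.z)⁻¹ *
     (FreeGroup.of Gen.p * FreeGroup.of Gen.q)⁻¹,
   FreeGroup.of Gen.z ^ (3 ^ s)}

/-!
Put `T = p² z`, `u = q z ^ (6 j + 4)` and `b = 3 j + 2`, where `3 ^ s = 9 (2 j + 1)`. These elements
present the group by the two relations `u³ = T³` and `(T ^ b u)² = T³`; the relation
`z ^ (3 ^ s) = 1` is a consequence, because `p = T ^ b u T ^ (-3 b)` again satisfies the tetrahedral
relations and so `p⁴ = 1`.

The Fox Jacobian of the two relations and an identity between them yield a free resolution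
`⋯ → ℤ[G] → ℤ[G] → ℤ[G]² → ℤ[G]² → ℤ[G] → ℤ` of period four, closed up by the norm element `N`.
Exactness in degree one is the universal property of crossed homomorphisms. In degree two the kernel
and the image have the same rank, by the exactness elsewhere, and the image is saturated, since an
element of `ℤ[G]` which is invariant modulo `n` is congruent to a multiple of `N`. After applying
`Hom(-, ℤ)` the differentials are `0`, a matrix of determinant `-3 ^ s` with cyclic cokernel, `0`
and the order `8 · 3 ^ s` of the group.
-/

section Tetrahedral

variable {G : Type*} [Group G] {p q z T u : G}

/-- The relations of the binary tetrahedral group, without any bound on the order of `z`. -/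
structure TetrahedralRelations (p q z : G) : Prop where
  sq_eq_sq : p ^ 2 = q ^ 2
  mul_sq : (p * q) ^ 2 = q ^ 2
  conj_left : z * p * z⁻¹ = q
  conj_right : z * q * z⁻¹ = p * q

namespace TetrahedralRelations

theorem mul_mul_left (h : TetrahedralRelations p q z) : p * q * p = q := by
  have : p * q * p * q = q * q := by simpa only [pow_two, mul_assoc] using h.mul_sq
  exact mul_right_cancel this

theorem mul_mul_right (h : TetrahedralRelations p q z) : q * p * q = p := by
  have : p * (q * p * q) = p * p := by
    rw [← pow_two p, h.sq_eq_sq, ← h.mul_sq]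
    simp only [pow_two, mul_assoc]
  exact mul_left_cancel this

theorem commute_sq_right (h : TetrahedralRelations p q z) : Commute (p ^ 2) q :=
  h.sq_eq_sq ▸ Commute.pow_self q 2

theorem commute_sq_conj (h : TetrahedralRelations p q z) : Commute (p ^ 2) z := by
  refine (mul_inv_eq_iff_eq_mul.mp ?_ : z * p ^ 2 = p ^ 2 * z).symm
  rw [← conj_pow, h.conj_left, h.sq_eq_sq]

theorem sq_sq (h : TetrahedralRelations p q z) : (p ^ 2) ^ 2 = 1 := by
  have conj_sq : p ^ 2 * q * p ^ 2 = q := calc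
    p ^ 2 * q * p ^ 2 = p * (p * q * p) * p := by simp only [pow_two, mul_assoc]
    _ = q := by rw [h.mul_mul_left, h.mul_mul_left]
  rw [h.commute_sq_right.eq, mul_assoc, ← pow_two] at conj_sq
  simpa only [mul_eq_left] using conj_sq

theorem conj_mul_left (h : TetrahedralRelations p q z) : z * p = q * z :=
  mul_inv_eq_iff_eq_mul.mp h.conj_left

theorem conj_mul_right (h : TetrahedralRelations p q z) : z * q = p * q * z :=
  mul_inv_eq_iff_eq_mul.mp h.conj_right

theorem sq_mul_right (h : TetrahedralRelations p q z) : z ^ 2 * q = p * z ^ 2 := calc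
  z ^ 2 * q = z * (z * q) := by rw [pow_two, mul_assoc]
  _ = z * p * (q * z) := by rw [h.conj_mul_right]; simp only [mul_assoc]
  _ = q * (z * q) * z := by rw [h.conj_mul_left]; simp only [mul_assoc]
  _ = q * p * q * z ^ 2 := by rw [h.conj_mul_right]; simp only [mul_assoc, pow_two]
  _ = p * z ^ 2 := by rw [h.mul_mul_right]

theorem commute_cube_left (h : TetrahedralRelations p q z) : Commute (z ^ 3) p := calc
  z ^ 3 * p = z ^ 2 * q * z := by rw [pow_succ, mul_assoc, h.conj_mul_left, mul_assoc]
  _ = p * z ^ 3 := by rw [h.sq_mul_right, pow_succ z 2, mul_assoc]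

theorem commute_cube_right (h : TetrahedralRelations p q z) : Commute (z ^ 3) q := calc
  z ^ 3 * q = z * p * z ^ 2 := by rw [pow_succ', mul_assoc, h.sq_mul_right, mul_assoc]
  _ = q * z ^ 3 := by rw [h.conj_mul_left, pow_succ' z 2, mul_assoc]

theorem mul_cube (h : TetrahedralRelations p q z) : (q * z) ^ 3 = p ^ 2 * z ^ 3 := calc
  (q * z) ^ 3 = q * (z * q) * (z * q) * z := by simp only [pow_succ, pow_zero, one_mul, mul_assoc]
  _ = (q * p * q) * (z * p) * q * z ^ 2 := by
    rw [h.conj_mul_right]; simp only [pow_two, mul_assoc]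
  _ = p * q * (z * q) * z ^ 2 := by
    rw [h.mul_mul_right, h.conj_mul_left]; simp only [mul_assoc]
  _ = (p * q) ^ 2 * z ^ 3 := by
    rw [h.conj_mul_right]; simp only [pow_succ, pow_zero, one_mul, mul_assoc]
  _ = p ^ 2 * z ^ 3 := by rw [h.mul_sq, h.sq_eq_sq]

theorem sq_mul_pow_two_mul (h : TetrahedralRelations p q z) (n : ℕ) :
    (p ^ 2 * z) ^ (2 * n) = z ^ (2 * n) := by
  rw [h.commute_sq_conj.mul_pow, pow_mul, h.sq_sq, one_pow, one_mul]

theorem sq_mul_pow_two_mul_add_one (h : TetrahedralRelations p q z) (n : ℕ) :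
    (p ^ 2 * z) ^ (2 * n + 1) = p ^ 2 * z ^ (2 * n + 1) := by
  rw [pow_succ (p ^ 2 * z), h.sq_mul_pow_two_mul, ← mul_assoc,
    ← (h.commute_sq_conj.pow_right _).eq, mul_assoc, ← pow_succ]

theorem sq_mul (h : TetrahedralRelations p q z) : TetrahedralRelations p q (p ^ 2 * z) where
  sq_eq_sq := h.sq_eq_sq
  mul_sq := h.mul_sq
  conj_left := by
    rw [mul_inv_rev, mul_assoc _ z, ← mul_assoc, mul_assoc (p ^ 2), h.conj_left,
      h.commute_sq_right.eq, mul_inv_cancel_right]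
  conj_right := by
    rw [mul_inv_rev, mul_assoc _ z, ← mul_assoc, mul_assoc (p ^ 2), h.conj_right,
      ((Commute.pow_self p 2).mul_right h.commute_sq_right).eq, mul_inv_cancel_right]

theorem of_cube (hT : Commute (T ^ 3) p) (hp : Commute (p ^ 2) T)
    (hTp : (T * p) ^ 3 = T ^ 3 * p ^ 2) : TetrahedralRelations p (T * p * T⁻¹) T := by
  set q := T * p * T⁻¹ with hq
  set r := T * q * T⁻¹ with hr
  have conj_sq : T * p ^ 2 * T⁻¹ = p ^ 2 := by rw [← hp.eq, mul_inv_cancel_right]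
  have q_sq : q ^ 2 = p ^ 2 := by rw [hq, conj_pow, conj_sq]
  have r_sq : r ^ 2 = p ^ 2 := by rw [hr, conj_pow, q_sq, conj_sq]
  have conj_cube : T ^ 3 * p * (T ^ 3)⁻¹ = p := by rw [hT.eq, mul_inv_cancel_right]
  have qrp : q * r * p = p ^ 2 := by
    have : (T * p) ^ 3 = q * r * (T ^ 3 * p * (T ^ 3)⁻¹) * T ^ 3 := by
      simp only [hr, hq, pow_succ, pow_zero]; group
    rw [hTp, conj_cube, (hp.pow_right 3).symm.eq] at this
    exact (mul_right_cancel this).symm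
  have pq : p * q = r := by
    refine mul_right_cancel (b := r) (mul_right_cancel (b := p) ?_)
    rw [mul_assoc p, mul_assoc p, qrp, ← pow_two, r_sq, (Commute.pow_self p 2).eq]
  exact ⟨q_sq.symm, by rw [pq, r_sq, q_sq], hq.symm, by rw [pq]⟩

end TetrahedralRelations

end Tetrahedral

section Triangle

variable {G : Type*} [Group G] {T u : G} {b j : ℕ}

/-- The relations `x² = u³ = T³` of a central extension of the `(2, 3, 3)` triangle group, where
`x = T ^ b * u`. -/
structure TriangleRelations (T u : G) (b : ℕ) : Prop where
  cube_eq_cube : u ^ 3 = T ^ 3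
  sq_eq_cube : (T ^ b * u) ^ 2 = T ^ 3

namespace TriangleRelations

theorem commute_cube (h : TriangleRelations T u b) : Commute (T ^ 3) u :=
  h.cube_eq_cube ▸ (Commute.refl u).pow_left 3

theorem commute_cube_mul (h : TriangleRelations T u b) : Commute (T ^ 3) (T ^ b * u) :=
  ((Commute.pow_self T 3).pow_right b).mul_right h.commute_cube

/-- The element `x = T ^ b * u` divided by a power of the central element `x² = T³`, chosen so that
it has order four in the binary tetrahedral group. -/
def quaternion (T u : G) (b : ℕ) : G := T ^ b * u * (T ^ 3) ^ (-b : ℤ)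

theorem commute_cube_quaternion (h : TriangleRelations T u b) :
    Commute (T ^ 3) (quaternion T u b) :=
  h.commute_cube_mul.mul_right ((Commute.refl _).zpow_right _)

theorem quaternion_sq (h : TriangleRelations T u b) :
    quaternion T u b ^ 2 = (T ^ 3) ^ (1 - 2 * b : ℤ) := by
  rw [quaternion, (h.commute_cube_mul.symm.zpow_right _).mul_pow, h.sq_eq_cube,
    ← zpow_natCast (_ ^ (-b : ℤ)), ← zpow_mul, ← zpow_one_add]
  congr 1
  push_cast
  ring

theorem mul_quaternion (h : TriangleRelations T u (3 * j + 2)) :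
    T * quaternion T u (3 * j + 2) = u * (T ^ 3) ^ (-(2 * j + 1) : ℤ) := by
  have : T * T ^ (3 * j + 2) = (T ^ 3) ^ (j + 1) := by
    rw [← pow_succ', ← pow_mul]
    congr 1
  rw [quaternion, ← mul_assoc, ← mul_assoc, this, (h.commute_cube.pow_left _).eq, mul_assoc,
    ← zpow_natCast (T ^ 3), ← zpow_add]
  congr 2
  push_cast
  ring

theorem mul_quaternion_cube (h : TriangleRelations T u (3 * j + 2)) :
    (T * quaternion T u (3 * j + 2)) ^ 3 = T ^ 3 * quaternion T u (3 * j + 2) ^ 2 := by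
  rw [h.mul_quaternion, (h.commute_cube.symm.zpow_right _).mul_pow, h.cube_eq_cube,
    h.quaternion_sq, ← zpow_natCast (_ ^ (-(2 * j + 1) : ℤ)), ← zpow_mul]
  congr 2
  push_cast
  ring

theorem tetrahedralRelations (h : TriangleRelations T u (3 * j + 2)) :
    TetrahedralRelations (quaternion T u (3 * j + 2))
      (T * quaternion T u (3 * j + 2) * T⁻¹) T :=
  .of_cube h.commute_cube_quaternion
    (h.quaternion_sq ▸ (Commute.pow_self T 3).zpow_left _) h.mul_quaternion_cube

theorem quaternion_sq_eq_pow (h : TriangleRelations T u (3 * j + 2)) :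
    quaternion T u (3 * j + 2) ^ 2 = T ^ (9 * (2 * j + 1)) := by
  rw [← inv_eq_of_mul_eq_one_left ((pow_two _).symm.trans h.tetrahedralRelations.sq_sq),
    h.quaternion_sq, ← zpow_neg, ← zpow_natCast, ← zpow_natCast, ← zpow_mul]
  congr 1
  push_cast
  ring

theorem exists_tetrahedralRelations (h : TriangleRelations T u (3 * j + 2)) :
    ∃ p q z : G, TetrahedralRelations p q z ∧ z ^ (9 * (2 * j + 1)) = 1 ∧ p ^ 2 * z = T ∧
      q * z ^ (6 * j + 4) = u := by
  set p := quaternion T u (3 * j + 2)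
  have hpT := h.tetrahedralRelations
  refine ⟨p, T * p * T⁻¹, p ^ 2 * T, hpT.sq_mul, ?_, ?_, ?_⟩
  · rw [show 9 * (2 * j + 1) = 2 * (9 * j + 4) + 1 by ring, hpT.sq_mul_pow_two_mul_add_one,
      show 2 * (9 * j + 4) + 1 = 9 * (2 * j + 1) by ring, ← h.quaternion_sq_eq_pow, ← pow_two,
      hpT.sq_sq]
  · rw [← mul_assoc, ← pow_two, hpT.sq_sq, one_mul]
  · have pow_T : T ^ (6 * j + 4) = T * (T ^ 3) ^ (2 * j + 1 : ℤ) := by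
      rw [← zpow_natCast, ← zpow_natCast, ← zpow_mul, ← zpow_one_add]
      congr 1
      push_cast
      ring
    rw [show 6 * j + 4 = 2 * (3 * j + 2) by ring, hpT.sq_mul_pow_two_mul,
      show 2 * (3 * j + 2) = 6 * j + 4 by ring, pow_T, ← mul_assoc, inv_mul_cancel_right,
      h.mul_quaternion, mul_assoc, ← zpow_add, neg_add_cancel, zpow_zero, mul_one]

end TriangleRelations

theorem TetrahedralRelations.triangleRelations {p q z : G} (h : TetrahedralRelations p q z)
    (hz : z ^ (9 * (2 * j + 1)) = 1) :
    TriangleRelations (p ^ 2 * z) (q * z ^ (6 * j + 4)) (3 * j + 2) where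
  cube_eq_cube := by
    have pow_z : z ^ (6 * j + 4) = z * (z ^ 3) ^ (2 * j + 1) := by
      rw [← pow_mul, ← pow_succ']
      congr 1
      ring
    have comm : Commute (q * z) ((z ^ 3) ^ (2 * j + 1)) :=
      ((h.commute_cube_right.symm.mul_left ((Commute.refl z).pow_right 3))).pow_right _
    rw [h.sq_mul_pow_two_mul_add_one 1, pow_z, ← mul_assoc, comm.mul_pow, h.mul_cube, ← pow_mul,
      ← pow_mul, show 3 * ((2 * j + 1) * 3) = 9 * (2 * j + 1) by ring, hz, mul_one]
  sq_eq_cube := by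
    have pow_z : z ^ 2 * z ^ (6 * j + 4) = (z ^ 3) ^ (2 * j + 2) := by
      rw [← pow_mul, ← pow_add]
      congr 1
      ring
    have x_eq : (p ^ 2 * z) ^ (3 * j + 2) * (q * z ^ (6 * j + 4)) =
        (p ^ 2) ^ (3 * j + 2) * (p * (z ^ 3) ^ (3 * j + 2)) := calc
      _ = (p ^ 2) ^ (3 * j + 2) * ((z ^ 3) ^ j * (z ^ 2 * q * z ^ (6 * j + 4))) := by
        rw [h.commute_sq_conj.mul_pow, ← pow_mul z, pow_add z]; simp only [mul_assoc]
      _ = (p ^ 2) ^ (3 * j + 2) * (p * ((z ^ 3) ^ j * (z ^ 3) ^ (2 * j + 2))) := by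
        rw [h.sq_mul_right, mul_assoc p, pow_z, (h.commute_cube_left.pow_left j).left_comm]
      _ = _ := by rw [← pow_add, show j + (2 * j + 2) = 3 * j + 2 by ring]
    rw [x_eq, (((Commute.pow_self p 2).mul_right
      ((h.commute_sq_conj.pow_right 3).pow_right _)).pow_left _).mul_pow,
      (h.commute_cube_left.pow_left _).symm.mul_pow, h.sq_mul_pow_two_mul_add_one 1, ← pow_mul,
      mul_comm _ 2, pow_mul, h.sq_sq, one_pow, one_mul, ← pow_mul, ← pow_mul,
      show 3 * ((3 * j + 2) * 2) = 9 * (2 * j + 1) + 3 by ring, pow_add, hz, one_mul]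

end Triangle

section Presentation

universe v

variable {G : Type v} [Group G] {T u : G} {b : ℕ}

/-- `G` is presented by generators `T`, `u` and the relations `TriangleRelations`. With as many
relations as generators, Fox calculus gives square differentials in the middle of the resolution. -/
structure TrianglePresentation (T u : G) (b : ℕ) : Prop extends TriangleRelations T u b where
  closure_eq_top : Subgroup.closure {T, u} = ⊤
  exists_lift : ∀ {H : Type v} [Group H] {T' u' : H}, TriangleRelations T' u' b →
    ∃ φ : G →* H, φ T = T' ∧ φ u = u'

theorem TrianglePresentation.closure_pow_eq_top (h : TrianglePresentation T u b)
    (hb : IsCoprime (b : ℤ) 3) : Subgroup.closure {T ^ b, u} = ⊤ := by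
  rw [eq_top_iff, ← h.closure_eq_top, Subgroup.closure_le]
  have T_pow_mem : T ^ b ∈ Subgroup.closure {T ^ b, u} := Subgroup.subset_closure (by simp)
  have u_mem : u ∈ Subgroup.closure {T ^ b, u} := Subgroup.subset_closure (by simp)
  have cube_mem : T ^ 3 ∈ Subgroup.closure {T ^ b, u} := h.cube_eq_cube ▸ pow_mem u_mem 3
  obtain ⟨m, n, hmn⟩ := hb
  have T_mem := mul_mem (zpow_mem T_pow_mem m) (zpow_mem cube_mem n)
  rw [← zpow_natCast T b, ← zpow_natCast T 3, ← zpow_mul, ← zpow_mul, ← zpow_add, mul_comm _ m,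
    mul_comm _ n, Nat.cast_ofNat, hmn, zpow_one, zpow_natCast] at T_mem
  exact Set.insert_subset T_mem (Set.singleton_subset_iff.mpr u_mem)

end Presentation

section PresentedGroup

variable {s j : ℕ}

open PresentedGroup

theorem tetrahedralRelations_of (s : ℕ) :
    TetrahedralRelations (of Gen.p : PresentedGroup (rels s)) (of Gen.q) (of Gen.z) where
  sq_eq_sq := mul_inv_eq_one.mp (one_of_mem (rels := rels s) (by simp [rels]))
  mul_sq := mul_inv_eq_one.mp (one_of_mem (rels := rels s) (by simp [rels]))
  conj_left := mul_inv_eq_one.mp (one_of_mem (rels := rels s) (by simp [rels]))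
  conj_right := mul_inv_eq_one.mp (one_of_mem (rels := rels s) (by simp [rels]))

theorem of_z_pow (s : ℕ) : (of Gen.z : PresentedGroup (rels s)) ^ 3 ^ s = 1 :=
  one_of_mem (rels := rels s) (by simp [rels])

theorem TetrahedralRelations.exists_lift {H : Type*} [Group H] {p q z : H}
    (h : TetrahedralRelations p q z) (hz : z ^ 3 ^ s = 1) :
    ∃ φ : PresentedGroup (rels s) →* H,
      φ (of Gen.p) = p ∧ φ (of Gen.q) = q ∧ φ (of Gen.z) = z := by
  have lift_eq_one : ∀ r ∈ rels s,
      FreeGroup.lift (fun | Gen.p => p | Gen.q => q | Gen.z => z) r = 1 := by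
    rintro r (rfl | rfl | rfl | rfl | rfl) <;>
      simp only [map_mul, map_inv, map_pow, FreeGroup.lift_apply_of]
    exacts [mul_inv_eq_one.mpr h.sq_eq_sq, mul_inv_eq_one.mpr h.mul_sq,
      mul_inv_eq_one.mpr h.conj_left, mul_inv_eq_one.mpr h.conj_right, hz]
  exact ⟨toGroup lift_eq_one, toGroup.of lift_eq_one, toGroup.of lift_eq_one,
    toGroup.of lift_eq_one⟩

theorem eq_top_of_mem {K : Subgroup (PresentedGroup (rels s))} (hq : of Gen.q ∈ K)
    (hz : of Gen.z ∈ K) : K = ⊤ := by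
  rw [eq_top_iff, ← closure_range_of (rels s), Subgroup.closure_le]
  rintro _ ⟨_ | _ | _, rfl⟩
  · rw [eq_inv_mul_of_mul_eq (tetrahedralRelations_of s).conj_mul_left, ← mul_assoc]
    exact mul_mem (mul_mem (inv_mem hz) hq) hz
  · exact hq
  · exact hz

theorem closure_triangle_eq_top (hj : 3 ^ s = 9 * (2 * j + 1)) :
    Subgroup.closure {(of Gen.p ^ 2 * of Gen.z : PresentedGroup (rels s)),
      of Gen.q * of Gen.z ^ (6 * j + 4)} = ⊤ := by
  set K := Subgroup.closure {(of Gen.p ^ 2 * of Gen.z : PresentedGroup (rels s)),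
    of Gen.q * of Gen.z ^ (6 * j + 4)}
  have T_mem : of Gen.p ^ 2 * of Gen.z ∈ K := Subgroup.subset_closure (by simp)
  have u_mem : of Gen.q * of Gen.z ^ (6 * j + 4) ∈ K := Subgroup.subset_closure (by simp)
  have sq_mem : of Gen.p ^ 2 ∈ K := by
    have := (tetrahedralRelations_of s).sq_mul_pow_two_mul_add_one (9 * j + 4)
    rw [show 2 * (9 * j + 4) + 1 = 3 ^ s by rw [hj]; ring, of_z_pow, mul_one] at this
    exact this ▸ pow_mem T_mem _
  have z_mem : of Gen.z ∈ K := (K.mul_mem_cancel_left sq_mem).mp T_mem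
  exact eq_top_of_mem ((K.mul_mem_cancel_right (pow_mem z_mem _)).mp u_mem) z_mem

theorem trianglePresentation (hj : 3 ^ s = 9 * (2 * j + 1)) :
    TrianglePresentation (of Gen.p ^ 2 * of Gen.z : PresentedGroup (rels s))
      (of Gen.q * of Gen.z ^ (6 * j + 4)) (3 * j + 2) where
  toTriangleRelations := (tetrahedralRelations_of s).triangleRelations (hj ▸ of_z_pow s)
  closure_eq_top := closure_triangle_eq_top hj
  exists_lift h := by
    obtain ⟨p, q, z, hpqz, hz, rfl, rfl⟩ := h.exists_tetrahedralRelations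
    obtain ⟨φ, hp, hq, hz⟩ := hpqz.exists_lift (hj ▸ hz)
    exact ⟨φ, by rw [map_mul, map_pow, hp, hz], by rw [map_mul, map_pow, hq, hz]⟩

end PresentedGroup

section Card

open PresentedGroup

variable {s : ℕ}

namespace TetrahedralRelations

variable {G : Type*} [Group G] {p q z : G}

theorem pow_four (h : TetrahedralRelations p q z) : p ^ 4 = 1 := by
  rw [← h.sq_sq, ← pow_mul]

theorem semiconjBy_right (h : TetrahedralRelations p q z) : SemiconjBy q p (p ^ 3) := by
  rw [SemiconjBy, eq_inv_mul_of_mul_eq ((mul_assoc p q p).symm.trans h.mul_mul_left)]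
  congr 1
  exact inv_eq_of_mul_eq_one_left ((pow_succ p 3).symm.trans h.pow_four)

/-- The elements `p ^ i * q ^ k * z ^ l`; under the tetrahedral relations these are all the elements
of the submonoid generated by `p`, `q` and `z`. -/
def normalForms (p q z : G) : Set G := {g | ∃ i k l : ℕ, p ^ i * q ^ k * z ^ l = g}

/-- The elements whose left multiplication preserves `normalForms`. -/
def normalFormStabilizer (p q z : G) : Submonoid G where
  carrier := {g | ∀ x ∈ normalForms p q z, g * x ∈ normalForms p q z}
  mul_mem' ha hb x hx := mul_assoc _ _ x ▸ ha _ (hb x hx)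
  one_mem' x hx := (one_mul x).symm ▸ hx

theorem left_mem_normalFormStabilizer : p ∈ normalFormStabilizer p q z := by
  rintro _ ⟨i, k, l, rfl⟩
  exact ⟨i + 1, k, l, by simp only [pow_succ', mul_assoc]⟩

theorem right_mem_normalFormStabilizer (h : TetrahedralRelations p q z) :
    q ∈ normalFormStabilizer p q z := by
  rintro _ ⟨i, k, l, rfl⟩
  refine ⟨3 * i, k + 1, l, ?_⟩
  rw [pow_mul, pow_succ' q, ← mul_assoc (_ ^ i) q, ← (h.semiconjBy_right.pow_right i).eq]
  simp only [mul_assoc]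

theorem conj_mem_normalFormStabilizer (h : TetrahedralRelations p q z) :
    z ∈ normalFormStabilizer p q z := by
  rintro _ ⟨i, k, l, rfl⟩
  have conj_p : z * p ^ i = q ^ i * z := SemiconjBy.pow_right h.conj_mul_left i
  have conj_q : z * q ^ k = (p * q) ^ k * z := SemiconjBy.pow_right h.conj_mul_right k
  have : z * (p ^ i * q ^ k * z ^ l) = q ^ i * (p * q) ^ k * z ^ (l + 1) := by
    rw [← mul_assoc, ← mul_assoc, conj_p, mul_assoc (q ^ i), conj_q, pow_succ' z]
    simp only [mul_assoc]
  rw [this]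
  have hq := h.right_mem_normalFormStabilizer
  exact mul_mem (pow_mem hq i) (pow_mem (mul_mem left_mem_normalFormStabilizer hq) k) _
    ⟨0, 0, l + 1, by simp⟩

theorem mem_normalForms (h : TetrahedralRelations p q z) {g : G}
    (hg : g ∈ Submonoid.closure {p, q, z}) : g ∈ normalForms p q z := by
  have closure_le : Submonoid.closure {p, q, z} ≤ normalFormStabilizer p q z := by
    rw [Submonoid.closure_le]
    rintro _ (rfl | rfl | rfl)
    exacts [left_mem_normalFormStabilizer, h.right_mem_normalFormStabilizer,
      h.conj_mem_normalFormStabilizer]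
  simpa only [mul_one] using closure_le hg 1 ⟨0, 0, 0, by simp⟩

theorem exists_fin_normalForm (h : TetrahedralRelations p q z) {n : ℕ} [NeZero n]
    (hz : z ^ n = 1) {g : G} (hg : g ∈ normalForms p q z) :
    ∃ x : (Fin 4 × Fin 2) × Fin n, p ^ (x.1.1 : ℕ) * q ^ (x.1.2 : ℕ) * z ^ (x.2 : ℕ) = g := by
  obtain ⟨i, k, l, rfl⟩ := hg
  refine ⟨((Fin.ofNat 4 (i + 2 * (k / 2)), Fin.ofNat 2 k), Fin.ofNat n l), ?_⟩
  have q_pow : q ^ k = p ^ (2 * (k / 2)) * q ^ (k % 2) := by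
    rw [pow_mul, h.sq_eq_sq, ← pow_mul, ← pow_add, Nat.div_add_mod]
  simp only [Fin.val_ofNat]
  rw [← pow_eq_pow_mod _ h.pow_four, ← pow_eq_pow_mod _ hz, q_pow, pow_add, mul_assoc (p ^ i)]

end TetrahedralRelations

/-- The images of `p`, `q` and `z` under the reduction `P'_{8·3^s} → SL₂(𝔽₃)`. -/
def slGen : Gen → Matrix.SpecialLinearGroup (Fin 2) (ZMod 3)
  | .p => ⟨!![0, 2; 1, 0], by decide⟩
  | .q => ⟨!![1, 1; 1, 2], by decide⟩
  | .z => ⟨!![1, 1; 0, 1], by decide⟩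

theorem tetrahedralRelations_slGen :
    TetrahedralRelations (slGen .p) (slGen .q) (slGen .z) where
  sq_eq_sq := by decide
  mul_sq := by decide
  conj_left := by decide
  conj_right := by decide

theorem slGen_z_pow (hs : 1 ≤ s) : slGen .z ^ 3 ^ s = 1 := by
  rw [show s = s - 1 + 1 by lia, pow_succ', pow_mul, show slGen .z ^ 3 = 1 by decide, one_pow]

theorem slGen_pow_mul_pow_injective :
    Function.Injective fun x : Fin 4 × Fin 2 ↦ slGen .p ^ (x.1 : ℕ) * slGen .q ^ (x.2 : ℕ) := by
  unfold Function.Injective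
  decide

/-- The map `(i, k, l) ↦ p ^ i * q ^ k * z ^ l`. -/
def normalForm (s : ℕ) (x : (Fin 4 × Fin 2) × Fin (3 ^ s)) : PresentedGroup (rels s) :=
  of Gen.p ^ (x.1.1 : ℕ) * of Gen.q ^ (x.1.2 : ℕ) * of Gen.z ^ (x.2 : ℕ)

theorem normalForm_surjective (s : ℕ) : Function.Surjective (normalForm s) := by
  intro g
  have h := tetrahedralRelations_of s
  have isOfFinOrder : ∀ x ∈ ({of Gen.p, of Gen.q, of Gen.z} : Set (PresentedGroup (rels s))),
      IsOfFinOrder x := by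
    rintro _ (rfl | rfl | rfl) <;> rw [isOfFinOrder_iff_pow_eq_one]
    exacts [⟨4, by norm_num, h.pow_four⟩,
      ⟨4, by norm_num, by rw [pow_mul _ 2 2, ← h.sq_eq_sq, h.sq_sq]⟩,
      ⟨3 ^ s, by positivity, of_z_pow s⟩]
  have closure_eq_top : Submonoid.closure
      ({of Gen.p, of Gen.q, of Gen.z} : Set (PresentedGroup (rels s))) = ⊤ := by
    rw [← Subgroup.closure_toSubmonoid_of_isOfFinOrder isOfFinOrder,
      eq_top_of_mem (Subgroup.subset_closure (by simp)) (Subgroup.subset_closure (by simp))]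
    rfl
  exact h.exists_fin_normalForm (of_z_pow s)
    (h.mem_normalForms (closure_eq_top ▸ Submonoid.mem_top g))

theorem normalForm_injective (hs : 1 ≤ s) : Function.Injective (normalForm s) := by
  obtain ⟨φ, hφp, hφq, -⟩ := tetrahedralRelations_slGen.exists_lift (s := s)
    (slGen_z_pow hs)
  obtain ⟨χ, hχp, hχq, hχz⟩ := TetrahedralRelations.exists_lift (s := s) (p := 1) (q := 1)
    (z := Multiplicative.ofAdd (1 : ZMod (3 ^ s))) (by constructor <;> simp)
    (by rw [← ofAdd_nsmul]; simp)
  rintro ⟨x, l⟩ ⟨x', l'⟩ h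
  obtain rfl : l = l' := by
    have := congrArg (fun g ↦ (χ g).toAdd) h
    simpa only [normalForm, map_mul, map_pow, hχp, hχq, hχz, one_pow, one_mul, ← ofAdd_nsmul,
      toAdd_ofAdd, nsmul_one, ZMod.natCast_eq_natCast_iff', Nat.mod_eq_of_lt l.2,
      Nat.mod_eq_of_lt l'.2, Fin.val_inj] using this
  obtain rfl : x = x' := by
    apply slGen_pow_mul_pow_injective
    simpa only [map_mul, map_pow, hφp, hφq] using congrArg φ (mul_right_cancel h)
  rfl

theorem normalForm_bijective (hs : 1 ≤ s) : Function.Bijective (normalForm s) :=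
  ⟨normalForm_injective hs, normalForm_surjective s⟩

theorem finite_presentedGroup (s : ℕ) : Finite (PresentedGroup (rels s)) :=
  .of_surjective _ (normalForm_surjective s)

theorem natCard_presentedGroup (hs : 1 ≤ s) : Nat.card (PresentedGroup (rels s)) = 8 * 3 ^ s := by
  rw [← Nat.card_congr (.ofBijective _ (normalForm_bijective hs))]
  simp

end Card

section GroupRing

open MonoidAlgebra

variable {k G : Type*} [CommRing k] [Group G]

/-- The augmentation of the group ring, sending every group element to `1`. -/
noncomputable def augmentation (k G : Type*) [CommRing k] [Group G] : MonoidAlgebra k G →ₐ[k] k :=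
  lift k k G 1

@[simp]
theorem augmentation_of (g : G) : augmentation k G (of k G g) = 1 := by
  rw [augmentation, lift_of, MonoidHom.one_apply]

theorem augmentation_surjective : Function.Surjective (augmentation k G) :=
  fun r => ⟨algebraMap k _ r, AlgHom.commutes _ r⟩

theorem of_sub_one_mem_span {S : Set G} (hS : Subgroup.closure S = ⊤) (g : G) :
    of k G g - 1 ∈ Ideal.span ((of k G · - 1) '' S) := by
  have hg : g ∈ Subgroup.closure S := hS ▸ Subgroup.mem_top g
  induction hg using Subgroup.closure_induction_left with
  | one => rw [map_one, sub_self]; exact zero_mem _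
  | mul_left x hx y _ hy =>
    have : of k G (x * y) - 1 = of k G x * (of k G y - 1) + (of k G x - 1) := by
      rw [map_mul]; noncomm_ring
    exact this ▸ add_mem (Ideal.mul_mem_left _ _ hy) (Ideal.subset_span ⟨x, hx, rfl⟩)
  | inv_mul_cancel x hx y _ hy =>
    have : of k G (x⁻¹ * y) - 1 = of k G x⁻¹ * ((of k G y - 1) - (of k G x - 1)) := by
      rw [sub_sub_sub_cancel_right, mul_sub, ← map_mul, ← map_mul, inv_mul_cancel, map_one]
    exact this ▸ Ideal.mul_mem_left _ _ (sub_mem hy (Ideal.subset_span ⟨x, hx, rfl⟩))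

theorem ker_augmentation {S : Set G} (hS : Subgroup.closure S = ⊤) :
    RingHom.ker (augmentation k G) = Ideal.span ((of k G · - 1) '' S) := by
  refine le_antisymm (fun a ha => ?_) (Ideal.span_le.mpr ?_)
  · have sub_augmentation_mem (a : MonoidAlgebra k G) :
        a - augmentation k G a • 1 ∈ Ideal.span ((of k G · - 1) '' S) := by
      induction a using MonoidAlgebra.induction_on with
      | of g => simpa only [augmentation_of, one_smul] using of_sub_one_mem_span hS g
      | add a b ha hb => rw [map_add, add_smul, add_sub_add_comm]; exact add_mem ha hb
      | smul r a ha =>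
        rw [map_smul, smul_assoc, ← smul_sub]
        exact Submodule.smul_of_tower_mem _ r ha
    have := sub_augmentation_mem a
    rwa [RingHom.mem_ker.mp ha, zero_smul, sub_zero] at this
  · rintro _ ⟨g, -, rfl⟩
    rw [SetLike.mem_coe, RingHom.mem_ker, map_sub, augmentation_of, map_one, sub_self]

/-- The norm element of the group ring, the sum of all group elements. -/
noncomputable def normElement (k G : Type*) [CommRing k] [Group G] [Fintype G] :
    MonoidAlgebra k G :=
  ∑ g : G, of k G g

variable [Fintype G]

theorem mul_normElement (a : MonoidAlgebra k G) :
    a * normElement k G = augmentation k G a • normElement k G := by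
  induction a using MonoidAlgebra.induction_on with
  | of g =>
    simp_rw [augmentation_of, one_smul, normElement, Finset.mul_sum, ← map_mul]
    exact Equiv.sum_comp (Equiv.mulLeft g) (of k G ·)
  | add a b ha hb => rw [add_mul, ha, hb, map_add, add_smul]
  | smul r a ha => rw [smul_mul_assoc, ha, map_smul, smul_assoc]

theorem normElement_mul_of (g : G) : normElement k G * of k G g = normElement k G := by
  simp_rw [normElement, Finset.sum_mul, ← map_mul]
  exact Equiv.sum_comp (Equiv.mulRight g) (of k G ·)

theorem coeff_normElement (g : G) : (normElement k G).coeff g = 1 := by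
  classical
  simp [normElement, coeff_sum, Finsupp.single_apply]

theorem augmentation_normElement : augmentation k G (normElement k G) = Fintype.card G := by
  simp_rw [normElement, map_sum, augmentation_of, Finset.sum_const, Finset.card_univ, nsmul_one]

theorem mul_normElement_eq_zero_iff {a : MonoidAlgebra k G} :
    a * normElement k G = 0 ↔ augmentation k G a = 0 := by
  rw [mul_normElement]
  refine ⟨fun h => ?_, fun h => by rw [h, zero_smul]⟩
  simpa [coeff_normElement] using congrArg (·.coeff 1) h

theorem exists_eq_smul_normElement_add_smul {S : Set G} (hS : Subgroup.closure S = ⊤) {r : k}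
    {w : MonoidAlgebra k G} (h : ∀ g ∈ S, ∃ y, w * (of k G g - 1) = r • y) :
    ∃ (c : k) (w' : MonoidAlgebra k G), w = c • normElement k G + r • w' := by
  have key (g : G) : ∃ y, w * (of k G g - 1) = r • y := by
    have hg : g ∈ Subgroup.closure S := hS ▸ Subgroup.mem_top g
    induction hg using Subgroup.closure_induction_right with
    | one => exact ⟨0, by rw [map_one, sub_self, mul_zero, smul_zero]⟩
    | mul_right x _ y hy hx =>
      obtain ⟨⟨a, ha⟩, b, hb⟩ := And.intro hx (h y hy)
      refine ⟨a * of k G y + b, ?_⟩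
      rw [smul_add, ← smul_mul_assoc, ← ha, ← hb, map_mul]
      noncomm_ring
    | mul_inv_cancel x _ y hy hx =>
      obtain ⟨⟨a, ha⟩, b, hb⟩ := And.intro hx (h y hy)
      refine ⟨(a - b) * of k G y⁻¹, ?_⟩
      rw [← smul_mul_assoc, smul_sub, ← ha, ← hb, ← mul_sub, sub_sub_sub_cancel_right, mul_assoc,
        sub_mul, ← map_mul, ← map_mul, mul_inv_cancel, map_one]
  choose y hy using key
  refine ⟨w.coeff 1, -∑ g, (y g).coeff g • of k G g, ?_⟩
  classical
  ext g
  have hg : w.coeff 1 - w.coeff g = r * (y g).coeff g := by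
    simpa [mul_sub] using congrArg (·.coeff g) (hy g)
  simp [coeff_sum, coeff_normElement, Finsupp.single_apply, ← hg]

end GroupRing

section Rank

variable {R M N P : Type*} [CommRing R] [IsDomain R] [AddCommGroup M] [AddCommGroup N]
  [AddCommGroup P] [Module R M] [Module R N] [Module R P] {f : M →ₗ[R] N} {g : N →ₗ[R] P}

theorem finrank_range_add_finrank_ker_of_isDomain (g : N →ₗ[R] P) [Module.Finite R N] :
    Module.finrank R (LinearMap.range g) + Module.finrank R (LinearMap.ker g) =
      Module.finrank R N := by
  rw [← g.quotKerEquivRange.finrank_eq, Submodule.finrank_quotient_add_finrank]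

theorem finrank_range_add_finrank_range_of_exact [Module.Finite R N] (h : Function.Exact f g) :
    Module.finrank R (LinearMap.range f) + Module.finrank R (LinearMap.range g) =
      Module.finrank R N := by
  rw [← LinearMap.exact_iff.mp h, add_comm, finrank_range_add_finrank_ker_of_isDomain]

theorem exact_of_finrank_ker_le_of_saturated [IsNoetherianRing R] [Module.Finite R N]
    (hgf : g ∘ₗ f = 0)
    (finrank_le : Module.finrank R (LinearMap.ker g) ≤ Module.finrank R (LinearMap.range f))
    (saturated : ∀ r : R, r ≠ 0 → ∀ y, r • y ∈ LinearMap.range f → y ∈ LinearMap.range f) :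
    Function.Exact f g := by
  have range_le : LinearMap.range f ≤ LinearMap.ker g := LinearMap.range_le_ker_iff.mpr hgf
  refine LinearMap.exact_iff.mpr (le_antisymm (fun y hy => ?_) range_le)
  have quotient_finrank :
      Module.finrank R (_ ⧸ (LinearMap.range f).submoduleOf (LinearMap.ker g)) = 0 := by
    have := Submodule.finrank_quotient_add_finrank
      ((LinearMap.range f).submoduleOf (LinearMap.ker g))
    rw [(Submodule.submoduleOfEquivOfLe range_le).finrank_eq] at this
    omega
  obtain ⟨⟨r, hr⟩, hry⟩ := Module.finrank_eq_zero_iff_isTorsion.mp quotient_finrank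
    (x := Submodule.Quotient.mk ⟨y, hy⟩)
  have smul_mem : r • (⟨y, hy⟩ : LinearMap.ker g) ∈ (LinearMap.range f).submoduleOf _ :=
    (Submodule.Quotient.mk_eq_zero _).mp hry
  exact saturated r (nonZeroDivisors.ne_zero hr) y smul_mem

end Rank

section Fox

open MonoidAlgebra

universe v

variable {G : Type v} [Group G] {T u : G} {b : ℕ}

/-- The Fox derivative `1 + g + ⋯ + g ^ (n - 1)` of the word `g ^ n`. -/
noncomputable def geomSum (g : G) (n : ℕ) : MonoidAlgebra ℤ G :=
  ∑ i ∈ Finset.range n, of ℤ G g ^ i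

theorem geomSum_mul_sub_one (g : G) (n : ℕ) :
    geomSum g n * (of ℤ G g - 1) = of ℤ G (g ^ n) - 1 := by
  rw [geomSum, geom_sum_mul, map_pow]

theorem sub_one_mul_geomSum (g : G) (n : ℕ) :
    (of ℤ G g - 1) * geomSum g n = of ℤ G (g ^ n) - 1 := by
  rw [geomSum, mul_geom_sum, map_pow]

theorem commute_geomSum (g : G) (m n : ℕ) : Commute (of ℤ G (g ^ m) - 1) (geomSum g n) :=
  .sum_right _ _ _ fun i _ => by
    rw [map_pow]
    exact (Commute.pow_pow_self _ m i).sub_left (.one_left _)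

theorem augmentation_geomSum (g : G) (n : ℕ) : augmentation ℤ G (geomSum g n) = n := by
  simp_rw [geomSum, map_sum, map_pow, augmentation_of, one_pow, Finset.sum_const,
    Finset.card_range, nsmul_one]

section CrossedHom

variable {N : Type v} [AddCommGroup N] [Module (MonoidAlgebra ℤ G) N]

/-- The action of `G` on a `ℤ[G]`-module, written multiplicatively to form `N ⋊ G`. -/
noncomputable def groupAction (N : Type v) [AddCommGroup N] [Module (MonoidAlgebra ℤ G) N] :
    G →* MulAut (Multiplicative N) :=
  letI := DistribMulAction.compHom N (of ℤ G)
  (MulAutMultiplicative N).symm.toMonoidHom.comp (DistribMulAction.toAddAut G N)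

theorem semidirectProduct_mul (g h : G) (m n : N) :
    (⟨.ofAdd m, g⟩ * ⟨.ofAdd n, h⟩ : Multiplicative N ⋊[groupAction N] G) =
      ⟨.ofAdd (m + of ℤ G g • n), g * h⟩ :=
  rfl

theorem semidirectProduct_pow (g : G) (m : N) (n : ℕ) :
    (⟨.ofAdd m, g⟩ ^ n : Multiplicative N ⋊[groupAction N] G) =
      ⟨.ofAdd (geomSum g n • m), g ^ n⟩ := by
  induction n with
  | zero => rw [geomSum, Finset.sum_range_zero, zero_smul, pow_zero, pow_zero]; rfl
  | succ n ih =>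
    rw [pow_succ, ih, semidirectProduct_mul, geomSum, geomSum, Finset.sum_range_succ, add_smul,
      map_pow, pow_succ g]

/-- Crossed homomorphisms `G → N` are the sections of `N ⋊ G → G`, so they are determined by values
on the generators satisfying the Fox derivatives of the relations. -/
theorem TrianglePresentation.exists_crossedHom (h : TrianglePresentation T u b) {eT eu : N}
    (cube_eq : geomSum u 3 • eu = geomSum T 3 • eT)
    (sq_eq : geomSum (T ^ b * u) 2 • (geomSum T b • eT + of ℤ G (T ^ b) • eu) =
      geomSum T 3 • eT) :
    ∃ D : G → N, D T = eT ∧ D u = eu ∧ ∀ g g', D (g * g') = D g + of ℤ G g • D g' := by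
  obtain ⟨φ, hT, hu⟩ := h.exists_lift (H := Multiplicative N ⋊[groupAction N] G)
    (T' := ⟨.ofAdd eT, T⟩) (u' := ⟨.ofAdd eu, u⟩)
    ⟨by rw [semidirectProduct_pow, semidirectProduct_pow, h.cube_eq_cube, cube_eq],
      by rw [semidirectProduct_pow, semidirectProduct_mul, semidirectProduct_pow,
        semidirectProduct_pow, h.sq_eq_cube, sq_eq]⟩
  have rightHom_comp : SemidirectProduct.rightHom.comp φ = MonoidHom.id G :=
    MonoidHom.eq_of_eqOn_dense h.closure_eq_top <| by
      rintro _ (rfl | rfl)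
      · exact congrArg SemidirectProduct.right hT
      · exact congrArg SemidirectProduct.right hu
  refine ⟨fun g => (φ g).left.toAdd, congrArg (·.left.toAdd) hT, congrArg (·.left.toAdd) hu,
    fun g g' => ?_⟩
  have right_eq : (φ g).right = g := DFunLike.congr_fun rightHom_comp g
  simp only [map_mul, SemidirectProduct.mul_left, right_eq]
  rfl

theorem exists_linearMap_mul_sub_one {D : G → N}
    (hD : ∀ g g', D (g * g') = D g + of ℤ G g • D g') :
    ∃ ψ : MonoidAlgebra ℤ G →ₗ[ℤ] N, ∀ a g, ψ (a * (of ℤ G g - 1)) = a • D g := by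
  have constr_of (g : G) : (MonoidAlgebra.basis G ℤ).constr ℤ D (of ℤ G g) = D g :=
    (MonoidAlgebra.basis G ℤ).constr_basis ℤ D g
  refine ⟨(MonoidAlgebra.basis G ℤ).constr ℤ D, fun a g => ?_⟩
  induction a using MonoidAlgebra.induction_on with
  | of g' =>
    rw [mul_sub, mul_one, ← map_mul, map_sub, constr_of, constr_of, hD, add_sub_cancel_left]
  | add a b ha hb => rw [add_mul, map_add, ha, hb, add_smul]
  | smul n a ha => rw [smul_mul_assoc, map_smul, ha, smul_assoc]

end CrossedHom

section Differentials

open Matrix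

/-- The first differential of the resolution, whose image is the augmentation ideal. -/
noncomputable def generatorMatrix (T u : G) : Matrix (Fin 2) (Fin 1) (MonoidAlgebra ℤ G) :=
  !![of ℤ G T - 1; of ℤ G u - 1]

/-- The second differential of the resolution, the Fox Jacobian of the relations `u³ = T³` and
`(T ^ b * u)² = T³`. -/
noncomputable def foxMatrix (T u : G) (b : ℕ) : Matrix (Fin 2) (Fin 2) (MonoidAlgebra ℤ G) :=
  !![-geomSum T 3, geomSum u 3;
    geomSum (T ^ b * u) 2 * geomSum T b - geomSum T 3, geomSum (T ^ b * u) 2 * of ℤ G (T ^ b)]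

/-- The third differential of the resolution, expressing an identity among the relations. -/
noncomputable def identityMatrix (T u : G) (b : ℕ) : Matrix (Fin 1) (Fin 2) (MonoidAlgebra ℤ G) :=
  !![of ℤ G (T ^ b) - of ℤ G (T ^ b * u), of ℤ G (T ^ b * u) - 1]

theorem TriangleRelations.foxMatrix_mul_generatorMatrix (h : TriangleRelations T u b) :
    foxMatrix T u b * generatorMatrix T u = 0 := by
  have sq_row : geomSum (T ^ b * u) 2 * (of ℤ G (T ^ b) * of ℤ G u - 1) = of ℤ G (T ^ 3) - 1 := by
    rw [← map_mul, geomSum_mul_sub_one, h.sq_eq_cube]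
  refine Matrix.ext fun i j => ?_
  fin_cases i <;> fin_cases j
  · suffices -geomSum T 3 * (of ℤ G T - 1) + geomSum u 3 * (of ℤ G u - 1) = 0 by
      simpa [foxMatrix, generatorMatrix, Matrix.mul_apply] using this
    rw [neg_mul, geomSum_mul_sub_one, geomSum_mul_sub_one, h.cube_eq_cube, neg_add_cancel]
  · suffices (geomSum (T ^ b * u) 2 * geomSum T b - geomSum T 3) * (of ℤ G T - 1) +
        geomSum (T ^ b * u) 2 * of ℤ G (T ^ b) * (of ℤ G u - 1) = 0 by
      simpa [foxMatrix, generatorMatrix, Matrix.mul_apply] using this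
    rw [sub_mul, mul_assoc, geomSum_mul_sub_one, geomSum_mul_sub_one, ← sq_row]
    noncomm_ring

theorem TriangleRelations.identityMatrix_mul_foxMatrix (h : TriangleRelations T u b) :
    identityMatrix T u b * foxMatrix T u b = 0 := by
  have sq_row : (of ℤ G (T ^ b * u) - 1) * geomSum (T ^ b * u) 2 = of ℤ G (T ^ 3) - 1 := by
    rw [sub_one_mul_geomSum, h.sq_eq_cube]
  have cube_row : (of ℤ G u - 1) * geomSum u 3 = of ℤ G (T ^ 3) - 1 := by
    rw [sub_one_mul_geomSum, h.cube_eq_cube]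
  have swap : (of ℤ G (T ^ 3) - 1) * geomSum T b = (of ℤ G (T ^ b) - 1) * geomSum T 3 := by
    rw [(commute_geomSum T b 3).eq, ← sub_one_mul_geomSum T b, ← mul_assoc, geomSum_mul_sub_one]
  refine Matrix.ext fun i j => ?_
  fin_cases i
  fin_cases j
  · suffices (of ℤ G (T ^ b) - of ℤ G (T ^ b * u)) * -geomSum T 3 + (of ℤ G (T ^ b * u) - 1) *
        (geomSum (T ^ b * u) 2 * geomSum T b - geomSum T 3) = 0 by
      simpa [identityMatrix, foxMatrix, Matrix.mul_apply] using this
    rw [mul_sub, ← mul_assoc, sq_row, swap]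
    noncomm_ring
  · suffices (of ℤ G (T ^ b) - of ℤ G (T ^ b * u)) * geomSum u 3 +
        (of ℤ G (T ^ b * u) - 1) * (geomSum (T ^ b * u) 2 * of ℤ G (T ^ b)) = 0 by
      simpa [identityMatrix, foxMatrix, Matrix.mul_apply] using this
    have factor : of ℤ G (T ^ b) - of ℤ G (T ^ b * u) = of ℤ G (T ^ b) * -(of ℤ G u - 1) := by
      rw [map_mul]; noncomm_ring
    rw [factor, mul_assoc, neg_mul, cube_row, ← mul_assoc, sq_row, sub_mul, mul_neg, mul_sub,
      ← map_mul, ← map_mul, ← pow_add, ← pow_add, add_comm b]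
    noncomm_ring

theorem exact_generatorMatrix (hgen : Subgroup.closure {T, u} = ⊤) :
    Function.Exact (generatorMatrix T u).vecMulLinear
      (fun v : Fin 1 → MonoidAlgebra ℤ G => augmentation ℤ G (v 0)) := by
  intro v
  rw [← RingHom.mem_ker, ker_augmentation hgen, Set.image_pair, Ideal.mem_span_pair]
  constructor
  · rintro ⟨a, c, hac⟩
    refine ⟨![a, c], funext fun i => ?_⟩
    fin_cases i
    simpa [generatorMatrix, Matrix.vecMul_eq_sum] using hac
  · rintro ⟨w, rfl⟩
    exact ⟨w 0, w 1, by simp [generatorMatrix, Matrix.vecMul_eq_sum]⟩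

theorem exact_foxMatrix_generatorMatrix (h : TrianglePresentation T u b) :
    Function.Exact (foxMatrix T u b).vecMulLinear (generatorMatrix T u).vecMulLinear := by
  let N := (Fin 2 → MonoidAlgebra ℤ G) ⧸ LinearMap.range (foxMatrix T u b).vecMulLinear
  let π : (Fin 2 → MonoidAlgebra ℤ G) →ₗ[MonoidAlgebra ℤ G] N := Submodule.mkQ _
  have π_apply (v : Fin 2 → MonoidAlgebra ℤ G) :
      π v = v 0 • π (Pi.single 0 1) + v 1 • π (Pi.single 1 1) := by
    rw [← map_smul, ← map_smul, ← map_add]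
    congr 1
    ext i : 1
    fin_cases i <;> simp
  have π_row (i : Fin 2) : foxMatrix T u b i 0 • π (Pi.single 0 1) +
      foxMatrix T u b i 1 • π (Pi.single 1 1) = 0 := by
    rw [← π_apply, Submodule.mkQ_apply, Submodule.Quotient.mk_eq_zero]
    exact ⟨Pi.single i 1, Matrix.single_one_vecMul i _⟩
  have cube_row : -geomSum T 3 • π (Pi.single 0 1) + geomSum u 3 • π (Pi.single 1 1) = 0 := π_row 0
  have sq_row : (geomSum (T ^ b * u) 2 * geomSum T b - geomSum T 3) • π (Pi.single 0 1) +
      (geomSum (T ^ b * u) 2 * of ℤ G (T ^ b)) • π (Pi.single 1 1) = 0 := π_row 1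
  obtain ⟨D, DT, Du, hD⟩ := h.exists_crossedHom (eT := π (Pi.single 0 1)) (eu := π (Pi.single 1 1))
    (by rwa [neg_smul, neg_add_eq_zero, eq_comm] at cube_row)
    (by rw [← sub_eq_zero, ← sq_row, smul_add, smul_smul, smul_smul, sub_smul]; abel)
  obtain ⟨ψ, hψ⟩ := exists_linearMap_mul_sub_one hD
  refine LinearMap.exact_iff.mpr (le_antisymm (fun v hv => ?_) ?_)
  · have hv0 : v 0 * (of ℤ G T - 1) + v 1 * (of ℤ G u - 1) = 0 := by
      simpa [generatorMatrix, Matrix.vecMul_eq_sum] using congrFun hv 0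
    rw [← Submodule.Quotient.mk_eq_zero]
    exact (π_apply v).trans (by rw [← DT, ← Du, ← hψ, ← hψ, ← map_add, hv0, map_zero])
  · rintro _ ⟨w, rfl⟩
    simp [Matrix.vecMul_vecMul, h.foxMatrix_mul_generatorMatrix]

/-- The fourth differential of the resolution, closing the period. -/
noncomputable def normMatrix (G : Type v) [Group G] [Fintype G] :
    Matrix (Fin 1) (Fin 1) (MonoidAlgebra ℤ G) :=
  !![normElement ℤ G]

theorem exact_generatorMatrix_normMatrix [Fintype G] (hgen : Subgroup.closure {T, u} = ⊤) :
    Function.Exact (generatorMatrix T u).vecMulLinear (normMatrix G).vecMulLinear := fun v => by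
  rw [← exact_generatorMatrix hgen v, ← mul_normElement_eq_zero_iff, funext_iff, Fin.forall_fin_one]
  simp [normMatrix, Matrix.vecMul_eq_sum]

theorem exists_eq_smul_add_smul_of_vecMul_identityMatrix [Fintype G]
    (hgen : Subgroup.closure {T ^ b, u} = ⊤) {n : ℤ} {v : Fin 1 → MonoidAlgebra ℤ G}
    {y : Fin 2 → MonoidAlgebra ℤ G} (h : v ᵥ* identityMatrix T u b = n • y) :
    ∃ (c : ℤ) (w : Fin 1 → MonoidAlgebra ℤ G), v = c • (fun _ => normElement ℤ G) + n • w := by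
  have h0 : v 0 * (of ℤ G (T ^ b) - of ℤ G (T ^ b * u)) = n • y 0 := by
    simpa [identityMatrix, Matrix.vecMul_eq_sum, -zsmul_eq_mul] using congrFun h 0
  have h1 : v 0 * (of ℤ G (T ^ b * u) - 1) = n • y 1 := by
    simpa [identityMatrix, Matrix.vecMul_eq_sum, -zsmul_eq_mul] using congrFun h 1
  have pow_eq : v 0 * (of ℤ G (T ^ b) - 1) = n • (y 0 + y 1) := by
    rw [smul_add, ← h0, ← h1]; noncomm_ring
  obtain ⟨c, w, hw⟩ := exists_eq_smul_normElement_add_smul hgen (r := n) (w := v 0) <| by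
    rintro g (rfl | rfl)
    · exact ⟨_, pow_eq⟩
    · refine ⟨y 1 - (y 0 + y 1) * of ℤ G g, ?_⟩
      rw [smul_sub, ← smul_mul_assoc, ← pow_eq, ← h1, map_mul]
      noncomm_ring
  exact ⟨c, fun _ => w, funext fun i => by rw [Subsingleton.elim i 0]; exact hw⟩

theorem normElement_vecMul_identityMatrix [Fintype G] :
    (fun _ => normElement ℤ G) ᵥ* identityMatrix T u b = 0 := by
  ext1 i
  fin_cases i <;>
    simp [identityMatrix, Matrix.vecMul_eq_sum, mul_sub, normElement_mul_of,
      -MonoidAlgebra.of_apply, -map_mul, -map_pow]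

theorem exact_normMatrix_identityMatrix [Fintype G]
    (hgen : Subgroup.closure {T ^ b, u} = ⊤) :
    Function.Exact (normMatrix G).vecMulLinear (identityMatrix T u b).vecMulLinear := by
  refine LinearMap.exact_iff.mpr (le_antisymm (fun v hv => ?_) ?_)
  · obtain ⟨c, w, rfl⟩ := exists_eq_smul_add_smul_of_vecMul_identityMatrix hgen (n := 0) (y := 0)
      (by rw [smul_zero]; exact hv)
    refine ⟨fun _ => algebraMap ℤ _ c, funext fun i => ?_⟩
    fin_cases i
    simp [normMatrix, Matrix.vecMul_eq_sum]
  · rintro _ ⟨v, rfl⟩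
    have : v ᵥ* normMatrix G = augmentation ℤ G (v 0) • fun _ => normElement ℤ G := by
      ext1 i
      fin_cases i
      simpa [normMatrix, Matrix.vecMul_eq_sum] using mul_normElement (v 0)
    simp [this, normElement_vecMul_identityMatrix, -zsmul_eq_mul]

theorem exact_identityMatrix_foxMatrix [Finite G] (h : TrianglePresentation T u b)
    (hgen : Subgroup.closure {T ^ b, u} = ⊤) :
    Function.Exact (identityMatrix T u b).vecMulLinear (foxMatrix T u b).vecMulLinear := by
  have := Fintype.ofFinite G
  have : Module.Finite ℤ (MonoidAlgebra ℤ G) := .of_basis (MonoidAlgebra.basis G ℤ)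
  let dGen := (generatorMatrix T u).vecMulLinear.restrictScalars ℤ
  let dFox := (foxMatrix T u b).vecMulLinear.restrictScalars ℤ
  let dId := (identityMatrix T u b).vecMulLinear.restrictScalars ℤ
  let dNorm := (normMatrix G).vecMulLinear.restrictScalars ℤ
  refine exact_of_finrank_ker_le_of_saturated (f := dId) (g := dFox) ?_ ?_ fun n hn y => ?_
  · refine LinearMap.ext fun v => ?_
    simp [dId, dFox, Matrix.vecMul_vecMul, h.identityMatrix_mul_foxMatrix]
  · have norm_id := finrank_range_add_finrank_range_of_exact (f := dNorm) (g := dId)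
      (exact_normMatrix_identityMatrix hgen)
    have gen_norm := finrank_range_add_finrank_range_of_exact (f := dGen) (g := dNorm)
      (exact_generatorMatrix_normMatrix h.closure_eq_top)
    have fox_gen := finrank_range_add_finrank_range_of_exact (f := dFox) (g := dGen)
      (exact_foxMatrix_generatorMatrix h)
    have fox := finrank_range_add_finrank_ker_of_isDomain dFox
    omega
  · rintro ⟨v, hv⟩
    obtain ⟨c, w, rfl⟩ := exists_eq_smul_add_smul_of_vecMul_identityMatrix hgen hv
    refine ⟨w, smul_right_injective _ hn ?_⟩
    simpa [dId, Matrix.add_vecMul, Matrix.smul_vecMul, normElement_vecMul_identityMatrix,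
      -zsmul_eq_mul] using hv

end Differentials

end Fox

section FreeResolution

open CategoryTheory Matrix

universe u

variable {k G : Type u} [CommRing k] [Group G] {m n : ℕ}

/-- The linear map `k[G]^m → k` which is equivariant for the trivial action on `k` and has the
values `y` on the standard basis. -/
noncomputable def augmentationSum (G : Type u) [Group G] (y : Fin m → k) :
    (Fin m → MonoidAlgebra k G) →ₗ[k] k :=
  Fintype.linearCombination k y ∘ₗ (augmentation k G).toLinearMap.compLeft (Fin m)

theorem augmentationSum_apply (y : Fin m → k) (v : Fin m → MonoidAlgebra k G) :
    augmentationSum G y v = ∑ i, augmentation k G (v i) * y i :=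
  rfl

theorem augmentationSum_single_one (y : Fin m → k) (i : Fin m) :
    augmentationSum G y (Pi.single i 1) = y i := by
  rw [augmentationSum_apply, Finset.sum_eq_single i (fun j _ hj => by simp [hj]) (by simp)]
  simp

theorem augmentationSum_smul (y : Fin m → k) (a : MonoidAlgebra k G)
    (v : Fin m → MonoidAlgebra k G) :
    augmentationSum G y (a • v) = augmentation k G a * augmentationSum G y v := by
  simp_rw [augmentationSum_apply, Finset.mul_sum, Pi.smul_apply, smul_eq_mul, map_mul, mul_assoc]

/-- The free representation `k[G]^m`, whose elements are regarded as row vectors. -/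
noncomputable abbrev freeRep (k G : Type u) [CommRing k] [Group G] (m : ℕ) : Rep k G :=
  Rep.of (Representation.ofModule' (k := k) (G := G) (Fin m → MonoidAlgebra k G))

theorem asAlgebraHom_ofModule' (M : Type*) [AddCommGroup M] [Module k M]
    [Module (MonoidAlgebra k G) M] [IsScalarTower k (MonoidAlgebra k G) M]
    (a : MonoidAlgebra k G) (x : M) :
    (Representation.ofModule' (k := k) (G := G) M).asAlgebraHom a x = a • x := by
  rw [Representation.asAlgebraHom, Representation.ofModule', Equiv.apply_symm_apply,
    Algebra.lsmul_coe]

instance projective_freeRep : Projective (freeRep k G m) :=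
  let e : (Fin m → MonoidAlgebra k G) ≃ₗ[MonoidAlgebra k G] (freeRep k G m).ρ.asModule :=
    { (freeRep k G m).ρ.asModuleEquiv.symm.toAddEquiv with
      map_smul' := fun a v => (asAlgebraHom_ofModule' _ a v).symm }
  Rep.equivalenceModuleMonoidAlgebra.toAdjunction.projective_of_map_projective _ <|
    ModuleCat.projective_of_free (M := .of _ _) ((Pi.basisFun _ (Fin m)).map e)

/-- The homomorphism of free representations given by right multiplication by a matrix. -/
noncomputable def freeRepMap (M : Matrix (Fin m) (Fin n) (MonoidAlgebra k G)) :
    freeRep k G m ⟶ freeRep k G n :=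
  Rep.ofHom ⟨M.vecMulLinear.restrictScalars k, fun g => LinearMap.ext fun v =>
    M.vecMulLinear.map_smul (MonoidAlgebra.of k G g) v⟩

/-- The homomorphism `k[G]^m ⟶ k` with the values `y` on the standard basis. -/
noncomputable def freeRepToTrivial (y : Fin m → k) : freeRep k G m ⟶ Rep.trivial k G k :=
  Rep.ofHom ⟨augmentationSum G y, fun g => LinearMap.ext fun v =>
    (augmentationSum_smul y (.of k G g) v).trans (by rw [augmentation_of, one_mul]; rfl)⟩

theorem freeRep_hom_smul (f : freeRep k G m ⟶ Rep.trivial k G k) (a : MonoidAlgebra k G)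
    (v : Fin m → MonoidAlgebra k G) : f.hom (a • v) = augmentation k G a * f.hom v := by
  induction a using MonoidAlgebra.induction_on with
  | of g => rw [augmentation_of, one_mul]; exact Rep.hom_comm_apply f g v
  | add a b ha hb => rw [add_smul, map_add, ha, hb, map_add, add_mul]
  | smul r a ha => rw [smul_assoc, map_smul, ha, map_smul, smul_mul_assoc]

theorem freeRep_hom_apply (f : freeRep k G m ⟶ Rep.trivial k G k)
    (v : Fin m → MonoidAlgebra k G) :
    f.hom v = augmentationSum G (fun i => f.hom (Pi.single i 1 : Fin m → MonoidAlgebra k G)) v := by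
  have v_eq : v = ∑ i, v i • (Pi.single i 1 : Fin m → MonoidAlgebra k G) := by
    simp_rw [← Pi.single_smul, smul_eq_mul, mul_one, Finset.univ_sum_single]
  rw [augmentationSum_apply]
  nth_rw 1 [v_eq]
  rw [map_sum]
  exact Finset.sum_congr rfl fun i _ => freeRep_hom_smul f _ _

/-- Evaluation on the standard basis identifies `Hom(k[G]^m, k)` with `k^m`. -/
noncomputable def freeRepHomEquiv : (freeRep k G m ⟶ Rep.trivial k G k) ≃ₗ[k] (Fin m → k) where
  toFun f i := f.hom (Pi.single i 1 : Fin m → MonoidAlgebra k G)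
  map_add' _ _ := rfl
  map_smul' _ _ := rfl
  invFun := freeRepToTrivial
  left_inv f := Rep.hom_ext <| DFunLike.ext _ _ fun v => (freeRep_hom_apply f v).symm
  right_inv y := funext (augmentationSum_single_one y)

theorem freeRepHomEquiv_freeRepMap_comp (M : Matrix (Fin m) (Fin n) (MonoidAlgebra k G))
    (f : freeRep k G n ⟶ Rep.trivial k G k) :
    freeRepHomEquiv (freeRepMap M ≫ f) = M.map (augmentation k G) *ᵥ freeRepHomEquiv f := by
  ext1 i
  have row : freeRepHomEquiv (freeRepMap M ≫ f) i = f.hom (Pi.single i 1 ᵥ* M) := rfl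
  rw [row, single_one_vecMul]
  exact freeRep_hom_apply f (M i)

/-- A resolution of the trivial module `k` by finitely generated free `k[G]`-modules. The
differentials are matrices acting on row vectors from the right, and the augmentation is given by
its values on the standard basis. -/
structure FreeResolution (k G : Type u) [CommRing k] [Group G] where
  rank : ℕ → ℕ
  d (n : ℕ) : Matrix (Fin (rank (n + 1))) (Fin (rank n)) (MonoidAlgebra k G)
  ε : Fin (rank 0) → k
  exact_succ (n : ℕ) : Function.Exact (d (n + 1)).vecMulLinear (d n).vecMulLinear
  exact_zero : Function.Exact (d 0).vecMulLinear (augmentationSum G ε)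
  surjective_ε : Function.Surjective (augmentationSum G ε)

theorem rep_exact_of_exact {S : ShortComplex (Rep k G)}
    (h : Function.Exact S.f.hom S.g.hom) : S.Exact := by
  apply (forget₂ _ (ModuleCat k)).reflects_exact_of_faithful
  rw [ShortComplex.moduleCat_exact_iff]
  exact fun x hx => (h x).mp hx

namespace FreeResolution

variable (R : FreeResolution k G)

/-- The chain complex of representations underlying a free resolution. -/
noncomputable def chainComplex : ChainComplex (Rep k G) ℕ :=
  ChainComplex.of (fun n => freeRep k G (R.rank n)) (fun n => freeRepMap (R.d n)) fun n =>
    Rep.hom_ext <| DFunLike.ext _ _ (R.exact_succ n).apply_apply_eq_zero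

theorem chainComplex_d (n : ℕ) : R.chainComplex.d (n + 1) n = freeRepMap (R.d n) :=
  ChainComplex.of_d (fun n => freeRep k G (R.rank n)) (fun n => freeRepMap (R.d n)) n

/-- The augmentation of a free resolution as a chain map. -/
noncomputable def π :
    R.chainComplex ⟶ (ChainComplex.single₀ (Rep k G)).obj (Rep.trivial k G k) :=
  (R.chainComplex.toSingle₀Equiv _).symm ⟨freeRepToTrivial R.ε, by
    rw [chainComplex_d]
    exact Rep.hom_ext <| DFunLike.ext _ _ R.exact_zero.apply_apply_eq_zero⟩

theorem π_f_zero : R.π.f 0 = freeRepToTrivial R.ε :=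
  ChainComplex.toSingle₀Equiv_symm_apply_f_zero _ _

theorem quasiIso_π : QuasiIso R.π where
  quasiIsoAt n := by
    cases n with
    | zero =>
      rw [ChainComplex.quasiIsoAt₀_iff, ShortComplex.quasiIso_iff_of_zeros' _ rfl rfl rfl]
      constructor
      · apply rep_exact_of_exact
        change Function.Exact (R.chainComplex.d 1 0).hom (R.π.f 0).hom
        rw [chainComplex_d, π_f_zero]
        exact R.exact_zero
      · rw [Rep.epi_iff_surjective]
        change Function.Surjective (R.π.f 0).hom
        rw [π_f_zero]
        exact R.surjective_ε
    | succ n =>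
      rw [quasiIsoAt_iff_exactAt' (hL := ChainComplex.exactAt_succ_single_obj ..),
        HomologicalComplex.exactAt_iff' _ (n + 2) (n + 1) n (by simp) (by simp)]
      apply rep_exact_of_exact
      change Function.Exact (R.chainComplex.d (n + 2) (n + 1)).hom (R.chainComplex.d (n + 1) n).hom
      rw [chainComplex_d, chainComplex_d]
      exact R.exact_succ n

/-- The projective resolution in the category of representations given by a free resolution. -/
noncomputable def projectiveResolution : ProjectiveResolution (Rep.trivial k G k) where
  complex := R.chainComplex
  projective n := inferInstanceAs (Projective (freeRep k G (R.rank n)))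
  π := R.π
  quasiIso := R.quasiIso_π

/-- The differential `k^(rank n) → k^(rank (n + 1))` of the cochain complex `Hom(R, k)`. -/
noncomputable def coboundary (n : ℕ) : (Fin (R.rank n) → k) →ₗ[k] (Fin (R.rank (n + 1)) → k) :=
  ((R.d n).map (augmentation k G)).mulVecLin

/-- The cochain complex `Hom(R, k)`. -/
noncomputable abbrev homComplex : CochainComplex (ModuleCat k) ℕ :=
  R.projectiveResolution.complex.linearYonedaObj k (Rep.trivial k G k)

theorem homComplex_d_comp (n : ℕ) :
    R.homComplex.d n (n + 1) ≫ ModuleCat.ofHom freeRepHomEquiv.toLinearMap =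
      ModuleCat.ofHom freeRepHomEquiv.toLinearMap ≫ ModuleCat.ofHom (R.coboundary n) := by
  ext f : 2
  change freeRepHomEquiv (R.chainComplex.d (n + 1) n ≫ f) = _
  rw [chainComplex_d]
  exact freeRepHomEquiv_freeRepMap_comp _ _

theorem d_succ_mul_d (n : ℕ) : R.d (n + 1) * R.d n = 0 := by
  refine Matrix.ext_of_single_vecMul fun i => ?_
  rw [← vecMul_vecMul, vecMul_zero]
  exact (R.exact_succ n).apply_apply_eq_zero _

theorem coboundary_succ_comp_coboundary (n : ℕ) :
    R.coboundary (n + 1) ∘ₗ R.coboundary n = 0 := by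
  rw [coboundary, coboundary, ← mulVecLin_mul, ← Matrix.map_mul, d_succ_mul_d,
    Matrix.map_zero _ (map_zero _), mulVecLin_zero]

/-- The part of the cochain complex `Hom(R, k)` computing its cohomology in degree `n + 1`. -/
noncomputable def coboundaryShortComplex (n : ℕ) : ShortComplex (ModuleCat k) :=
  .mk (ModuleCat.ofHom (R.coboundary n)) (ModuleCat.ofHom (R.coboundary (n + 1))) <|
    ModuleCat.hom_ext (R.coboundary_succ_comp_coboundary n)

/-- Group cohomology in degree `n + 1`, computed by the cochain complex `Hom(R, k)`. -/
noncomputable def groupCohomologySuccIso (n : ℕ) :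
    groupCohomology (Rep.trivial k G k) (n + 1) ≅ (R.coboundaryShortComplex n).homology :=
  groupCohomologyIso _ _ R.projectiveResolution ≪≫ ShortComplex.homologyMapIso
    (R.homComplex.isoSc' n (n + 1) (n + 2) (by simp) (by simp) ≪≫
      ShortComplex.isoMk freeRepHomEquiv.toModuleIso freeRepHomEquiv.toModuleIso
        freeRepHomEquiv.toModuleIso (R.homComplex_d_comp n).symm (R.homComplex_d_comp (n + 1)).symm)

theorem subsingleton_groupCohomology_succ {n : ℕ}
    (h : Function.Injective (R.coboundary (n + 1))) :
    Subsingleton (groupCohomology (Rep.trivial k G k) (n + 1)) := by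
  have : (R.coboundaryShortComplex n).Exact :=
    (ShortComplex.moduleCat_exact_iff _).mpr fun x hx =>
      ⟨0, (map_zero _).trans (h (hx.trans (map_zero _).symm)).symm⟩
  exact ModuleCat.subsingleton_of_isZero
    ((ShortComplex.exact_iff_isZero_homology _).mp this |>.of_iso (R.groupCohomologySuccIso n))

/-- If the differential leaving degree `n + 1` vanishes, the cohomology in this degree is the
cokernel `B` of the differential entering it. -/
noncomputable def groupCohomologySuccEquiv {n : ℕ} (h0 : R.coboundary (n + 1) = 0) {B : Type u}
    [AddCommGroup B] [Module k B] {φ : (Fin (R.rank (n + 1)) → k) →ₗ[k] B}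
    (hφ : Function.Surjective φ) (hexact : Function.Exact (R.coboundary n) φ) :
    groupCohomology (Rep.trivial k G k) (n + 1) ≃ₗ[k] B :=
  let S : ShortComplex (ModuleCat k) := .mk (ModuleCat.ofHom (R.coboundary n)) (ModuleCat.ofHom φ)
    (ModuleCat.hom_ext hexact.linearMap_comp_eq_zero)
  have : Epi S.g := (ModuleCat.epi_iff_surjective _).mpr hφ
  have hS : S.Exact := (ShortComplex.moduleCat_exact_iff _).mpr fun x hx => (hexact x).mp hx
  let data := ShortComplex.HomologyData.ofIsColimitCokernelCofork (R.coboundaryShortComplex n)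
    (congrArg ModuleCat.ofHom h0) _ hS.gIsCokernel
  (R.groupCohomologySuccIso n ≪≫ data.left.homologyIso).toLinearEquiv

end FreeResolution

end FreeResolution

section PeriodicResolution

open CategoryTheory Matrix MonoidAlgebra

variable {G : Type} [Group G] {T u : G} {b : ℕ}

/-- The ranks of the modules in the periodic resolution. -/
def periodicRank : ℕ → ℕ
  | 0 => 1
  | 1 => 2
  | 2 => 2
  | 3 => 1
  | n + 4 => periodicRank n

/-- The differentials of the periodic resolution. -/
noncomputable def periodicMatrix [Fintype G] (T u : G) (b : ℕ) : (n : ℕ) →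
    Matrix (Fin (periodicRank (n + 1))) (Fin (periodicRank n)) (MonoidAlgebra ℤ G)
  | 0 => generatorMatrix T u
  | 1 => foxMatrix T u b
  | 2 => identityMatrix T u b
  | 3 => normMatrix G
  | n + 4 => periodicMatrix T u b n

theorem exact_periodicMatrix [Fintype G] (h : TrianglePresentation T u b)
    (hgen : Subgroup.closure {T ^ b, u} = ⊤) : (n : ℕ) →
    Function.Exact (periodicMatrix T u b (n + 1)).vecMulLinear
      (periodicMatrix T u b n).vecMulLinear
  | 0 => exact_foxMatrix_generatorMatrix h
  | 1 => exact_identityMatrix_foxMatrix h hgen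
  | 2 => exact_normMatrix_identityMatrix hgen
  | 3 => exact_generatorMatrix_normMatrix h.closure_eq_top
  | n + 4 => exact_periodicMatrix h hgen n

theorem augmentationSum_one :
    ⇑(augmentationSum G (1 : Fin 1 → ℤ)) = fun v => augmentation ℤ G (v 0) :=
  funext fun v => by simp [augmentationSum_apply]

theorem surjective_augmentationSum_one : Function.Surjective (augmentationSum G (1 : Fin 1 → ℤ)) :=
  fun r =>
    let ⟨a, ha⟩ := augmentation_surjective r
    ⟨fun _ => a, by rw [augmentationSum_one]; exact ha⟩

theorem generatorMatrix_map_augmentation :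
    (generatorMatrix T u).map (augmentation ℤ G) = 0 := by
  ext i j
  fin_cases i <;> fin_cases j <;> simp [generatorMatrix, -MonoidAlgebra.of_apply]

theorem foxMatrix_map_augmentation :
    (foxMatrix T u b).map (augmentation ℤ G) = !![-3, 3; 2 * (b : ℤ) - 3, 2] := by
  ext i j
  fin_cases i <;> fin_cases j <;>
    simp [foxMatrix, augmentation_geomSum, -MonoidAlgebra.of_apply, -map_pow]

theorem identityMatrix_map_augmentation :
    (identityMatrix T u b).map (augmentation ℤ G) = 0 := by
  ext i j
  fin_cases i
  fin_cases j <;> simp [identityMatrix, -MonoidAlgebra.of_apply, -map_pow, -map_mul]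

theorem normMatrix_map_augmentation [Fintype G] :
    (normMatrix G).map (augmentation ℤ G) = !![(Nat.card G : ℤ)] := by
  ext i j
  fin_cases i
  fin_cases j
  simp [normMatrix, augmentation_normElement]

theorem exact_augmented_foxMatrix {m : ℕ} (h : 6 * b = m + 3) :
    Function.Exact (!![-3, 3; 2 * (b : ℤ) - 3, 2] : Matrix (Fin 2) (Fin 2) ℤ).mulVecLin
      (Fintype.linearCombination ℤ (![-2, 3] : Fin 2 → ZMod m)) := fun y => by
  have hb : (6 * b : ℤ) = m + 3 := mod_cast h
  have mulVec_eq (x : Fin 2 → ℤ) : !![-3, 3; 2 * (b : ℤ) - 3, 2].mulVecLin x =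
      ![-3 * x 0 + 3 * x 1, (2 * b - 3) * x 0 + 2 * x 1] :=
    funext <| Fin.forall_fin_two.mpr ⟨vec2_dotProduct _ x, vec2_dotProduct _ x⟩
  have sum_eq : Fintype.linearCombination ℤ (![-2, 3] : Fin 2 → ZMod m) y =
      ((3 * y 1 - 2 * y 0 : ℤ) : ZMod m) := by
    simp only [Fintype.linearCombination_apply, Fin.sum_univ_two, cons_val_zero, cons_val_one,
      zsmul_eq_mul, Int.cast_sub, Int.cast_mul, Int.cast_ofNat]
    ring
  rw [sum_eq, ZMod.intCast_zmod_eq_zero_iff_dvd]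
  constructor
  · rintro ⟨c, hc⟩
    refine ⟨![c, y 0 - y 1 + 2 * b * c], (mulVec_eq _).trans <| funext <| Fin.forall_fin_two.mpr
      ⟨?_, ?_⟩⟩ <;> simp only [cons_val_zero, cons_val_one]
    · linear_combination c * hb - hc
    · linear_combination c * hb - hc
  · rintro ⟨x, rfl⟩
    refine ⟨x 0, ?_⟩
    simp only [mulVec_eq, cons_val_zero, cons_val_one]
    linear_combination x 0 * hb

theorem surjective_linearCombination_neg_two_three {m : ℕ} :
    Function.Surjective (Fintype.linearCombination ℤ (![-2, 3] : Fin 2 → ZMod m)) := fun x => by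
  obtain ⟨a, rfl⟩ := ZMod.intCast_surjective x
  refine ⟨![a, a], ?_⟩
  simp only [Fintype.linearCombination_apply, Fin.sum_univ_two, cons_val_zero, cons_val_one,
    zsmul_eq_mul]
  ring

theorem injective_augmented_foxMatrix (b : ℕ) :
    Function.Injective (!![-3, 3; 2 * (b : ℤ) - 3, 2] : Matrix (Fin 2) (Fin 2) ℤ).mulVecLin := by
  refine mulVec_injective_of_det_ne_zero ?_
  rw [det_fin_two_of]
  omega

theorem exact_scalar_mulVecLin (m : ℕ) :
    Function.Exact (!![(m : ℤ)]).mulVecLin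
      (Fintype.linearCombination ℤ (1 : Fin 1 → ZMod m)) := fun y => by
  have sum_eq : Fintype.linearCombination ℤ (1 : Fin 1 → ZMod m) y = (y 0 : ZMod m) := by
    simp [Fintype.linearCombination_apply]
  rw [sum_eq, ZMod.intCast_zmod_eq_zero_iff_dvd]
  constructor
  · rintro ⟨c, hc⟩
    exact ⟨![c], funext fun i => by fin_cases i; simp [hc, mul_comm]⟩
  · rintro ⟨x, rfl⟩
    exact ⟨x 0, by simp [mulVec_eq_sum, mul_comm]⟩

theorem surjective_linearCombination_one {m : ℕ} :
    Function.Surjective (Fintype.linearCombination ℤ (1 : Fin 1 → ZMod m)) := fun x => by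
  obtain ⟨a, rfl⟩ := ZMod.intCast_surjective x
  exact ⟨![a], by simp [Fintype.linearCombination_apply]⟩

theorem injective_scalar_mulVecLin {m : ℕ} (hm : m ≠ 0) :
    Function.Injective (!![(m : ℤ)]).mulVecLin := by
  refine mulVec_injective_of_det_ne_zero ?_
  simpa using hm

namespace TrianglePresentation

/-- The periodic free resolution of a finite group with a triangle presentation. -/
noncomputable def freeResolution [Fintype G] (h : TrianglePresentation T u b)
    (hgen : Subgroup.closure {T ^ b, u} = ⊤) : FreeResolution ℤ G where
  rank := periodicRank
  d := periodicMatrix T u b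
  ε := (1 : Fin 1 → ℤ)
  exact_succ := exact_periodicMatrix h hgen
  exact_zero := by
    have exact_generators := exact_generatorMatrix h.closure_eq_top
    rwa [← augmentationSum_one] at exact_generators
  surjective_ε := surjective_augmentationSum_one

variable [Finite G] (h : TrianglePresentation T u b) (hgen : Subgroup.closure {T ^ b, u} = ⊤)

include h hgen

theorem nonempty_groupCohomology_add_four_iso {n : ℕ} (hn : n ≠ 0) :
    Nonempty (groupCohomology (Rep.trivial ℤ G ℤ) (n + 4) ≅
      groupCohomology (Rep.trivial ℤ G ℤ) n) := by
  have := Fintype.ofFinite G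
  obtain ⟨n, rfl⟩ := Nat.exists_eq_succ_of_ne_zero hn
  let R := h.freeResolution hgen
  exact ⟨R.groupCohomologySuccIso (n + 4) ≪≫ (R.groupCohomologySuccIso n).symm⟩

theorem nonempty_groupCohomology_add_four_mul_iso {n : ℕ} (hn : n ≠ 0) (m : ℕ) :
    Nonempty (groupCohomology (Rep.trivial ℤ G ℤ) (n + 4 * m) ≅
      groupCohomology (Rep.trivial ℤ G ℤ) n) := by
  induction m with
  | zero => exact ⟨Iso.refl _⟩
  | succ m ih =>
    obtain ⟨e⟩ := ih
    obtain ⟨p⟩ := h.nonempty_groupCohomology_add_four_iso hgen (n := n + 4 * m) (by omega)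
    exact ⟨p ≪≫ e⟩

theorem nonempty_groupCohomology_iso_of_modEq {n r : ℕ} (hr : r ≠ 0) (hrn : r ≤ n)
    (hn : n ≡ r [MOD 4]) :
    Nonempty (groupCohomology (Rep.trivial ℤ G ℤ) n ≅
      groupCohomology (Rep.trivial ℤ G ℤ) r) := by
  obtain ⟨m, hm⟩ := (Nat.modEq_iff_dvd' hrn).mp hn.symm
  rw [show n = r + 4 * m by omega]
  exact h.nonempty_groupCohomology_add_four_mul_iso hgen hr m

theorem nonempty_groupCohomology_two_equiv {m : ℕ} (hm : 6 * b = m + 3) :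
    Nonempty (groupCohomology (Rep.trivial ℤ G ℤ) 2 ≃ₗ[ℤ] ZMod m) := by
  have := Fintype.ofFinite G
  let R := h.freeResolution hgen
  have coboundary_two : R.coboundary 2 = 0 :=
    (congrArg mulVecLin identityMatrix_map_augmentation).trans mulVecLin_zero
  have coboundary_one : R.coboundary 1 = mulVecLin !![-3, 3; 2 * (b : ℤ) - 3, 2] :=
    congrArg mulVecLin foxMatrix_map_augmentation
  refine ⟨R.groupCohomologySuccEquiv (n := 1) coboundary_two
    surjective_linearCombination_neg_two_three ?_⟩
  rw [coboundary_one]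
  exact exact_augmented_foxMatrix hm

theorem nonempty_groupCohomology_four_equiv :
    Nonempty (groupCohomology (Rep.trivial ℤ G ℤ) 4 ≃ₗ[ℤ] ZMod (Nat.card G)) := by
  have := Fintype.ofFinite G
  let R := h.freeResolution hgen
  have coboundary_four : R.coboundary 4 = 0 :=
    (congrArg mulVecLin generatorMatrix_map_augmentation).trans mulVecLin_zero
  have coboundary_three : R.coboundary 3 = mulVecLin !![(Nat.card G : ℤ)] :=
    congrArg mulVecLin normMatrix_map_augmentation
  refine ⟨R.groupCohomologySuccEquiv (n := 3) coboundary_four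
    surjective_linearCombination_one ?_⟩
  rw [coboundary_three]
  exact exact_scalar_mulVecLin _

theorem subsingleton_groupCohomology_one :
    Subsingleton (groupCohomology (Rep.trivial ℤ G ℤ) 1) := by
  have := Fintype.ofFinite G
  let R := h.freeResolution hgen
  have coboundary_one : R.coboundary 1 = mulVecLin !![-3, 3; 2 * (b : ℤ) - 3, 2] :=
    congrArg mulVecLin foxMatrix_map_augmentation
  refine R.subsingleton_groupCohomology_succ (n := 0) ?_
  rw [coboundary_one]
  exact injective_augmented_foxMatrix b

theorem subsingleton_groupCohomology_three :
    Subsingleton (groupCohomology (Rep.trivial ℤ G ℤ) 3) := by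
  have := Fintype.ofFinite G
  let R := h.freeResolution hgen
  have coboundary_three : R.coboundary 3 = mulVecLin !![(Nat.card G : ℤ)] :=
    congrArg mulVecLin normMatrix_map_augmentation
  refine R.subsingleton_groupCohomology_succ (n := 2) ?_
  rw [coboundary_three]
  exact injective_scalar_mulVecLin Nat.card_pos.ne'

theorem subsingleton_groupCohomology_of_odd {n : ℕ} (hn : Odd n) :
    Subsingleton (groupCohomology (Rep.trivial ℤ G ℤ) n) := by
  rcases Nat.odd_mod_four_iff.mp (Nat.odd_iff.mp hn) with hn1 | hn3
  · obtain ⟨e⟩ := h.nonempty_groupCohomology_iso_of_modEq hgen one_ne_zero hn.pos hn1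
    have := h.subsingleton_groupCohomology_one hgen
    exact e.toLinearEquiv.toEquiv.subsingleton
  · obtain ⟨e⟩ := h.nonempty_groupCohomology_iso_of_modEq hgen three_ne_zero
      (hn3 ▸ Nat.mod_le n 4) hn3
    have := h.subsingleton_groupCohomology_three hgen
    exact e.toLinearEquiv.toEquiv.subsingleton

theorem nonempty_groupCohomology_equiv_of_mod_four_eq_two {m n : ℕ} (hm : 6 * b = m + 3)
    (hn : n % 4 = 2) : Nonempty (groupCohomology (Rep.trivial ℤ G ℤ) n ≃+ ZMod m) := by
  obtain ⟨e⟩ := h.nonempty_groupCohomology_iso_of_modEq hgen two_ne_zero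
    (hn ▸ Nat.mod_le n 4) hn
  obtain ⟨e₂⟩ := h.nonempty_groupCohomology_two_equiv hgen hm
  exact ⟨(e.toLinearEquiv ≪≫ₗ e₂).toAddEquiv⟩

theorem nonempty_groupCohomology_equiv_of_mod_four_eq_zero {n : ℕ} (hn0 : 0 < n)
    (hn : n % 4 = 0) :
    Nonempty (groupCohomology (Rep.trivial ℤ G ℤ) n ≃+ ZMod (Nat.card G)) := by
  obtain ⟨e⟩ := h.nonempty_groupCohomology_iso_of_modEq hgen four_ne_zero (by omega) hn
  obtain ⟨e₄⟩ := h.nonempty_groupCohomology_four_equiv hgen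
  exact ⟨(e.toLinearEquiv ≪≫ₗ e₄).toAddEquiv⟩

end TrianglePresentation

end PeriodicResolution

/-- the integral cohomology of the generalized binary tetrahedral group
`G = P'_{8·3^s}` is `ℤ` in degree `0`, `ℤ/8·3^s` in positive degrees `≡ 0 (mod 4)`, `0` in odd
degrees and `ℤ/3^s` in degrees `≡ 2 (mod 4)`. -/
theorem stmt17 (s : ℕ) (hs : 2 ≤ s) :
    Nonempty ((groupCohomology (Rep.trivial ℤ (PresentedGroup (rels s)) ℤ) 0) ≃+ ℤ) ∧
    (∀ n : ℕ, 0 < n → n % 4 = 0 →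
      Nonempty ((groupCohomology (Rep.trivial ℤ (PresentedGroup (rels s)) ℤ) n) ≃+
        ZMod (8 * 3 ^ s))) ∧
    (∀ n : ℕ, Odd n →
      Subsingleton (groupCohomology (Rep.trivial ℤ (PresentedGroup (rels s)) ℤ) n)) ∧
    (∀ n : ℕ, n % 4 = 2 →
      Nonempty ((groupCohomology (Rep.trivial ℤ (PresentedGroup (rels s)) ℤ) n) ≃+
        ZMod (3 ^ s))) := by
  obtain ⟨t, rfl⟩ := Nat.exists_eq_add_of_le' hs
  obtain ⟨j, hj⟩ : Odd (3 ^ t) := Odd.pow (by decide)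
  have pow_eq : 3 ^ (t + 2) = 9 * (2 * j + 1) := by rw [pow_add, hj]; ring
  have h := trianglePresentation pow_eq
  have hgen := h.closure_pow_eq_top (Nat.isCoprime_iff_coprime.mpr (by norm_num))
  have := finite_presentedGroup (t + 2)
  have card_eq := natCard_presentedGroup (s := t + 2) (by omega)
  refine ⟨⟨(groupCohomology.H0IsoOfIsTrivial _).toLinearEquiv.toAddEquiv⟩, fun n hn0 hn => ?_,
    fun n => h.subsingleton_groupCohomology_of_odd hgen,
    fun n => h.nonempty_groupCohomology_equiv_of_mod_four_eq_two hgen (by omega)⟩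
  rw [← card_eq]
  exact h.nonempty_groupCohomology_equiv_of_mod_four_eq_zero hgen hn0 hn
end

section
/- Let G be a finite group containing a subgroup isomorphic to the quaternion group Q₈ of order 8. Let ⋯ → F₂ → F₁ → F₀ → ℤ → 0 be any exact sequence (free resolution) of ℤ[G]-modules in which each F_h is a finitely generated free ℤ[G]-module of rank f_h, and ℤ carries the trivial G-action. Then for every h ≥ 0: f_h ≥ 1 if h ≡ 0 or 3 (mod 4), and f_h ≥ 2 if h ≡ 1 or 2 (mod 4). -/
/-!
Let `M₀ = ℤ` and let `M_{h+1}` be the kernel of `F_h → M_h`. Since `ℤ[G]` has trivial Tate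
cohomology over the cyclic group `⟨x⟩`, dimension shifting computes the action on `Ĥ⁰(⟨x⟩; M_{2j})`
of an element `y` with `y x y⁻¹ = x⁻¹`: it is multiplication by `(-1)^j`, because `y` inverts the
periodicity generator. On the other hand `rank M_h - |G| rank M_h^G` only changes sign from `h` to
`h + 1`. So for even `h` the rank of `M_h^G` is positive, and if it is `1` then `M_h` has rank `1`
and trivial action. For `h ≡ 2 (mod 4)` this forces `1 = -1` on `Ĥ⁰(⟨x⟩; ℤ) = ℤ / |x|`, impossible
when `x² ≠ 1`; hence `rank M_h^G ≥ 2`. Finally `f_h = rank M_h^G + rank M_{h+1}^G`.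
-/

open Finset Module

section

variable {R : Type*} [Ring R]

/-- The norm element `1 + x + ⋯ + x ^ (m - 1)`; the intended use is `x ^ m = 1`. -/
def cyclicNorm (x : R) (m : ℕ) : R := ∑ i ∈ range m, x ^ i

variable {x y : R} {m : ℕ}

lemma cyclicNorm_mul_sub_one (hx : x ^ m = 1) : cyclicNorm x m * (x - 1) = 0 := by
  rw [cyclicNorm, geom_sum_mul, hx, sub_self]

lemma sub_one_mul_cyclicNorm (hx : x ^ m = 1) : (x - 1) * cyclicNorm x m = 0 := by
  rw [cyclicNorm, mul_geom_sum, hx, sub_self]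

lemma pow_smul_eq_of_smul_eq {M : Type*} [AddCommGroup M] [Module R M] {z : M} (hz : x • z = z)
    (k : ℕ) : x ^ k • z = z := by
  induction k with
  | zero => rw [pow_zero, one_smul]
  | succ k ih => rw [pow_succ, mul_smul, hz, ih]

lemma sum_pow_sub_eq_cyclicNorm (hx : x ^ m = 1) :
    ∑ i ∈ range m, x ^ (m - i) = cyclicNorm x m := by
  have hreflect : ∑ i ∈ range m, x ^ (m - i) = ∑ i ∈ range m, x ^ (i + 1) := by
    rw [← sum_range_reflect (fun i => x ^ (i + 1))]
    refine sum_congr rfl fun i hi => ?_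
    congr 1
    have := mem_range.1 hi
    omega
  have hshift := (sum_range_succ' (x ^ ·) m).symm.trans (sum_range_succ (x ^ ·) m)
  rw [pow_zero, hx] at hshift
  rw [hreflect, cyclicNorm, add_right_cancel hshift]

lemma mul_cyclicNorm_comm (hx : x ^ m = 1) (hxy : x * y * x = y) :
    y * cyclicNorm x m = cyclicNorm x m * y := by
  have hconj (i : ℕ) : x ^ i * y * x ^ i = y := by
    induction i with
    | zero => simp
    | succ i ih =>
      calc x ^ (i + 1) * y * x ^ (i + 1)
        _ = x ^ i * (x * y * x) * x ^ i := by
          nth_rewrite 1 [pow_succ]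
          rw [pow_succ']
          simp only [mul_assoc]
        _ = y := by rw [hxy, ih]
  have hcomm (i : ℕ) (hi : i ∈ range m) : y * x ^ (m - i) = x ^ i * y := by
    conv_lhs => rw [← hconj i]
    rw [mul_assoc, ← pow_add, Nat.add_sub_cancel' (mem_range.1 hi).le, hx, mul_one]
  rw [← sum_pow_sub_eq_cyclicNorm hx, mul_sum, sum_congr rfl hcomm, ← sum_mul,
    sum_pow_sub_eq_cyclicNorm hx, cyclicNorm]

variable (x m) in
/-- The vanishing of the Tate cohomology of the cyclic group generated by `x`, of order `m`, with
coefficients in `M`. By periodicity only the degrees `0` and `-1` have to be considered. -/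
structure TateAcyclic (M : Type*) [AddCommGroup M] [Module R M] : Prop where
  exists_norm_smul_eq : ∀ z : M, x • z = z → ∃ w : M, cyclicNorm x m • w = z
  exists_sub_smul_eq : ∀ z : M, cyclicNorm x m • z = 0 → ∃ w : M, (x - 1) • w = z

variable (x y m) in
/-- `y` acts as multiplication by `c` on `Ĥ⁰(⟨x⟩; M) = M^x / N M`, where
`N = cyclicNorm x m`. -/
def ActsOnTateZeroBy (c : ℤ) (M : Type*) [AddCommGroup M] [Module R M] : Prop :=
  ∀ z : M, x • z = z → ∃ w : M, cyclicNorm x m • w = y • z - c • z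

variable (x y m) in
/-- `y` acts as multiplication by `c` on `Ĥ⁻¹(⟨x⟩; M) = ker N / (x - 1) M`, where
`N = cyclicNorm x m`. -/
def ActsOnTateNegOneBy (c : ℤ) (M : Type*) [AddCommGroup M] [Module R M] : Prop :=
  ∀ z : M, cyclicNorm x m • z = 0 → ∃ w : M, (x - 1) • w = y • z - c • z

lemma tateAcyclic_of_sum_pow_smul {M : Type*} [AddCommGroup M] [Module R M] (hx : x ^ m = 1)
    (θ : M →+ M) (hθ : ∀ z, ∑ i ∈ range m, x ^ i • θ (x ^ (m - i) • z) = z) :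
    TateAcyclic x m M where
  exists_norm_smul_eq z hz := by
    refine ⟨θ z, ?_⟩
    simpa only [pow_smul_eq_of_smul_eq hz, cyclicNorm, sum_smul] using hθ z
  exists_sub_smul_eq z hz := by
    refine ⟨∑ i ∈ range m, cyclicNorm x i • θ (x ^ (m - i) • z), ?_⟩
    have hsum : ∑ i ∈ range m, θ (x ^ (m - i) • z) = 0 := by
      rw [← map_sum, ← sum_smul, sum_pow_sub_eq_cyclicNorm hx, hz, map_zero]
    calc (x - 1) • ∑ i ∈ range m, cyclicNorm x i • θ (x ^ (m - i) • z)
      _ = ∑ i ∈ range m, (x ^ i • θ (x ^ (m - i) • z) - θ (x ^ (m - i) • z)) := by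
        simp only [smul_sum, ← mul_smul, cyclicNorm, mul_geom_sum, sub_smul, one_smul]
      _ = z := by rw [sum_sub_distrib, hθ, hsum, sub_zero]

end

section

variable {k G : Type*} [Ring k] [Group G]

lemma exists_transversal_zpowers {x : G} (hx : IsOfFinOrder x) :
    ∃ T : Set G, ∀ g, ∃! i, i ∈ range (orderOf x) ∧ (x ^ i)⁻¹ * g ∈ T := by
  classical
  obtain ⟨T, hT, -⟩ := (Subgroup.zpowers x).exists_isComplement_right 1
  refine ⟨T, fun g => ?_⟩
  obtain ⟨⟨⟨c, hc⟩, t⟩, hct, huniq⟩ := hT.existsUnique g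
  obtain ⟨i, hi, rfl⟩ := mem_image.1 (hx.mem_zpowers_iff_mem_range_orderOf.1 hc)
  refine ⟨i, ⟨hi, ?_⟩, ?_⟩
  · rw [← hct, inv_mul_cancel_left]
    exact t.2
  · rintro j ⟨hj, hjT⟩
    have h := huniq (⟨x ^ j, Subgroup.npow_mem_zpowers x j⟩, ⟨_, hjT⟩) (mul_inv_cancel_left _ _)
    exact pow_injOn_Iio_orderOf (mem_range.1 hj) (mem_range.1 hi)
      (congrArg (fun p => (p.1 : G)) h)

lemma coeff_of_smul (g : G) (z : MonoidAlgebra k G) (u : G) :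
    (MonoidAlgebra.of k G g • z).coeff u = z.coeff (g⁻¹ * u) := by
  simp [MonoidAlgebra.of]

lemma tateAcyclic_pi_monoidAlgebra (ι : Type*) {x : G} (hx : IsOfFinOrder x) :
    TateAcyclic (MonoidAlgebra.of k G x) (orderOf x) (ι → MonoidAlgebra k G) := by
  classical
  obtain ⟨T, hT⟩ := exists_transversal_zpowers hx
  -- `θ` keeps the coefficients at a transversal of the cosets `⟨x⟩g`, so its translates sum to `1`.
  let θ : MonoidAlgebra k G →+ MonoidAlgebra k G :=
    (MonoidAlgebra.coeffAddEquiv.symm.toAddMonoidHom.comp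
      (Finsupp.filterAddHom (· ∈ T))).comp MonoidAlgebra.coeffAddEquiv.toAddMonoidHom
  have hθ (z : MonoidAlgebra k G) (u : G) : (θ z).coeff u = if u ∈ T then z.coeff u else 0 :=
    Finsupp.filter_apply _ _ _
  have hsum (z : MonoidAlgebra k G) : ∑ i ∈ range (orderOf x), MonoidAlgebra.of k G x ^ i •
      θ (MonoidAlgebra.of k G x ^ (orderOf x - i) • z) = z := by
    ext u
    have hterm (i : ℕ) (hi : i ∈ range (orderOf x)) : (MonoidAlgebra.of k G x ^ i •
        θ (MonoidAlgebra.of k G x ^ (orderOf x - i) • z)).coeff u =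
        if (x ^ i)⁻¹ * u ∈ T then z.coeff u else 0 := by
      rw [← map_pow, ← map_pow, coeff_of_smul, hθ, coeff_of_smul, ← mul_assoc, ← mul_inv_rev,
        ← pow_add, Nat.add_sub_cancel' (mem_range.1 hi).le, pow_orderOf_eq_one, inv_one, one_mul]
    obtain ⟨i, ⟨hi, hiT⟩, huniq⟩ := hT u
    rw [MonoidAlgebra.coeff_sum, Finsupp.finsetSum_apply, sum_congr rfl hterm,
      sum_eq_single_of_mem i hi fun j hj hji => if_neg fun hjT => hji (huniq j ⟨hj, hjT⟩),
      if_pos hiT]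
  refine tateAcyclic_of_sum_pow_smul (by rw [← map_pow, pow_orderOf_eq_one, map_one])
    (θ.compLeft ι) fun z => funext fun i => ?_
  simpa using hsum (z i)

end

section

/-- `K` is a first syzygy of `M`: there is a short exact sequence `0 → K → R ^ n → M → 0`. -/
def IsSyzygy (R : Type*) [Ring R] (n : ℕ) (M K : Type*) [AddCommGroup M] [Module R M]
    [AddCommGroup K] [Module R K] : Prop :=
  ∃ (i : K →ₗ[R] Fin n → R) (p : (Fin n → R) →ₗ[R] M),
    Function.Injective i ∧ Function.Exact i p ∧ Function.Surjective p

variable {R : Type*} [Ring R] {n : ℕ} {M K : Type*} [AddCommGroup M] [Module R M]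
  [AddCommGroup K] [Module R K] {x y : R} {m : ℕ} {c : ℤ}

lemma IsSyzygy.actsOnTateZeroBy (h : IsSyzygy R n M K) (hac : TateAcyclic x m (Fin n → R))
    (hx : x ^ m = 1) (hxy : x * y * x = y) (hM : ActsOnTateNegOneBy x y m c M) :
    ActsOnTateZeroBy x y m c K := by
  obtain ⟨i, p, hi, hip, hp⟩ := h
  intro z hz
  obtain ⟨w, hw⟩ := hac.exists_norm_smul_eq (i z) (by rw [← map_smul, hz])
  obtain ⟨u', hu⟩ := hM (p w) (by rw [← map_smul, hw, hip.apply_apply_eq_zero])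
  obtain ⟨u, rfl⟩ := hp u'
  obtain ⟨v, hv⟩ := (hip (y • w - c • w - (x - 1) • u)).1 <| by
    simp only [map_sub, map_smul, map_zsmul, hu, sub_self]
  refine ⟨v, hi ?_⟩
  calc i (cyclicNorm x m • v)
    _ = cyclicNorm x m • y • w - cyclicNorm x m • c • w := by
      rw [map_smul, hv, smul_sub, smul_sub, ← mul_smul _ (x - 1), cyclicNorm_mul_sub_one hx,
        zero_smul, sub_zero]
    _ = i (y • z - c • z) := by
      rw [smul_comm _ c, ← mul_smul, ← mul_cyclicNorm_comm hx hxy, mul_smul, hw, map_sub,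
        map_smul, map_zsmul]

lemma IsSyzygy.actsOnTateNegOneBy_neg (h : IsSyzygy R n M K) (hac : TateAcyclic x m (Fin n → R))
    (hx : x ^ m = 1) (hxy : x * y * x = y) (hM : ActsOnTateZeroBy x y m c M) :
    ActsOnTateNegOneBy x y m (-c) K := by
  obtain ⟨i, p, hi, hip, hp⟩ := h
  intro z hz
  obtain ⟨w, hw⟩ := hac.exists_sub_smul_eq (i z) (by rw [← map_smul, hz, map_zero])
  obtain ⟨u', hu⟩ := hM (p w) <| sub_eq_zero.1 <| by
    rw [← map_smul, ← map_sub, ← hip.apply_apply_eq_zero z, ← hw, sub_smul, one_smul]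
  obtain ⟨u, rfl⟩ := hp u'
  obtain ⟨v, hv⟩ := (hip (y • w - c • w - cyclicNorm x m • u)).1 <| by
    simp only [map_sub, map_smul, map_zsmul, hu, sub_self]
  have hyx : (x - 1) * (y * x) = - (y * (x - 1)) := by
    rw [sub_mul, ← mul_assoc, hxy, one_mul, mul_sub, mul_one, neg_sub]
  have hyw : (x - 1) • y • w = -(y • i z) - (x - 1) • y • i z := by
    have hxw : x • w = w + i z := by rw [← hw, sub_smul, one_smul, add_sub_cancel]
    rw [eq_sub_iff_add_eq, ← smul_add, ← smul_add, ← hxw, ← mul_smul, ← mul_smul, mul_assoc,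
      hyx, neg_smul, mul_smul, hw]
  refine ⟨-v - y • z, hi ?_⟩
  calc i ((x - 1) • (-v - y • z))
    _ = c • (x - 1) • w - (x - 1) • y • w - (x - 1) • y • i z := by
      rw [map_smul, map_sub, map_neg, hv, map_smul, smul_sub, smul_neg, smul_sub, smul_sub,
        ← mul_smul _ (cyclicNorm x m), sub_one_mul_cyclicNorm hx, zero_smul, sub_zero, neg_sub,
        smul_comm _ c w]
    _ = i (y • z - -c • z) := by
      rw [hyw, hw, map_sub, map_smul, map_zsmul, neg_smul]
      abel

lemma actsOnTateZeroBy_one_of_smul_eq (h : ∀ z : M, y • z = z) : ActsOnTateZeroBy x y m 1 M :=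
  fun z _ => ⟨0, by rw [h, one_smul, sub_self, smul_zero]⟩

lemma actsOnTateZeroBy_of_isSyzygy {M : ℕ → Type*} [∀ h, AddCommGroup (M h)]
    [∀ h, Module R (M h)] {f : ℕ → ℕ} (hM : ∀ h, IsSyzygy R (f h) (M h) (M (h + 1)))
    (hac : ∀ n : ℕ, TateAcyclic x m (Fin n → R)) (hx : x ^ m = 1) (hxy : x * y * x = y)
    (h₀ : ActsOnTateZeroBy x y m c (M 0)) (j : ℕ) :
    ActsOnTateZeroBy x y m ((-1) ^ j * c) (M (2 * j)) := by
  induction j with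
  | zero => simpa using h₀
  | succ j ih =>
    have hneg := (hM (2 * j)).actsOnTateNegOneBy_neg (hac _) hx hxy ih
    rw [pow_succ, mul_neg_one, neg_mul]
    exact (hM (2 * j + 1)).actsOnTateZeroBy (hac _) hx hxy hneg

/-- With trivial action, `y` also acts as `1` on `Ĥ⁰ = M / m M`, so `-1 = 1` modulo `m`. -/
lemma dvd_two_of_actsOnTateZeroBy_neg_one [Module.Free ℤ M] [Nontrivial M]
    (hxM : ∀ z : M, x • z = z) (hyM : ∀ z : M, y • z = z) (h : ActsOnTateZeroBy x y m (-1) M) :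
    m ∣ 2 := by
  let b := Module.Free.chooseBasis ℤ M
  obtain ⟨i⟩ := b.index_nonempty
  obtain ⟨w, hw⟩ := h (b i) (hxM _)
  have hmw : (m : ℤ) • w = (2 : ℤ) • b i := by
    simpa [cyclicNorm, sum_smul, pow_smul_eq_of_smul_eq (hxM w), hyM, two_smul,
      ← natCast_zsmul] using hw
  have hrepr : (m : ℤ) * b.repr w i = 2 := by
    simpa using congrArg (fun z => b.repr z i) hmw
  exact_mod_cast Dvd.intro _ hrepr

end

section

lemma finrank_add_finrank_of_exact {R A B C : Type*} [CommRing R] [IsDomain R]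
    [AddCommGroup A] [Module R A] [AddCommGroup B] [Module R B] [Module.Finite R B]
    [AddCommGroup C] [Module R C] [Module.Finite R C] {i : A →ₗ[R] B} {p : B →ₗ[R] C}
    (hi : Function.Injective i) (hip : Function.Exact i p)
    (hp : ∀ c, ∃ a : R, a ≠ 0 ∧ a • c ∈ LinearMap.range p) :
    finrank R A + finrank R C = finrank R B := by
  have hcoker : finrank R (C ⧸ LinearMap.range p) = 0 := by
    rw [finrank_eq_zero_iff]
    intro c'
    obtain ⟨c, rfl⟩ := Submodule.mkQ_surjective _ c'
    obtain ⟨a, ha, hac⟩ := hp c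
    exact ⟨a, ha, by rwa [← map_smul, Submodule.mkQ_apply, Submodule.Quotient.mk_eq_zero]⟩
  have hrange := (LinearMap.range p).finrank_quotient_add_finrank
  have hquot := (LinearMap.ker p).finrank_quotient_add_finrank
  rw [p.quotKerEquivRange.finrank_eq, hip.linearMap_ker_eq,
    LinearMap.finrank_range_of_inj hi] at hquot
  omega

lemma finrank_pi_monoidAlgebra {G : Type*} [Finite G] (n : ℕ) :
    finrank ℤ (Fin n → MonoidAlgebra ℤ G) = n * Nat.card G := by
  have := Fintype.ofFinite G
  simp [(MonoidAlgebra.coeffLinearEquiv (M := G) (S := ℤ) ℤ).finrank_eq, Module.finrank_pi_fintype]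

variable (G : Type*) [Group G]
variable {M N K : Type*} [AddCommGroup M] [Module (MonoidAlgebra ℤ G) M] [AddCommGroup N]
  [Module (MonoidAlgebra ℤ G) N] [AddCommGroup K] [Module (MonoidAlgebra ℤ G) K]

variable (M) in
/-- The representation of `G` on the abelian group underlying a `ℤ[G]`-module. -/
noncomputable abbrev intRep : Representation ℤ G M := Representation.ofModule' M

variable {G}

lemma intRep_apply (g : G) (z : M) : intRep G M g z = MonoidAlgebra.of ℤ G g • z := rfl

/-- The map `M^G → N^G` induced by a `ℤ[G]`-linear map. -/
noncomputable def invariantsMap (φ : M →ₗ[MonoidAlgebra ℤ G] N) :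
    (intRep G M).invariants →ₗ[ℤ] (intRep G N).invariants :=
  (φ.restrictScalars ℤ).restrict fun z hz g => by
    rw [LinearMap.restrictScalars_apply, intRep_apply, ← map_smul, ← intRep_apply, hz g]

lemma invariantsMap_injective {φ : M →ₗ[MonoidAlgebra ℤ G] N} (hφ : Function.Injective φ) :
    Function.Injective (invariantsMap φ) :=
  fun _ _ h => Subtype.ext (hφ (congrArg Subtype.val h))

lemma exact_invariantsMap {i : K →ₗ[MonoidAlgebra ℤ G] M} {p : M →ₗ[MonoidAlgebra ℤ G] N}
    (hi : Function.Injective i) (hip : Function.Exact i p) :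
    Function.Exact (invariantsMap i) (invariantsMap p) := by
  refine fun z => ⟨fun hz => ?_, ?_⟩
  · obtain ⟨w, hw⟩ := (hip z).1 (congrArg Subtype.val hz)
    refine ⟨⟨w, fun g => hi ?_⟩, Subtype.ext hw⟩
    rw [intRep_apply, map_smul, hw]
    exact z.2 g
  · rintro ⟨w, rfl⟩
    exact Subtype.ext (hip.apply_apply_eq_zero w)

lemma card_smul_mem_range_invariantsMap [Finite G] {p : M →ₗ[MonoidAlgebra ℤ G] N}
    (hp : Function.Surjective p) (z : (intRep G N).invariants) :
    (Nat.card G : ℤ) • z ∈ LinearMap.range (invariantsMap p) := by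
  have := Fintype.ofFinite G
  obtain ⟨w, hw⟩ := hp z
  refine ⟨⟨(intRep G M).norm w, fun g => by simp⟩, Subtype.ext ?_⟩
  have hz (g : G) : MonoidAlgebra.of ℤ G g • (z : N) = z := z.2 g
  change p ((intRep G M).norm w) = (Nat.card G : ℤ) • (z : N)
  simp only [Representation.norm, LinearMap.sum_apply, intRep_apply, map_sum, map_smul, hw, hz,
    sum_const, card_univ, Nat.card_eq_fintype_card, natCast_zsmul]

lemma finrank_invariants_pi_monoidAlgebra [Finite G] (n : ℕ) :
    finrank ℤ (intRep G (Fin n → MonoidAlgebra ℤ G)).invariants = n := by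
  let L : (intRep G (Fin n → MonoidAlgebra ℤ G)).invariants →ₗ[ℤ] Fin n → ℤ :=
    LinearMap.pi fun i => Finsupp.lapply 1 ∘ₗ (MonoidAlgebra.coeffLinearEquiv ℤ).toLinearMap ∘ₗ
      LinearMap.proj i ∘ₗ Submodule.subtype _
  have hL (z) (i : Fin n) : L z i = (z.1 i).coeff 1 := rfl
  have hconst (z : (intRep G (Fin n → MonoidAlgebra ℤ G)).invariants) (i : Fin n) (g : G) :
      (z.1 i).coeff g = (z.1 i).coeff 1 := by
    have h : MonoidAlgebra.of ℤ G g • z.1 i = z.1 i := congrFun (z.2 g) i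
    rw [← h, coeff_of_smul, inv_mul_cancel, h]
  have hbij : Function.Bijective L := by
    refine ⟨fun z w h => Subtype.ext <| funext fun i => ?_, fun c => ?_⟩
    · ext g
      rw [hconst z, hconst w, ← hL, ← hL, h]
    · refine ⟨⟨fun i => .ofCoeff (Finsupp.equivFunOnFinite.symm fun _ => c i), fun g => ?_⟩, ?_⟩
      · ext i u
        rw [intRep_apply, Pi.smul_apply, coeff_of_smul]
        rfl
      · rfl
  rw [(LinearEquiv.ofBijective L hbij).finrank_eq, finrank_fin_fun]

variable {n : ℕ}

lemma IsSyzygy.finite [Finite G] (h : IsSyzygy (MonoidAlgebra ℤ G) n M K) :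
    Module.Finite ℤ M := by
  obtain ⟨-, p, -, -, hp⟩ := h
  exact Module.Finite.of_surjective (p.restrictScalars ℤ) hp

lemma IsSyzygy.isTorsionFree (h : IsSyzygy (MonoidAlgebra ℤ G) n M K) :
    Module.IsTorsionFree ℤ K := by
  obtain ⟨i, -, hi, -, -⟩ := h
  exact hi.moduleIsTorsionFree i fun a z => map_zsmul i a z

lemma IsSyzygy.finrank_add_finrank [Finite G] (h : IsSyzygy (MonoidAlgebra ℤ G) n M K) :
    finrank ℤ K + finrank ℤ M = n * Nat.card G := by
  have := h.finite
  obtain ⟨i, p, hi, hip, hp⟩ := h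
  rw [← finrank_pi_monoidAlgebra]
  exact finrank_add_finrank_of_exact (i := i.restrictScalars ℤ) (p := p.restrictScalars ℤ) hi hip
    fun z => ⟨1, one_ne_zero, (one_smul ℤ z).symm ▸ hp z⟩

lemma IsSyzygy.finrank_invariants_add_finrank_invariants [Finite G]
    (h : IsSyzygy (MonoidAlgebra ℤ G) n M K) :
    finrank ℤ (intRep G K).invariants + finrank ℤ (intRep G M).invariants = n := by
  have := h.finite
  obtain ⟨i, p, hi, hip, hp⟩ := h
  rw [← finrank_invariants_pi_monoidAlgebra (G := G) n]
  exact finrank_add_finrank_of_exact (invariantsMap_injective hi) (exact_invariantsMap hi hip)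
    fun z => ⟨Nat.card G, mod_cast Nat.card_pos.ne', card_smul_mem_range_invariantsMap hp z⟩

lemma invariants_eq_top_of_finrank_eq [Module.Finite ℤ M] [Module.IsTorsionFree ℤ M]
    (h : finrank ℤ (intRep G M).invariants = finrank ℤ M) : (intRep G M).invariants = ⊤ := by
  have hquot : finrank ℤ (M ⧸ (intRep G M).invariants) = 0 := by
    have := (intRep G M).invariants.finrank_quotient_add_finrank
    omega
  refine eq_top_iff.2 fun z _ g => ?_
  obtain ⟨a, ha, haz⟩ := finrank_eq_zero_iff.1 hquot (Submodule.Quotient.mk z)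
  rw [← Submodule.Quotient.mk_smul, Submodule.Quotient.mk_eq_zero] at haz
  have hg := haz g
  rw [map_smul] at hg
  exact smul_right_injective M ha hg

end

section

variable {G : Type*} [Group G] {f : ℕ → ℕ} {M : ℕ → Type*} [∀ h, AddCommGroup (M h)]
  [∀ h, Module (MonoidAlgebra ℤ G) (M h)]

lemma finrank_sub_card_mul_finrank_invariants [Finite G]
    (hM : ∀ h, IsSyzygy (MonoidAlgebra ℤ G) (f h) (M h) (M (h + 1))) (h : ℕ) :
    (finrank ℤ (M h) - Nat.card G * finrank ℤ (intRep G (M h)).invariants : ℤ) =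
      (-1) ^ h * (finrank ℤ (M 0) - Nat.card G * finrank ℤ (intRep G (M 0)).invariants) := by
  induction h with
  | zero => simp
  | succ h ih =>
    have hrank : (finrank ℤ (M (h + 1)) + finrank ℤ (M h) : ℤ) = f h * Nat.card G :=
      mod_cast (hM h).finrank_add_finrank
    have hinv : (finrank ℤ (intRep G (M (h + 1))).invariants +
        finrank ℤ (intRep G (M h)).invariants : ℤ) = f h :=
      mod_cast (hM h).finrank_invariants_add_finrank_invariants
    rw [pow_succ]
    linear_combination hrank - Nat.card G * hinv - ih

lemma finrank_invariants_of_smul_eq {M : Type*} [AddCommGroup M] [Module (MonoidAlgebra ℤ G) M]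
    (h : ∀ (g : G) (z : M), MonoidAlgebra.of ℤ G g • z = z) :
    finrank ℤ (intRep G M).invariants = finrank ℤ M := by
  have htop : (intRep G M).invariants = ⊤ := eq_top_iff.2 fun z _ g => h g z
  rw [htop, finrank_top]

/-- `M` is a chain of iterated syzygies over `ℤ[G]`, with `f h` generators at step `h`, starting
from the trivial module `ℤ`. Only the rank and the trivial action of `M 0` are recorded. -/
structure IsTrivialSyzygyChain (G : Type*) [Group G] (f : ℕ → ℕ) (M : ℕ → Type*)
    [∀ h, AddCommGroup (M h)] [∀ h, Module (MonoidAlgebra ℤ G) (M h)] : Prop where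
  isSyzygy : ∀ h, IsSyzygy (MonoidAlgebra ℤ G) (f h) (M h) (M (h + 1))
  finrank_eq_one : finrank ℤ (M 0) = 1
  smul_eq : ∀ (g : G) (z : M 0), MonoidAlgebra.of ℤ G g • z = z

namespace IsTrivialSyzygyChain

variable (hM : IsTrivialSyzygyChain G f M)
include hM

lemma card_mul_finrank_invariants [Finite G] {h : ℕ} (hh : Even h) :
    Nat.card G * finrank ℤ (intRep G (M h)).invariants + 1 = finrank ℤ (M h) + Nat.card G := by
  have hdef := finrank_sub_card_mul_finrank_invariants hM.isSyzygy h
  rw [hh.neg_one_pow, finrank_invariants_of_smul_eq hM.smul_eq, hM.finrank_eq_one] at hdef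
  zify
  push_cast at hdef
  linarith

lemma one_le_finrank_invariants [Finite G] [Nontrivial G] {h : ℕ} (hh : Even h) :
    1 ≤ finrank ℤ (intRep G (M h)).invariants := by
  by_contra! hlt
  have hcard := hM.card_mul_finrank_invariants hh
  have := Finite.one_lt_card (α := G)
  rw [Nat.lt_one_iff.1 hlt] at hcard
  omega

lemma actsOnTateZeroBy [Finite G] {x y : G} (hxy : y * x * y⁻¹ = x⁻¹) (j : ℕ) :
    ActsOnTateZeroBy (MonoidAlgebra.of ℤ G x) (MonoidAlgebra.of ℤ G y) (orderOf x) ((-1) ^ j)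
      (M (2 * j)) := by
  have hpow : MonoidAlgebra.of ℤ G x ^ orderOf x = 1 := by
    rw [← map_pow, pow_orderOf_eq_one, map_one]
  have hrel : MonoidAlgebra.of ℤ G x * MonoidAlgebra.of ℤ G y * MonoidAlgebra.of ℤ G x =
      MonoidAlgebra.of ℤ G y := by
    rw [← map_mul, ← map_mul, mul_assoc, mul_inv_eq_iff_eq_mul.1 hxy, mul_inv_cancel_left]
  simpa only [mul_one] using actsOnTateZeroBy_of_isSyzygy hM.isSyzygy
    (fun n => tateAcyclic_pi_monoidAlgebra (Fin n) (isOfFinOrder_of_finite x)) hpow hrel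
    (actsOnTateZeroBy_one_of_smul_eq (hM.smul_eq y)) j

lemma two_le_finrank_invariants [Finite G] {x y : G} (hxy : y * x * y⁻¹ = x⁻¹) (hx : x ^ 2 ≠ 1)
    {h : ℕ} (hh : h % 4 = 2) : 2 ≤ finrank ℤ (intRep G (M h)).invariants := by
  obtain ⟨k, rfl⟩ : ∃ k, h = 2 * (2 * k + 1) := ⟨h / 4, by omega⟩
  by_contra! hlt
  have : Nontrivial G := ⟨x, 1, fun h => hx (by rw [h, one_pow])⟩
  have heven : Even (2 * (2 * k + 1)) := even_two_mul _
  have hinv : finrank ℤ (intRep G (M (2 * (2 * k + 1)))).invariants = 1 :=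
    le_antisymm (Nat.lt_succ_iff.1 hlt) (hM.one_le_finrank_invariants heven)
  have hrank : finrank ℤ (M (2 * (2 * k + 1))) = 1 := by
    have hcard := hM.card_mul_finrank_invariants heven
    rw [hinv] at hcard
    omega
  have := (hM.isSyzygy (2 * (2 * k + 1))).finite
  have : IsTorsionFree ℤ (M (2 * (2 * k + 1))) :=
    (hM.isSyzygy (2 * (2 * k) + 1)).isTorsionFree
  have : Nontrivial (M (2 * (2 * k + 1))) := nontrivial_of_finrank_eq_succ hrank
  have htop := invariants_eq_top_of_finrank_eq (hinv.trans hrank.symm)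
  have htriv (g : G) (z : M (2 * (2 * k + 1))) : MonoidAlgebra.of ℤ G g • z = z :=
    htop.ge (Submodule.mem_top (x := z)) g
  have hact := hM.actsOnTateZeroBy hxy (2 * k + 1)
  rw [Odd.neg_one_pow ⟨k, rfl⟩] at hact
  exact hx (orderOf_dvd_iff_pow_eq_one.1
    (dvd_two_of_actsOnTateZeroBy_neg_one (htriv x) (htriv y) hact))

end IsTrivialSyzygyChain

end

section

lemma isSyzygy_quotient_range {R : Type*} [Ring R] {n₀ n₁ n₂ : ℕ}
    {d' : (Fin n₂ → R) →ₗ[R] Fin n₁ → R} {d : (Fin n₁ → R) →ₗ[R] Fin n₀ → R}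
    (hexact : Function.Exact d' d) :
    IsSyzygy R n₀ ((Fin n₀ → R) ⧸ LinearMap.range d) ((Fin n₁ → R) ⧸ LinearMap.range d') := by
  refine ⟨(LinearMap.range d').liftQ d (LinearMap.range_le_ker_iff.2 hexact.linearMap_comp_eq_zero),
    (LinearMap.range d).mkQ, LinearMap.injective_range_liftQ_of_exact hexact, ?_,
    Submodule.mkQ_surjective _⟩
  rw [LinearMap.exact_iff, Submodule.ker_mkQ, Submodule.range_liftQ]

lemma isTrivialSyzygyChain_quotient_range {G : Type*} [Group G] {f : ℕ → ℕ}
    {d : (h : ℕ) → (Fin (f (h + 1)) → MonoidAlgebra ℤ G)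
      →ₗ[MonoidAlgebra ℤ G] (Fin (f h) → MonoidAlgebra ℤ G)}
    {ε : (Fin (f 0) → MonoidAlgebra ℤ G) →ₗ[ℤ] ℤ}
    (hεG : ∀ (g : G) (x : Fin (f 0) → MonoidAlgebra ℤ G), ε (MonoidAlgebra.of ℤ G g • x) = ε x)
    (hsurj : Function.Surjective ε) (hexact₀ : Function.Exact (d 0) ε)
    (hexact : ∀ h : ℕ, Function.Exact (d (h + 1)) (d h)) :
    IsTrivialSyzygyChain G f
      fun h => (Fin (f h) → MonoidAlgebra ℤ G) ⧸ LinearMap.range (d h) where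
  isSyzygy h := isSyzygy_quotient_range (hexact h)
  finrank_eq_one := by
    have e := (Submodule.Quotient.restrictScalarsEquiv ℤ (LinearMap.range (d 0))).symm.trans
      (Function.Exact.linearEquivOfSurjective (f := (d 0).restrictScalars ℤ) hexact₀ hsurj)
    simpa using e.finrank_eq
  smul_eq g z' := by
    obtain ⟨z, rfl⟩ := Submodule.mkQ_surjective _ z'
    rw [← map_smul, ← sub_eq_zero, ← map_sub, Submodule.mkQ_apply,
      Submodule.Quotient.mk_eq_zero, LinearMap.mem_range]
    exact (hexact₀ _).1 (by rw [map_sub, hεG, sub_self])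

end

lemma exists_conj_eq_inv_of_mulEquiv_quaternionGroup {G : Type*} [Group G] {H : Subgroup G}
    {n : ℕ} (hn : 2 ≤ n) (e : H ≃* QuaternionGroup n) :
    ∃ x y : G, y * x * y⁻¹ = x⁻¹ ∧ x ^ 2 ≠ 1 := by
  have hconj : QuaternionGroup.xa (n := n) 0 * .a 1 * (.xa 0)⁻¹ = (.a 1)⁻¹ := by
    rw [mul_inv_eq_iff_eq_mul, ← mul_right_inj (.a 1), mul_inv_cancel_left]
    simp
  have hsq : QuaternionGroup.a (n := n) 1 ^ 2 ≠ 1 := fun h => by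
    have hdvd := orderOf_dvd_of_pow_eq_one h
    rw [QuaternionGroup.orderOf_a_one] at hdvd
    have := Nat.le_of_dvd two_pos hdvd
    omega
  have hψ : Function.Injective (H.subtype.comp e.symm.toMonoidHom) :=
    H.subtype_injective.comp e.symm.injective
  refine ⟨H.subtype.comp e.symm.toMonoidHom (.a 1), H.subtype.comp e.symm.toMonoidHom (.xa 0),
    ?_, ?_⟩
  · rw [← map_inv, ← map_inv, ← map_mul, ← map_mul, hconj]
  · rwa [← map_pow, map_ne_one_iff _ hψ]

theorem stmt18_general {G : Type*} [Group G] [Finite G] {x y : G} (hxy : y * x * y⁻¹ = x⁻¹)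
    (hx : x ^ 2 ≠ 1) (f : ℕ → ℕ)
    (d : (h : ℕ) → (Fin (f (h + 1)) → MonoidAlgebra ℤ G)
      →ₗ[MonoidAlgebra ℤ G] (Fin (f h) → MonoidAlgebra ℤ G))
    (ε : (Fin (f 0) → MonoidAlgebra ℤ G) →ₗ[ℤ] ℤ)
    (hεG : ∀ (g : G) (z : Fin (f 0) → MonoidAlgebra ℤ G),
      ε (MonoidAlgebra.of ℤ G g • z) = ε z)
    (hsurj : Function.Surjective ε)
    (hexact₀ : Function.Exact (d 0) ε)
    (hexact : ∀ h : ℕ, Function.Exact (d (h + 1)) (d h)) :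
    ∀ h : ℕ, ((h % 4 = 0 ∨ h % 4 = 3) → 1 ≤ f h) ∧ ((h % 4 = 1 ∨ h % 4 = 2) → 2 ≤ f h) := by
  intro h
  have : Nontrivial G := ⟨x, 1, fun h => hx (by rw [h, one_pow])⟩
  have hM := isTrivialSyzygyChain_quotient_range hεG hsurj hexact₀ hexact
  have hsum := (hM.isSyzygy h).finrank_invariants_add_finrank_invariants
  constructor
  · rintro (h₀ | h₃)
    · have := hM.one_le_finrank_invariants (h := h) (Nat.even_iff.2 (by omega))
      omega
    · have := hM.one_le_finrank_invariants (h := h + 1) (Nat.even_iff.2 (by omega))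
      omega
  · rintro (h₁ | h₂)
    · have := hM.two_le_finrank_invariants hxy hx (h := h + 1) (by omega)
      omega
    · have := hM.two_le_finrank_invariants hxy hx h₂
      omega

/-- if a finite group `G` contains a subgroup isomorphic to the quaternion group
`Q₈`, then in any free resolution `⋯ → F₁ → F₀ → ℤ → 0` of the trivial module `ℤ` over `ℤ[G]`
by finitely generated free modules `F_h = ℤ[G]^{f_h}`, the ranks satisfy `f_h ≥ 1` for
`h ≡ 0, 3 (mod 4)` and `f_h ≥ 2` for `h ≡ 1, 2 (mod 4)`.  Here `ε : F₀ → ℤ` is `ℤ`-linear and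
`G`-equivariant for the trivial action on `ℤ` (i.e. `ℤ[G]`-linear), surjective, and the
sequence is exact. -/
theorem stmt18 (G : Type) [Group G] [Finite G]
    (H : Subgroup G) (hH : Nonempty (H ≃* QuaternionGroup 2))
    (f : ℕ → ℕ)
    (d : (h : ℕ) → (Fin (f (h + 1)) → MonoidAlgebra ℤ G)
      →ₗ[MonoidAlgebra ℤ G] (Fin (f h) → MonoidAlgebra ℤ G))
    (ε : (Fin (f 0) → MonoidAlgebra ℤ G) →ₗ[ℤ] ℤ)
    (hεG : ∀ (g : G) (x : Fin (f 0) → MonoidAlgebra ℤ G),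
      ε (MonoidAlgebra.of ℤ G g • x) = ε x)
    (hsurj : Function.Surjective ε)
    (hexact₀ : Function.Exact (d 0) ε)
    (hexact : ∀ h : ℕ, Function.Exact (d (h + 1)) (d h)) :
    ∀ h : ℕ, ((h % 4 = 0 ∨ h % 4 = 3) → 1 ≤ f h) ∧ ((h % 4 = 1 ∨ h % 4 = 2) → 2 ≤ f h) := by
  obtain ⟨x, y, hxy, hx⟩ := exists_conj_eq_inv_of_mulEquiv_quaternionGroup le_rfl hH.some
  exact stmt18_general hxy hx f d ε hεG hsurj hexact₀ hexact
end

section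
/- Let s ≥ 2 and let G = P'_{8·3^s} be the generalized binary tetrahedral group. There exists an exact sequence of ℤ[G]-modules ⋯ → F₂ → F₁ → F₀ → ℤ → 0 (a free resolution of the trivial module ℤ over ℤ[G]) in which each F_h is a finitely generated free ℤ[G]-module whose rank is 1 when h ≡ 0 or 3 (mod 4) and 2 when h ≡ 1 or 2 (mod 4). Since G contains a subgroup isomorphic to Q₈, these ranks are minimal: no free resolution of ℤ over ℤ[G] has a smaller rank in any degree. -/
/-- The minimal ranks: `1` in degrees `≡ 0, 3 (mod 4)` and `2` in degrees `≡ 1, 2 (mod 4)`. -/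
def minRank (h : ℕ) : ℕ := if h % 4 = 0 ∨ h % 4 = 3 then 1 else 2

/-!
The group `G` has a balanced presentation: it is generated by `u = p²z` and `v = p⁻¹z^(6k+2)`,
where `18k + 9` is the order of `z`, with the defining relators `u³(vu^(3k+1))²` and `v³u³`. Fox
calculus turns a presentation into the first two steps of a free resolution. The row
`ρ = (-(t - 1), (v - 1)u³)` with `t = vu^(3k+1)` annihilates the Fox Jacobian from the left. For a
finite group with as many relators as generators this already determines the kernel of the
Jacobian: `ℤ[G]` modulo the norm element embeds as the multiples of `ρ`, and a rank count over `ℚ`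
together with a divisibility argument excludes anything larger. The norm element closes the
sequence up with period four.

The ranks are minimal because every differential vanishes after a suitable base change from `ℤ[G]`
to a field `K` of characteristic `2`: the Jacobian under a character of order three, the other
differentials under the augmentation. By Schanuel's lemma, the syzygies of any other free resolution
are stably isomorphic to these ones, and comparing dimensions over `K` gives the lower bounds.
-/

namespace PeriodicResolution

open MonoidAlgebra
open scoped MonoidAlgebra Matrix

section GroupRing

variable {G : Type*} [Group G]

/-- The augmentation `ℤ[G] → ℤ`, which sends every group element to `1`. -/
noncomputable def augmentation (G : Type*) [Group G] : ℤ[G] →ₐ[ℤ] ℤ :=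
  MonoidAlgebra.lift ℤ ℤ G 1

@[simp]
lemma augmentation_single (g : G) (n : ℤ) : augmentation G (single g n) = n := by
  simp [augmentation]

/-- The norm element of the group ring of a finite group: the sum of all group elements. -/
noncomputable def normElement (G : Type*) [Finite G] : ℤ[G] :=
  ofCoeff (Finsupp.equivFunOnFinite.symm 1)

@[simp]
lemma coeff_normElement (G : Type*) [Finite G] (g : G) : (normElement G).coeff g = 1 := rfl

lemma mul_normElement [Finite G] (a : ℤ[G]) :
    a * normElement G = augmentation G a • normElement G := by
  induction a using MonoidAlgebra.induction_on with
  | of g => ext h; simp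
  | add a b ha hb => rw [add_mul, ha, hb, map_add, add_smul]
  | smul r a ha => rw [smul_mul_assoc, ha, map_smul, smul_assoc]

lemma normElement_mul_of [Finite G] (g : G) : normElement G * of ℤ G g = normElement G := by
  ext h; simp

lemma augmentation_normElement [Finite G] : augmentation G (normElement G) = Nat.card G := by
  cases nonempty_fintype G
  have hsum : normElement G = ∑ g : G, of ℤ G g := by
    ext h; simp
  simp [hsum, Nat.card_eq_fintype_card]

lemma forall_dvd_mul_of_sub_self {ι : Type*} {y : ι → G} (hy : Subgroup.closure (Set.range y) = ⊤)
    {n : ℤ} {m : ℤ[G]} (h : ∀ i, ∃ c, m * of ℤ G (y i) - m = n • c) (g : G) :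
    ∃ c, m * of ℤ G g - m = n • c := by
  have hg : g ∈ Subgroup.closure (Set.range y) := hy ▸ Subgroup.mem_top g
  induction hg using Subgroup.closure_induction with
  | mem _ hx => obtain ⟨i, rfl⟩ := hx; exact h i
  | one => exact ⟨0, by simp [← one_def]⟩
  | mul g₁ g₂ _ _ h₁ h₂ =>
    obtain ⟨c₁, hc₁⟩ := h₁
    obtain ⟨c₂, hc₂⟩ := h₂
    refine ⟨c₁ * of ℤ G g₂ + c₂, ?_⟩
    rw [smul_add, ← smul_mul_assoc, ← hc₁, ← hc₂, map_mul]
    noncomm_ring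
  | inv g₁ _ h₁ =>
    obtain ⟨c₁, hc₁⟩ := h₁
    refine ⟨-c₁ * of ℤ G g₁⁻¹, ?_⟩
    rw [← smul_mul_assoc, smul_neg, ← hc₁, neg_sub, sub_mul, mul_assoc, ← map_mul,
      mul_inv_cancel, map_one, mul_one]

lemma exists_eq_smul_normElement_add_smul [Finite G] {n : ℤ} {m : ℤ[G]}
    (h : ∀ g, ∃ c, m * of ℤ G g - m = n • c) :
    ∃ (z : ℤ) (m' : ℤ[G]), m = z • normElement G + n • m' := by
  choose c hc using h
  refine ⟨m.coeff 1, ofCoeff (Finsupp.equivFunOnFinite.symm fun g => (c g⁻¹).coeff 1), ?_⟩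
  ext g
  have hg := congr(($(hc g⁻¹)).coeff 1)
  simp only [coeff_sub, coeff_add, coeff_smul, Finsupp.sub_apply, Finsupp.add_apply,
    Finsupp.smul_apply, of_apply, coeff_mul_single_apply, coeff_normElement,
    Finsupp.equivFunOnFinite_symm_apply_apply, inv_inv, one_mul, mul_one, smul_eq_mul] at hg ⊢
  linarith

end GroupRing

section FoxCalculus

variable {G ι : Type*} [Group G] (x : ι → G)

/-- The family `x` generates `G` with the words in `R` as defining relators. -/
def IsPresentation (R : Set (FreeGroup ι)) : Prop :=
  ∃ e : PresentedGroup R ≃* G, ∀ i, e (.of i) = x i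

variable {x} {R : Set (FreeGroup ι)}

lemma IsPresentation.exists_lift_eq (hx : IsPresentation x R) :
    ∃ e : PresentedGroup R ≃* G, ∀ w, FreeGroup.lift x w = e (PresentedGroup.mk R w) := by
  obtain ⟨e, he⟩ := hx
  refine ⟨e, fun w => DFunLike.congr_fun
    (FreeGroup.ext_hom (f := FreeGroup.lift x)
      (g := e.toMonoidHom.comp (PresentedGroup.mk R)) fun i => ?_) w⟩
  simp [← he, PresentedGroup.of]

lemma IsPresentation.lift_surjective (hx : IsPresentation x R) :
    Function.Surjective (FreeGroup.lift x) := fun g => by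
  obtain ⟨e, he⟩ := hx.exists_lift_eq
  obtain ⟨w, hw⟩ := PresentedGroup.mk_surjective R (e.symm g)
  exact ⟨w, by rw [he, hw, e.apply_symm_apply]⟩

lemma IsPresentation.lift_eq_one_iff (hx : IsPresentation x R) {w : FreeGroup ι} :
    FreeGroup.lift x w = 1 ↔ w ∈ Subgroup.normalClosure R := by
  obtain ⟨e, he⟩ := hx.exists_lift_eq
  rw [he, EmbeddingLike.map_eq_one_iff, PresentedGroup.mk_eq_one_iff]

lemma IsPresentation.lift_eq_one (hx : IsPresentation x R) {r : FreeGroup ι} (hr : r ∈ R) :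
    FreeGroup.lift x r = 1 :=
  hx.lift_eq_one_iff.2 (Subgroup.subset_normalClosure hr)

variable [DecidableEq ι] (x)

/-- The free group on `ι` acts on `ℤ[G]^ι` by affine maps, the `i`-th generator acting as
`m ↦ x i • m + e i`. The translation parts of these maps are the Fox derivatives. -/
noncomputable def foxAction : FreeGroup ι →* Equiv.Perm (ι → ℤ[G]) :=
  FreeGroup.lift fun i =>
    Equiv.addRight (Pi.single i 1) * MulAction.toPerm (Units.map (of ℤ G) (toUnits (x i)))

/-- The vector of Fox derivatives of a word, evaluated in `ℤ[G]` by sending the `i`-th generator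
to `x i`. -/
noncomputable def foxDerivative (w : FreeGroup ι) : ι → ℤ[G] := foxAction x w 0

lemma foxAction_apply (w : FreeGroup ι) (m : ι → ℤ[G]) :
    foxAction x w m = of ℤ G (FreeGroup.lift x w) • m + foxDerivative x w := by
  induction w generalizing m with
  | C1 => simp [foxDerivative, ← one_def]
  | of i => simp [foxDerivative, foxAction, Units.smul_def]
  | inv_of i _ =>
    simp [foxDerivative, foxAction, Units.smul_def]
  | mul v w hv hw =>
    rw [foxDerivative, map_mul, Equiv.Perm.mul_apply, Equiv.Perm.mul_apply, hv, hw,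
      hv (foxAction x w 0), hw 0]
    rw [map_mul, map_mul, mul_smul, smul_add, smul_zero, zero_add, add_assoc]

@[simp]
lemma foxDerivative_one : foxDerivative x 1 = 0 := by simp [foxDerivative]

@[simp]
lemma foxDerivative_of (i : ι) : foxDerivative x (.of i) = Pi.single i 1 := by
  simp [foxDerivative, foxAction]

lemma foxDerivative_mul (v w : FreeGroup ι) :
    foxDerivative x (v * w) =
      foxDerivative x v + of ℤ G (FreeGroup.lift x v) • foxDerivative x w := by
  rw [foxDerivative, map_mul, Equiv.Perm.mul_apply, foxAction_apply, add_comm]; rfl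

lemma foxDerivative_inv (w : FreeGroup ι) :
    foxDerivative x w⁻¹ = -(of ℤ G (FreeGroup.lift x w⁻¹) • foxDerivative x w) := by
  rw [eq_neg_iff_add_eq_zero, ← foxDerivative_mul, inv_mul_cancel, foxDerivative_one]

lemma foxDerivative_conj {w : FreeGroup ι} (hw : FreeGroup.lift x w = 1) (v : FreeGroup ι) :
    foxDerivative x (v * w * v⁻¹) = of ℤ G (FreeGroup.lift x v) • foxDerivative x w := by
  have hconj : FreeGroup.lift x (v * w) * FreeGroup.lift x v⁻¹ = 1 := by simp [hw]
  rw [foxDerivative_mul, foxDerivative_mul, foxDerivative_inv, smul_neg, smul_smul, ← map_mul,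
    hconj, map_one, one_smul]
  abel

lemma foxDerivative_pow (w : FreeGroup ι) (n : ℕ) :
    foxDerivative x (w ^ n) =
      (∑ k ∈ Finset.range n, of ℤ G (FreeGroup.lift x w) ^ k) • foxDerivative x w := by
  induction n with
  | zero => simp
  | succ n ih =>
    rw [pow_succ, foxDerivative_mul, ih, Finset.sum_range_succ, add_smul, map_pow, map_pow]

lemma foxDerivative_dotProduct [Fintype ι] (w : FreeGroup ι) :
    foxDerivative x w ⬝ᵥ (fun i => of ℤ G (x i) - 1) = of ℤ G (FreeGroup.lift x w) - 1 := by
  induction w with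
  | C1 => simp [← one_def]
  | of i => simp
  | inv_of i _ => simp [foxDerivative_inv, mul_sub, ← one_def]
  | mul v w hv hw =>
    rw [foxDerivative_mul, add_dotProduct, smul_dotProduct, hv, hw, map_mul, map_mul, smul_eq_mul]
    noncomm_ring

variable {x} {R : Set (FreeGroup ι)}

lemma IsPresentation.foxDerivative_mem_span (hx : IsPresentation x R) {w : FreeGroup ι}
    (hw : FreeGroup.lift x w = 1) :
    foxDerivative x w ∈ Submodule.span ℤ[G] (foxDerivative x '' R) := by
  set S := Submodule.span ℤ[G] (foxDerivative x '' R)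
  let K : Subgroup (FreeGroup ι) :=
    { carrier := {w | FreeGroup.lift x w = 1 ∧ foxDerivative x w ∈ S}
      one_mem' := by simp
      mul_mem' := fun {v w} ⟨hv, hvS⟩ ⟨hw, hwS⟩ =>
        ⟨by rw [map_mul, hv, hw, one_mul], by
          rw [foxDerivative_mul]
          exact S.add_mem hvS (S.smul_mem _ hwS)⟩
      inv_mem' := fun {w} ⟨hw, hwS⟩ =>
        ⟨by rw [map_inv, hw, inv_one], by
          rw [foxDerivative_inv]
          exact S.neg_mem (S.smul_mem _ hwS)⟩ }
  have hK : K.Normal := ⟨fun w ⟨hw, hwS⟩ v => ⟨by simp [hw], by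
    rw [foxDerivative_conj x hw]
    exact S.smul_mem _ hwS⟩⟩
  have hRK : R ⊆ K := fun r hr =>
    ⟨hx.lift_eq_one hr, Submodule.subset_span ⟨r, hr, rfl⟩⟩
  exact (Subgroup.normalClosure_le_normal hRK (hx.lift_eq_one_iff.1 hw)).2

lemma IsPresentation.foxDerivative_sub_mem_span (hx : IsPresentation x R) {v w : FreeGroup ι}
    (hvw : FreeGroup.lift x v = FreeGroup.lift x w) :
    foxDerivative x v - foxDerivative x w ∈ Submodule.span ℤ[G] (foxDerivative x '' R) := by
  have hdiff : foxDerivative x v - foxDerivative x w =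
      of ℤ G (FreeGroup.lift x w) • foxDerivative x (w⁻¹ * v) := by
    rw [sub_eq_iff_eq_add', ← foxDerivative_mul, mul_inv_cancel_left]
  rw [hdiff]
  exact Submodule.smul_mem _ _ (hx.foxDerivative_mem_span
    (by rw [map_mul, map_inv, hvw, inv_mul_cancel]))

lemma IsPresentation.exists_apply_mul_sub_one (hx : IsPresentation x R) :
    ∃ E : ℤ[G] →ₗ[ℤ] (ι → ℤ[G]) ⧸ Submodule.span ℤ[G] (foxDerivative x '' R),
      ∀ (a : ℤ[G]) (i : ι), E (a * (of ℤ G (x i) - 1)) = Submodule.Quotient.mk (Pi.single i a) := by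
  choose σ hσ using hx.lift_surjective
  let E := (MonoidAlgebra.basis G ℤ).constr ℤ fun g =>
    (Submodule.Quotient.mk (foxDerivative x (σ g)) :
      (ι → ℤ[G]) ⧸ Submodule.span ℤ[G] (foxDerivative x '' R))
  have hE (g : G) : E (of ℤ G g) = Submodule.Quotient.mk (foxDerivative x (σ g)) := by
    rw [of_apply, ← MonoidAlgebra.basis_apply]
    exact Module.Basis.constr_basis _ _ _ _
  refine ⟨E, fun a i => ?_⟩
  induction a using MonoidAlgebra.induction_on with
  | of g =>
    have hword : foxDerivative x (σ g * .of i) =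
        foxDerivative x (σ g) + Pi.single i (of ℤ G g) := by
      rw [foxDerivative_mul, hσ, foxDerivative_of, ← Pi.single_smul, smul_eq_mul, mul_one]
    rw [mul_sub, mul_one, ← map_mul, map_sub, hE, hE, ← Submodule.Quotient.mk_sub,
      Submodule.Quotient.eq, sub_sub, ← hword]
    exact hx.foxDerivative_sub_mem_span (by simp [hσ])
  | add a b ha hb => rw [add_mul, map_add, ha, hb, Pi.single_add, Submodule.Quotient.mk_add]
  | smul n a ha => rw [smul_mul_assoc, map_smul, ha, Pi.single_smul, Submodule.Quotient.mk_smul]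

theorem IsPresentation.dotProduct_eq_zero_iff [Fintype ι] (hx : IsPresentation x R) {a : ι → ℤ[G]} :
    a ⬝ᵥ (fun i => of ℤ G (x i) - 1) = 0 ↔ a ∈ Submodule.span ℤ[G] (foxDerivative x '' R) := by
  set S := Submodule.span ℤ[G] (foxDerivative x '' R)
  constructor
  · intro ha
    obtain ⟨E, hE⟩ := hx.exists_apply_mul_sub_one
    rw [← Submodule.Quotient.mk_eq_zero, ← Finset.univ_sum_single a, ← Submodule.mkQ_apply, map_sum]
    calc ∑ i, S.mkQ (Pi.single i (a i)) = ∑ i, E (a i * (of ℤ G (x i) - 1)) := by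
          simp only [hE]; rfl
      _ = 0 := by rw [← map_sum]; exact (congrArg E ha).trans (map_zero E)
  · intro ha
    induction ha using Submodule.span_induction with
    | mem _ h =>
      obtain ⟨r, hr, rfl⟩ := h
      rw [foxDerivative_dotProduct, hx.lift_eq_one hr, map_one, sub_self]
    | zero => exact zero_dotProduct _
    | add a b _ _ ha hb => rw [add_dotProduct, ha, hb, add_zero]
    | smul c a _ ha => rw [smul_dotProduct, ha, smul_zero]

end FoxCalculus

section Rank

variable {R L M N : Type*} [CommRing R] [IsDomain R] [AddCommGroup L] [AddCommGroup M]
  [AddCommGroup N] [Module R L] [Module R M] [Module R N] [Module.Finite R M]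

lemma finrank_ker_add_finrank_range (f : M →ₗ[R] N) :
    Module.finrank R (LinearMap.ker f) + Module.finrank R (LinearMap.range f) =
      Module.finrank R M := by
  rw [← f.quotKerEquivRange.finrank_eq, add_comm, (LinearMap.ker f).finrank_quotient_add_finrank]

lemma finrank_range_add_finrank_range_of_exact {f : L →ₗ[R] M} {g : M →ₗ[R] N}
    (h : Function.Exact f g) :
    Module.finrank R (LinearMap.range f) + Module.finrank R (LinearMap.range g) =
      Module.finrank R M := by
  rw [← h.linearMap_ker_eq, finrank_ker_add_finrank_range]

lemma exists_smul_mem_of_finrank_eq [IsNoetherianRing R] {S T : Submodule R M} (hST : S ≤ T)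
    (h : Module.finrank R S = Module.finrank R T) {a : M} (ha : a ∈ T) :
    ∃ k : R, k ≠ 0 ∧ k • a ∈ S := by
  have hrank := (S.submoduleOf T).finrank_quotient_add_finrank
  rw [(Submodule.submoduleOfEquivOfLe hST).finrank_eq, h, Nat.add_eq_right,
    Module.finrank_eq_zero_iff_isTorsion] at hrank
  obtain ⟨⟨k, hk⟩, hka⟩ := @hrank (Submodule.Quotient.mk ⟨a, ha⟩)
  exact ⟨k, nonZeroDivisors.ne_zero hk,
    (Submodule.Quotient.mk_eq_zero (S.submoduleOf T)).1 hka⟩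

end Rank

section BalancedPresentation

variable {G ι : Type*} [Group G]

/-- The column of elements `x i - 1`. -/
noncomputable def generatorColumn (x : ι → G) : Matrix ι (Fin 1) ℤ[G] :=
  .of fun i _ => of ℤ G (x i) - 1

/-- The Jacobian matrix of Fox derivatives of the words `r`. -/
noncomputable def foxJacobian [DecidableEq ι] {κ : Type*} (x : ι → G) (r : κ → FreeGroup ι) :
    Matrix κ ι ℤ[G] :=
  .of fun j => foxDerivative x (r j)

/-- The row of elements `(y i - 1) * w i`. -/
noncomputable def twistedGeneratorRow (y : ι → G) (w : ι → ℤ[G]ˣ) : Matrix (Fin 1) ι ℤ[G] :=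
  .of fun _ i => (of ℤ G (y i) - 1) * w i

/-- The norm element as a one-by-one matrix. -/
noncomputable def normMatrix (G : Type*) [Group G] [Finite G] : Matrix (Fin 1) (Fin 1) ℤ[G] :=
  .of fun _ _ => normElement G

/-- The augmentation on the free module of rank one. -/
noncomputable def rankOneAugmentation (G : Type*) [Group G] : (Fin 1 → ℤ[G]) →ₗ[ℤ] ℤ :=
  (augmentation G).toLinearMap ∘ₗ LinearMap.proj 0

lemma rankOneAugmentation_apply (a : Fin 1 → ℤ[G]) :
    rankOneAugmentation G a = augmentation G (a 0) := rfl

lemma vecMul_twistedGeneratorRow (y : ι → G) (w : ι → ℤ[G]ˣ) (a : Fin 1 → ℤ[G]) (i : ι) :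
    (a ᵥ* twistedGeneratorRow y w) i = (a 0 * of ℤ G (y i) - a 0) * w i := by
  simp [twistedGeneratorRow, Matrix.vecMul, dotProduct, ← mul_assoc, mul_sub]

variable {x y : ι → G} {w : ι → ℤ[G]ˣ}

lemma exists_eq_smul_normElement_add_smul_of_vecMul_twistedGeneratorRow [Finite G]
    (hy : Subgroup.closure (Set.range y) = ⊤) {n : ℤ} {a : Fin 1 → ℤ[G]} {b : ι → ℤ[G]}
    (h : a ᵥ* twistedGeneratorRow y w = n • b) :
    ∃ (z : ℤ) (c : ℤ[G]), a 0 = z • normElement G + n • c :=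
  exists_eq_smul_normElement_add_smul <| forall_dvd_mul_of_sub_self hy fun i => by
    have hi := congrFun h i
    rw [vecMul_twistedGeneratorRow, Pi.smul_apply, ← Units.eq_mul_inv_iff_mul_eq,
      smul_mul_assoc] at hi
    exact ⟨_, hi⟩

lemma vecMul_normMatrix [Finite G] (a : Fin 1 → ℤ[G]) :
    a ᵥ* normMatrix G = fun _ => augmentation G (a 0) • normElement G := by
  ext1 i
  rw [← mul_normElement]
  exact Fin.sum_univ_one _

lemma exact_normMatrix_twistedGeneratorRow [Finite G] (hy : Subgroup.closure (Set.range y) = ⊤) :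
    Function.Exact (normMatrix G).vecMulLinear (twistedGeneratorRow y w).vecMulLinear := by
  refine fun a => ⟨fun ha => ?_, ?_⟩
  · obtain ⟨z, c, hz⟩ := exists_eq_smul_normElement_add_smul_of_vecMul_twistedGeneratorRow hy
      (ha.trans (zero_smul ℤ (0 : ι → ℤ[G])).symm)
    refine ⟨fun _ => z • 1, funext fun i => ?_⟩
    rw [Matrix.vecMulLinear_apply, vecMul_normMatrix, Subsingleton.elim i 0, hz]
    simp
  · rintro ⟨b, rfl⟩
    ext1 i
    rw [Matrix.vecMulLinear_apply, Matrix.vecMulLinear_apply, vecMul_twistedGeneratorRow,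
      vecMul_normMatrix, smul_mul_assoc, normElement_mul_of, sub_self, zero_mul, Pi.zero_apply]

lemma exists_vecMul_twistedGeneratorRow_eq_of_eq_smul [Finite G]
    (hy : Subgroup.closure (Set.range y) = ⊤) {n : ℤ} (hn : n ≠ 0) {a : Fin 1 → ℤ[G]}
    {b : ι → ℤ[G]} (h : a ᵥ* twistedGeneratorRow y w = n • b) :
    ∃ c, c ᵥ* twistedGeneratorRow y w = b := by
  obtain ⟨z, c, hc⟩ := exists_eq_smul_normElement_add_smul_of_vecMul_twistedGeneratorRow hy h
  refine ⟨fun _ => c, smul_right_injective _ hn ?_⟩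
  ext1 i
  change (n • ((fun _ => c) ᵥ* twistedGeneratorRow y w)) i = (n • b) i
  rw [← h, Pi.smul_apply, vecMul_twistedGeneratorRow, vecMul_twistedGeneratorRow, hc, add_mul,
    smul_mul_assoc, smul_mul_assoc, normElement_mul_of, add_sub_add_left_eq_sub, ← smul_sub,
    smul_mul_assoc]

variable [Fintype ι]

lemma vecMul_generatorColumn (a : ι → ℤ[G]) :
    a ᵥ* generatorColumn x = fun _ => a ⬝ᵥ fun i => of ℤ G (x i) - 1 := rfl

lemma exact_generatorColumn_rankOneAugmentation (hx : Function.Surjective (FreeGroup.lift x)) :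
    Function.Exact (generatorColumn x).vecMulLinear (rankOneAugmentation G) := by
  classical
  refine fun a => ⟨fun ha => ?_, ?_⟩
  · suffices h : ∀ c : ℤ[G], ∃ b, b ⬝ᵥ (fun i => of ℤ G (x i) - 1) = c - augmentation G c • 1 by
      obtain ⟨b, hb⟩ := h (a 0)
      rw [← rankOneAugmentation_apply, ha, zero_smul, sub_zero] at hb
      refine ⟨b, funext fun i => ?_⟩
      rw [Matrix.vecMulLinear_apply, vecMul_generatorColumn, hb, Subsingleton.elim i 0]
    intro c
    induction c using MonoidAlgebra.induction_on with
    | of g =>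
      obtain ⟨v, rfl⟩ := hx g
      exact ⟨foxDerivative x v, by rw [foxDerivative_dotProduct]; simp⟩
    | add c c' hc hc' =>
      obtain ⟨b, hb⟩ := hc
      obtain ⟨b', hb'⟩ := hc'
      exact ⟨b + b', by rw [add_dotProduct, hb, hb', map_add, add_smul]; abel⟩
    | smul n c hc =>
      obtain ⟨b, hb⟩ := hc
      exact ⟨n • b, by rw [smul_dotProduct, hb, map_smul, smul_assoc, smul_sub]⟩
  · rintro ⟨b, rfl⟩
    rw [rankOneAugmentation_apply, Matrix.vecMulLinear_apply, vecMul_generatorColumn]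
    simp [dotProduct]

lemma exact_generatorColumn_normMatrix [Finite G] (hx : Function.Surjective (FreeGroup.lift x)) :
    Function.Exact (generatorColumn x).vecMulLinear (normMatrix G).vecMulLinear := by
  intro a
  rw [← exact_generatorColumn_rankOneAugmentation hx a, rankOneAugmentation_apply,
    Matrix.vecMulLinear_apply, vecMul_normMatrix]
  refine ⟨fun h => ?_, fun h => by rw [h, zero_smul]; rfl⟩
  have h1 := congr((($h) 0).coeff 1)
  simpa [-zsmul_eq_mul] using h1

lemma IsPresentation.exact_foxJacobian_generatorColumn [DecidableEq ι] {κ : Type*} [Fintype κ]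
    {r : κ → FreeGroup ι} (hx : IsPresentation x (Set.range r)) :
    Function.Exact (foxJacobian x r).vecMulLinear (generatorColumn x).vecMulLinear := by
  intro a
  have hrow : Set.range (foxJacobian x r).row = foxDerivative x '' Set.range r :=
    Set.range_comp (foxDerivative x) r
  rw [← LinearMap.coe_range, SetLike.mem_coe, range_vecMulLinear, hrow, ← hx.dotProduct_eq_zero_iff,
    Matrix.vecMulLinear_apply, vecMul_generatorColumn]
  exact ⟨fun h => congrFun h 0, fun h => funext fun _ => h⟩

lemma finrank_range_twistedGeneratorRow [Finite G] (hx : Function.Surjective (FreeGroup.lift x))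
    (hy : Subgroup.closure (Set.range y) = ⊤) :
    Module.finrank ℤ (LinearMap.range ((twistedGeneratorRow y w).vecMulLinear.restrictScalars ℤ)) =
      Module.finrank ℤ (LinearMap.range ((generatorColumn x).vecMulLinear.restrictScalars ℤ)) := by
  have hxN := finrank_range_add_finrank_range_of_exact
    (f := (generatorColumn x).vecMulLinear.restrictScalars ℤ)
    (g := (normMatrix G).vecMulLinear.restrictScalars ℤ) (exact_generatorColumn_normMatrix hx)
  have hNw := finrank_range_add_finrank_range_of_exact
    (f := (normMatrix G).vecMulLinear.restrictScalars ℤ)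
    (g := (twistedGeneratorRow y w).vecMulLinear.restrictScalars ℤ)
    (exact_normMatrix_twistedGeneratorRow hy)
  omega

variable [DecidableEq ι] {r : ι → FreeGroup ι}

/-- Over `ℤ`, the row and the kernel of the Jacobian have the same rank as the column of
generators, so the row fills that kernel up to torsion; its image being saturated, it fills it. -/
theorem IsPresentation.exact_twistedGeneratorRow_foxJacobian [Finite G]
    (hx : IsPresentation x (Set.range r)) (hy : Subgroup.closure (Set.range y) = ⊤)
    (hyr : twistedGeneratorRow y w * foxJacobian x r = 0) :
    Function.Exact (twistedGeneratorRow y w).vecMulLinear (foxJacobian x r).vecMulLinear := by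
  set ρ := (twistedGeneratorRow y w).vecMulLinear.restrictScalars ℤ
  set δ := (foxJacobian x r).vecMulLinear.restrictScalars ℤ
  have hle : LinearMap.range ρ ≤ LinearMap.ker δ := by
    rintro _ ⟨a, rfl⟩
    change (a ᵥ* twistedGeneratorRow y w) ᵥ* foxJacobian x r = 0
    rw [Matrix.vecMul_vecMul, hyr, Matrix.vecMul_zero]
  have hrank : Module.finrank ℤ (LinearMap.range ρ) = Module.finrank ℤ (LinearMap.ker δ) := by
    have hker := finrank_ker_add_finrank_range δ
    have hδ := finrank_range_add_finrank_range_of_exact (f := δ)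
      (g := (generatorColumn x).vecMulLinear.restrictScalars ℤ) hx.exact_foxJacobian_generatorColumn
    rw [finrank_range_twistedGeneratorRow hx.lift_surjective hy]
    omega
  refine fun a => ⟨fun ha => ?_, fun ha => hle ha⟩
  obtain ⟨k, hk, m, hm⟩ := exists_smul_mem_of_finrank_eq hle hrank ha
  exact exists_vecMul_twistedGeneratorRow_eq_of_eq_smul hy hk hm

end BalancedPresentation

section FreeResolution

variable {G : Type*} [Group G]

/-- The maps `d` and `ε` form a resolution of the trivial module `ℤ` by free `ℤ[G]`-modules of
ranks `f`. The augmentation `ε` is only `ℤ`-linear, the trivial action on `ℤ` being expressed by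
its invariance under `G`. -/
structure IsFreeResolution (f : ℕ → ℕ)
    (d : (h : ℕ) → (Fin (f (h + 1)) → ℤ[G]) →ₗ[ℤ[G]] (Fin (f h) → ℤ[G]))
    (ε : (Fin (f 0) → ℤ[G]) →ₗ[ℤ] ℤ) : Prop where
  apply_of_smul : ∀ (g : G) (x : Fin (f 0) → ℤ[G]), ε (of ℤ G g • x) = ε x
  surjective : Function.Surjective ε
  exact_zero : Function.Exact (d 0) ε
  exact_succ : ∀ h : ℕ, Function.Exact (d (h + 1)) (d h)

/-- The sequence of ranks `1, n, n, 1, 1, n, n, 1, …`. -/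
def periodicRank (n : ℕ) : ℕ → ℕ
  | 0 => 1
  | 1 => n
  | 2 => n
  | 3 => 1
  | h + 4 => periodicRank n h

/-- The sequence of differentials `A, B, C, D, A, B, C, D, …` between modules of ranks
`periodicRank n`. -/
def periodicMatrix {R : Type*} {n : ℕ} (A : Matrix (Fin n) (Fin 1) R) (B : Matrix (Fin n) (Fin n) R)
    (C : Matrix (Fin 1) (Fin n) R) (D : Matrix (Fin 1) (Fin 1) R) :
    (h : ℕ) → Matrix (Fin (periodicRank n (h + 1))) (Fin (periodicRank n h)) R
  | 0 => A
  | 1 => B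
  | 2 => C
  | 3 => D
  | h + 4 => periodicMatrix A B C D h

variable {n : ℕ} {x y : Fin n → G} {w : Fin n → ℤ[G]ˣ} {r : Fin n → FreeGroup (Fin n)}

/-- The differentials built from a balanced presentation and the row of the fourth syzygy. -/
noncomputable def foxDifferential [Finite G] (x y : Fin n → G) (w : Fin n → ℤ[G]ˣ)
    (r : Fin n → FreeGroup (Fin n)) (h : ℕ) :
    Matrix (Fin (periodicRank n (h + 1))) (Fin (periodicRank n h)) ℤ[G] :=
  periodicMatrix (generatorColumn x) (foxJacobian x r) (twistedGeneratorRow y w) (normMatrix G) h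

lemma rankOneAugmentation_of_smul (g : G) (a : Fin 1 → ℤ[G]) :
    rankOneAugmentation G (of ℤ G g • a) = rankOneAugmentation G a := by
  simp only [rankOneAugmentation_apply, Pi.smul_apply, smul_eq_mul, map_mul, of_apply,
    augmentation_single, one_mul]

lemma rankOneAugmentation_surjective : Function.Surjective (rankOneAugmentation G) := fun k =>
  ⟨fun _ => k • 1, by rw [rankOneAugmentation_apply, map_zsmul, map_one, smul_eq_mul, mul_one]⟩

theorem IsPresentation.isFreeResolution [Finite G] (hx : IsPresentation x (Set.range r))
    (hy : Subgroup.closure (Set.range y) = ⊤)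
    (hyr : twistedGeneratorRow y w * foxJacobian x r = 0) :
    IsFreeResolution (periodicRank n) (fun h => (foxDifferential x y w r h).vecMulLinear)
      (rankOneAugmentation G) where
  apply_of_smul := rankOneAugmentation_of_smul
  surjective := rankOneAugmentation_surjective
  exact_zero := exact_generatorColumn_rankOneAugmentation hx.lift_surjective
  exact_succ := periodic_exact where
    periodic_exact : ∀ h, Function.Exact (foxDifferential x y w r (h + 1)).vecMulLinear
        (foxDifferential x y w r h).vecMulLinear
      | 0 => hx.exact_foxJacobian_generatorColumn
      | 1 => hx.exact_twistedGeneratorRow_foxJacobian hy hyr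
      | 2 => exact_normMatrix_twistedGeneratorRow hy
      | 3 => exact_generatorColumn_normMatrix hx.lift_surjective
      | h + 4 => periodic_exact h

end FreeResolution

section StableComparison

variable {R M N : Type*} [Ring R] [AddCommGroup M] [AddCommGroup N] [Module R M] [Module R N]

section Schanuel

variable {P Q : Type*} [AddCommGroup P] [AddCommGroup Q] [Module R P] [Module R Q]
  [Module.Projective R P] [Module.Projective R Q]

theorem nonempty_ker_prod_equiv {p : P →ₗ[R] M} {q : Q →ₗ[R] M}
    (hp : Function.Surjective p) (hq : Function.Surjective q) :
    Nonempty ((LinearMap.ker p × Q) ≃ₗ[R] (LinearMap.ker q × P)) := by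
  obtain ⟨s, hs⟩ := Module.projective_lifting_property q p hq
  obtain ⟨t, ht⟩ := Module.projective_lifting_property p q hp
  replace hs (x : P) : q (s x) = p x := LinearMap.congr_fun hs x
  replace ht (y : Q) : p (t y) = q y := LinearMap.congr_fun ht y
  let a : LinearMap.ker p × Q →ₗ[R] P := (LinearMap.ker p).subtype.coprod t
  let b : LinearMap.ker q × P →ₗ[R] Q := (LinearMap.ker q).subtype.coprod s
  let a' : LinearMap.ker p × Q →ₗ[R] LinearMap.ker q :=
    (LinearMap.snd R _ _ - s ∘ₗ a).codRestrict _ fun z => by simp [a, hs, ht]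
  let b' : LinearMap.ker q × P →ₗ[R] LinearMap.ker p :=
    (LinearMap.snd R _ _ - t ∘ₗ b).codRestrict _ fun z => by simp [b, hs, ht]
  refine ⟨.ofLinearMap (a'.prod a) (b'.prod b) ?_ ?_⟩ <;> ext <;> simp [a, b, a', b']

end Schanuel

lemma card_le_of_map_ker_eq_zero {K ι κ : Type*} [Field K] [Fintype ι] [Fintype κ] (φ : R →+* K)
    {p : (ι → R) →ₗ[R] M} {q : (κ → R) →ₗ[R] M} (hp : Function.Surjective p)
    (hq : Function.Surjective q) (hφ : ∀ x ∈ LinearMap.ker p, ∀ i, φ (x i) = 0) :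
    Fintype.card ι ≤ Fintype.card κ := by
  classical
  obtain ⟨s, hs⟩ := Module.projective_lifting_property q p hq
  obtain ⟨t, ht⟩ := Module.projective_lifting_property p q hp
  have hker (x : ι → R) : t (s x) - x ∈ LinearMap.ker p := by
    rw [LinearMap.mem_ker, map_sub, ← LinearMap.comp_apply p t, ht, ← LinearMap.comp_apply q s, hs,
      sub_self]
  have hone : s.toMatrixRight'.map φ * t.toMatrixRight'.map φ = 1 := by
    rw [← Matrix.map_mul, ← LinearMap.toMatrixRight'_comp]
    ext i j
    have hij := hφ _ (hker (Pi.single i 1)) j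
    rw [Pi.sub_apply, map_sub, sub_eq_zero] at hij
    change φ (t (s (Pi.single i 1)) j) = _
    rw [hij, Pi.single_apply, Matrix.one_apply, apply_ite φ, map_one, map_zero]
    simp only [eq_comm]
  calc Fintype.card ι = (s.toMatrixRight'.map φ * t.toMatrixRight'.map φ).rank := by
        rw [hone, Matrix.rank_one]
    _ ≤ (s.toMatrixRight'.map φ).rank := Matrix.rank_mul_le_left _ _
    _ ≤ Fintype.card κ := Matrix.rank_le_card_width _

/-- `M` and `N` become isomorphic after adding finitely generated free modules, the one added to
`N` having at most the rank of the one added to `M`. -/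
def StablyLE (R M N : Type*) [Ring R] [AddCommGroup M] [AddCommGroup N] [Module R M]
    [Module R N] : Prop :=
  ∃ (ι κ : Type) (_ : Fintype ι) (_ : Fintype κ), Fintype.card κ ≤ Fintype.card ι ∧
    Nonempty ((M × (ι → R)) ≃ₗ[R] (N × (κ → R)))

lemma StablyLE.refl (R M : Type*) [Ring R] [AddCommGroup M] [Module R M] : StablyLE R M M :=
  ⟨PEmpty, PEmpty, inferInstance, inferInstance, le_rfl, ⟨.refl R _⟩⟩

section Stabilize

variable {ι : Type*} (μ : Type*) (p : (ι → R) →ₗ[R] M)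

/-- The direct sum of `p` and the identity of `μ → R`. -/
def stabilize : (ι ⊕ μ → R) →ₗ[R] M × (μ → R) :=
  p.prodMap .id ∘ₗ (LinearEquiv.sumArrowLequivProdArrow ι μ R R).toLinearMap

variable {p}

lemma stabilize_surjective (hp : Function.Surjective p) : Function.Surjective (stabilize μ p) :=
  (hp.prodMap Function.surjective_id).comp (LinearEquiv.surjective _)

variable {μ}

lemma mem_ker_stabilize {x : ι ⊕ μ → R} :
    x ∈ LinearMap.ker (stabilize μ p) ↔ x ∘ Sum.inl ∈ LinearMap.ker p ∧ x ∘ Sum.inr = 0 :=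
  Prod.mk_eq_zero

variable (μ p)

/-- The identification of the kernel of `stabilize μ p` with that of `p`. -/
def kerStabilizeEquiv : LinearMap.ker (stabilize μ p) ≃ₗ[R] LinearMap.ker p where
  toFun x := ⟨x.1 ∘ Sum.inl, (mem_ker_stabilize.1 x.2).1⟩
  invFun x := ⟨Sum.elim x 0, mem_ker_stabilize.2 ⟨x.2, rfl⟩⟩
  left_inv x := Subtype.ext <|
    (congrArg _ (mem_ker_stabilize.1 x.2).2.symm).trans (Sum.elim_comp_inl_inr x.1)
  right_inv _ := rfl
  map_add' _ _ := rfl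
  map_smul' _ _ := rfl

end Stabilize

/-- The dimension shift: the comparison `StablyLE` passes to first syzygies. -/
lemma StablyLE.card_le_and_ker {K : Type*} {ι κ : Type} [Field K] [Fintype ι] [Fintype κ]
    (h : StablyLE R M N) (φ : R →+* K) {p : (ι → R) →ₗ[R] M} {q : (κ → R) →ₗ[R] N}
    (hp : Function.Surjective p) (hq : Function.Surjective q)
    (hφ : ∀ x ∈ LinearMap.ker p, ∀ i, φ (x i) = 0) :
    Fintype.card ι ≤ Fintype.card κ ∧ StablyLE R (LinearMap.ker p) (LinearMap.ker q) := by
  obtain ⟨μ, ν, _, _, hνμ, ⟨e⟩⟩ := h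
  have hP : Function.Surjective (e.toLinearMap ∘ₗ stabilize μ p) :=
    e.surjective.comp (stabilize_surjective μ hp)
  have hQ := stabilize_surjective ν hq
  have hcard : Fintype.card (ι ⊕ μ) ≤ Fintype.card (κ ⊕ ν) := by
    refine card_le_of_map_ker_eq_zero φ hP hQ fun x hx => ?_
    rw [LinearEquiv.ker_comp, mem_ker_stabilize] at hx
    rintro (i | i)
    · exact hφ _ hx.1 i
    · rw [show x (Sum.inr i) = 0 from congrFun hx.2 i, map_zero]
  obtain ⟨E⟩ := nonempty_ker_prod_equiv hP hQ
  rw [LinearEquiv.ker_comp] at E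
  refine ⟨?_, κ ⊕ ν, ι ⊕ μ, inferInstance, inferInstance, hcard,
    ⟨((kerStabilizeEquiv μ p).symm.prodCongr (.refl R _)).trans
      (E.trans ((kerStabilizeEquiv ν q).prodCongr (.refl R _)))⟩⟩
  rw [Fintype.card_sum, Fintype.card_sum] at hcard
  omega

end StableComparison

section RankComparison

variable {G K : Type*} [Group G] [Field K] {f f' : ℕ → ℕ}
  {d : (h : ℕ) → (Fin (f (h + 1)) → ℤ[G]) →ₗ[ℤ[G]] (Fin (f h) → ℤ[G])}
  {d' : (h : ℕ) → (Fin (f' (h + 1)) → ℤ[G]) →ₗ[ℤ[G]] (Fin (f' h) → ℤ[G])}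
  {ε : (Fin (f 0) → ℤ[G]) →ₗ[ℤ] ℤ} {ε' : (Fin (f' 0) → ℤ[G]) →ₗ[ℤ] ℤ}

lemma IsFreeResolution.apply_smul (hd : IsFreeResolution f d ε) (a : ℤ[G])
    (x : Fin (f 0) → ℤ[G]) : ε (a • x) = augmentation G a * ε x := by
  induction a using MonoidAlgebra.induction_on with
  | of g => rw [hd.apply_of_smul, of_apply, augmentation_single, one_mul]
  | add a b ha hb => rw [add_smul, map_add, ha, hb, map_add, add_mul]
  | smul n a ha => rw [smul_assoc, map_smul, ha, map_smul, smul_mul_assoc]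

lemma IsFreeResolution.le_and_stablyLE (hd : IsFreeResolution f d ε)
    (hd' : IsFreeResolution f' d' ε')
    (hkill : ∀ h, ∃ φ : ℤ[G] →+* K, ∀ x i, φ (d h x i) = 0) (h : ℕ) :
    f h ≤ f' h ∧ StablyLE ℤ[G] (LinearMap.range (d h)) (LinearMap.range (d' h)) := by
  have hkill' (h : ℕ) : ∃ φ : ℤ[G] →+* K, ∀ x ∈ LinearMap.range (d h), ∀ i, φ (x i) = 0 := by
    obtain ⟨φ, hφ⟩ := hkill h
    exact ⟨φ, by rintro _ ⟨x, rfl⟩; exact hφ x⟩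
  induction h with
  | zero =>
    let : Module ℤ[G] ℤ := Module.compHom ℤ (augmentation G).toRingHom
    let p : (Fin (f 0) → ℤ[G]) →ₗ[ℤ[G]] ℤ := { ε with map_smul' := hd.apply_smul }
    let p' : (Fin (f' 0) → ℤ[G]) →ₗ[ℤ[G]] ℤ := { ε' with map_smul' := hd'.apply_smul }
    have hp : LinearMap.ker p = LinearMap.range (d 0) :=
      Function.Exact.linearMap_ker_eq (f := d 0) (g := p) hd.exact_zero
    have hp' : LinearMap.ker p' = LinearMap.range (d' 0) :=
      Function.Exact.linearMap_ker_eq (f := d' 0) (g := p') hd'.exact_zero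
    obtain ⟨φ, hφ⟩ := hkill' 0
    rw [← hp] at hφ
    rw [← hp, ← hp']
    simpa only [Fintype.card_fin] using (StablyLE.refl ℤ[G] ℤ).card_le_and_ker φ
      (p := p) (q := p') hd.surjective hd'.surjective hφ
  | succ h ih =>
    have hk : LinearMap.ker (d h).rangeRestrict = LinearMap.range (d (h + 1)) :=
      (d h).ker_rangeRestrict.trans (hd.exact_succ h).linearMap_ker_eq
    have hk' : LinearMap.ker (d' h).rangeRestrict = LinearMap.range (d' (h + 1)) :=
      (d' h).ker_rangeRestrict.trans (hd'.exact_succ h).linearMap_ker_eq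
    obtain ⟨φ, hφ⟩ := hkill' (h + 1)
    rw [← hk] at hφ
    rw [← hk, ← hk']
    simpa only [Fintype.card_fin] using
      ih.2.card_le_and_ker φ (d h).surjective_rangeRestrict (d' h).surjective_rangeRestrict hφ

end RankComparison

section PeriodicMinimality

variable {G K : Type*} [Group G] [Finite G] [Field K] {n : ℕ} {x y : Fin n → G}
  {w : Fin n → ℤ[G]ˣ} {r : Fin n → FreeGroup (Fin n)}

lemma exists_map_foxDifferential_eq_zero (hcard : (Nat.card G : K) = 0)
    (hr : ∃ φ : ℤ[G] →+* K, (foxJacobian x r).map φ = 0) :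
    ∀ h, ∃ φ : ℤ[G] →+* K, (foxDifferential x y w r h).map φ = 0
  | 0 => ⟨(Int.castRingHom K).comp (augmentation G).toRingHom,
      show (generatorColumn x).map _ = (0 : Matrix (Fin n) (Fin 1) K) by
        ext; simp [generatorColumn]⟩
  | 1 => hr
  | 2 => ⟨(Int.castRingHom K).comp (augmentation G).toRingHom,
      show (twistedGeneratorRow y w).map _ = (0 : Matrix (Fin 1) (Fin n) K) by
        ext; simp [twistedGeneratorRow]⟩
  | 3 => ⟨(Int.castRingHom K).comp (augmentation G).toRingHom,
      show (normMatrix G).map _ = (0 : Matrix (Fin 1) (Fin 1) K) by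
        ext; simp [normMatrix, augmentation_normElement, hcard]⟩
  | h + 4 => exists_map_foxDifferential_eq_zero hcard hr h

/-- A free resolution whose differentials all vanish after some base change to a field has the
least possible ranks, as in the theory of minimal resolutions over a local ring. -/
theorem IsPresentation.periodicRank_le (hx : IsPresentation x (Set.range r))
    (hy : Subgroup.closure (Set.range y) = ⊤) (hyr : twistedGeneratorRow y w * foxJacobian x r = 0)
    (hcard : (Nat.card G : K) = 0) (hr : ∃ φ : ℤ[G] →+* K, (foxJacobian x r).map φ = 0)
    {f : ℕ → ℕ} {d : (h : ℕ) → (Fin (f (h + 1)) → ℤ[G]) →ₗ[ℤ[G]] (Fin (f h) → ℤ[G])}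
    {ε : (Fin (f 0) → ℤ[G]) →ₗ[ℤ] ℤ} (hd : IsFreeResolution f d ε) (h : ℕ) :
    periodicRank n h ≤ f h := by
  refine ((hx.isFreeResolution hy hyr).le_and_stablyLE hd (K := K) (fun k => ?_) h).1
  obtain ⟨φ, hφ⟩ := exists_map_foxDifferential_eq_zero (y := y) (w := w) hcard hr k
  refine ⟨φ, fun a i => ?_⟩
  rw [Matrix.vecMulLinear_apply, RingHom.map_vecMul, hφ, Matrix.vecMul_zero, Pi.zero_apply]

end PeriodicMinimality

section TwoGenerators

variable {G : Type*} [Group G] {a b c d : ℕ}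

/-- The relators `uᵃ(vuᶜ)ᵇ` and `vᵈuᵃ` in the free group on `u` and `v`. -/
def pairRelator (a b c d : ℕ) : Fin 2 → FreeGroup (Fin 2) :=
  ![.of 0 ^ a * (.of 1 * .of 0 ^ c) ^ b, .of 1 ^ d * .of 0 ^ a]

/-- The relations expressed by `pairRelator`. -/
structure IsRelatorPair (a b c d : ℕ) (u v : G) : Prop where
  pow_mul_pow_mul : u ^ a * (v * u ^ c) ^ b = 1
  pow_mul_pow : v ^ d * u ^ a = 1

variable {u v : G}

lemma isRelatorPair_iff_lift {x : Fin 2 → G} :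
    IsRelatorPair a b c d (x 0) (x 1) ↔
      ∀ w ∈ Set.range (pairRelator a b c d), FreeGroup.lift x w = 1 := by
  simp only [Set.forall_mem_range, Fin.forall_fin_two]
  exact ⟨fun h => by simp [pairRelator, h.pow_mul_pow_mul, h.pow_mul_pow],
    fun h => ⟨by simpa [pairRelator] using h.1, by simpa [pairRelator] using h.2⟩⟩

lemma foxJacobian_pairRelator (u v : G) : foxJacobian ![u, v] (pairRelator a b c d) =
    !![∑ k ∈ Finset.range a, of ℤ G u ^ k + of ℤ G u ^ a *
        (∑ k ∈ Finset.range b, of ℤ G (v * u ^ c) ^ k) * of ℤ G v *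
          ∑ k ∈ Finset.range c, of ℤ G u ^ k,
      of ℤ G u ^ a * ∑ k ∈ Finset.range b, of ℤ G (v * u ^ c) ^ k;
      of ℤ G v ^ d * ∑ k ∈ Finset.range a, of ℤ G u ^ k,
      ∑ k ∈ Finset.range d, of ℤ G v ^ k] := by
  ext i j : 1
  fin_cases i <;> fin_cases j <;>
    simp [-of_apply, foxJacobian, pairRelator, foxDerivative_mul, foxDerivative_pow,
      foxDerivative_of, mul_assoc]

lemma exists_map_foxJacobian_pairRelator_eq_zero {K : Type*} [Ring K] (χ : G →* K)
    (hu : ∑ k ∈ Finset.range a, χ u ^ k = 0) (ht : ∑ k ∈ Finset.range b, χ (v * u ^ c) ^ k = 0)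
    (hv : ∑ k ∈ Finset.range d, χ v ^ k = 0) :
    ∃ φ : ℤ[G] →+* K, (foxJacobian ![u, v] (pairRelator a b c d)).map φ = 0 := by
  refine ⟨(MonoidAlgebra.lift ℤ K G χ).toRingHom, ?_⟩
  rw [foxJacobian_pairRelator]
  generalize v * u ^ c = t at ht ⊢
  ext i j
  fin_cases i <;> fin_cases j <;> simp [hu, ht, hv]

lemma IsRelatorPair.commute_pow (h : IsRelatorPair a b c d u v) : Commute v (u ^ a) := by
  rw [eq_inv_of_mul_eq_one_right h.pow_mul_pow]
  exact (Commute.refl v).pow_right d |>.inv_right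

lemma of_sub_one_mul_geom_sum {x z : G} {n : ℕ} (h : z * x ^ n = 1) :
    (of ℤ G x - 1) * (of ℤ G z * ∑ k ∈ Finset.range n, of ℤ G x ^ k) = 1 - of ℤ G z := by
  have hxz : Commute x z := by
    rw [eq_inv_of_mul_eq_one_left h]
    exact ((Commute.refl x).pow_right n).inv_right
  have hof : Commute (of ℤ G x - 1) (of ℤ G z) :=
    (hxz.map (of ℤ G)).sub_left (Commute.one_left _)
  rw [← mul_assoc, hof.eq, mul_assoc, mul_geom_sum, mul_sub_one, ← map_pow, ← map_mul, h, map_one]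

lemma geom_sum_mul_comm {R : Type*} [Ring R] (x : R) (m n : ℕ) :
    (x ^ m - 1) * ∑ k ∈ Finset.range n, x ^ k = (x ^ n - 1) * ∑ k ∈ Finset.range m, x ^ k := by
  have hcomm : Commute (∑ k ∈ Finset.range m, x ^ k) (x ^ n - 1) :=
    (Commute.sum_left _ _ _ fun k _ => Commute.pow_pow_self x k n).sub_right (Commute.one_right _)
  rw [← geom_sum_mul, mul_assoc, mul_geom_sum, hcomm.eq]

lemma IsRelatorPair.twistedGeneratorRow_mul_foxJacobian (h : IsRelatorPair a b c d u v) :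
    twistedGeneratorRow ![v * u ^ c, v] ![-1, Units.map (of ℤ G) (toUnits (u ^ a))] *
      foxJacobian ![u, v] (pairRelator a b c d) = 0 := by
  rw [foxJacobian_pairRelator]
  set U := of ℤ G u
  set V := of ℤ G v
  set T := of ℤ G (v * u ^ c)
  set A := ∑ k ∈ Finset.range a, U ^ k
  set B := ∑ k ∈ Finset.range b, T ^ k
  set C := ∑ k ∈ Finset.range c, U ^ k
  set D := ∑ k ∈ Finset.range d, V ^ k
  have hT : T = V * U ^ c := by simp only [T, map_mul, map_pow, U, V]
  have hVU : Commute V (U ^ a) := by simpa only [map_pow] using h.commute_pow.map (of ℤ G)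
  have hUV : U ^ a * V ^ d = 1 := by
    rw [← map_pow, ← map_pow, ← map_mul, mul_eq_one_comm.1 h.pow_mul_pow, map_one]
  have hTB : (T - 1) * (U ^ a * B) = 1 - U ^ a := by
    simpa only [map_pow] using of_sub_one_mul_geom_sum h.pow_mul_pow_mul
  have hVD : (V - 1) * (U ^ a * D) = 1 - U ^ a := by
    simpa only [map_pow] using of_sub_one_mul_geom_sum (mul_eq_one_comm.1 h.pow_mul_pow)
  have hVC : (U ^ a - 1) * (V * C) = (T - V) * A := by
    rw [← mul_assoc, ← (hVU.sub_right (Commute.one_right V)).eq, mul_assoc, geom_sum_mul_comm, hT]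
    noncomm_ring
  ext i j : 1
  fin_cases i; fin_cases j
  · calc _ = (T - 1) * -1 * (A + U ^ a * B * V * C) + (V - 1) * U ^ a * (V ^ d * A) := by
          simp [-of_apply, twistedGeneratorRow, Matrix.mul_apply, Fin.sum_univ_two, hT, U, V]
      _ = (1 - T) * A - (T - 1) * (U ^ a * B) * (V * C) + (V - 1) * (U ^ a * V ^ d) * A := by
          noncomm_ring
      _ = (1 - T) * A + (U ^ a - 1) * (V * C) + (V - 1) * A := by
          rw [hTB, hUV]; noncomm_ring
      _ = 0 := by rw [hVC]; noncomm_ring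
  · calc _ = (T - 1) * -1 * (U ^ a * B) + (V - 1) * U ^ a * D := by
          simp [-of_apply, twistedGeneratorRow, Matrix.mul_apply, Fin.sum_univ_two, hT, U, V]
      _ = (V - 1) * (U ^ a * D) - (T - 1) * (U ^ a * B) := by noncomm_ring
      _ = 0 := by rw [hTB, hVD, sub_self]

lemma IsRelatorPair.closure_eq_top (h : IsRelatorPair a b c d u v) (hac : a.Coprime c)
    (huv : Subgroup.closure (Set.range ![u, v]) = ⊤) :
    Subgroup.closure (Set.range ![v * u ^ c, v]) = ⊤ := by
  set S := Subgroup.closure (Set.range ![v * u ^ c, v])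
  have hv : v ∈ S := Subgroup.subset_closure ⟨1, rfl⟩
  have huc : u ^ c ∈ S := (S.mul_mem_cancel_left hv).1 (Subgroup.subset_closure ⟨0, rfl⟩)
  have hua : u ^ a ∈ S := by
    rw [eq_inv_of_mul_eq_one_right h.pow_mul_pow]
    exact S.inv_mem (S.pow_mem hv d)
  have hu : u ∈ S := by
    have hbezout : u = (u ^ a) ^ a.gcdA c * (u ^ c) ^ a.gcdB c := by
      rw [← zpow_natCast, ← zpow_natCast, ← zpow_mul, ← zpow_mul, ← zpow_add, ← Nat.gcd_eq_gcd_ab,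
        hac.gcd_eq_one, Nat.cast_one, zpow_one]
    rw [hbezout]
    exact S.mul_mem (S.zpow_mem hua _) (S.zpow_mem huc _)
  rw [eq_top_iff, ← huv, Subgroup.closure_le, Set.range_subset_iff, Fin.forall_fin_two]
  exact ⟨hu, hv⟩

end TwoGenerators

section QuaternionRelations

variable {Γ : Type*} [Group Γ] {p q : Γ}

lemma mul_mul_cancel_left_of_sq_eq (hmul : (p * q) ^ 2 = q ^ 2) : p * q * p = q := by
  rw [sq, sq, ← mul_assoc] at hmul
  exact mul_right_cancel hmul

lemma mul_mul_cancel_right_of_sq_eq (hsq : p ^ 2 = q ^ 2) (hmul : (p * q) ^ 2 = q ^ 2) :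
    q * p * q = p := by
  rw [← hsq, sq, sq, mul_assoc, ← mul_assoc q] at hmul
  exact mul_left_cancel hmul

lemma mul_eq_inv_mul_of_sq_eq (hmul : (p * q) ^ 2 = q ^ 2) : q * p = p⁻¹ * q := by
  rw [eq_inv_mul_iff_mul_eq, ← mul_assoc, mul_mul_cancel_left_of_sq_eq hmul]

lemma sq_sq_eq_one_of_sq_eq (hsq : p ^ 2 = q ^ 2) (hmul : (p * q) ^ 2 = q ^ 2) :
    (p ^ 2) ^ 2 = 1 := by
  have hinv : SemiconjBy q (p ^ 2) (p⁻¹ ^ 2) :=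
    SemiconjBy.pow_right (mul_eq_inv_mul_of_sq_eq hmul) 2
  have hcomm : Commute q (p ^ 2) := hsq ▸ (Commute.refl q).pow_right 2
  rw [sq (p ^ 2), ← eq_inv_iff_mul_eq_one, ← inv_pow]
  exact mul_right_cancel (hcomm.eq.symm.trans hinv.eq)

end QuaternionRelations

section TetrahedralRelations

variable {Γ : Type*} [Group Γ] {n k : ℕ} {p q z u v : Γ}

/-- The defining relations of a generalized binary tetrahedral group, `n` being the order of `z`. -/
structure IsTetrahedralTriple (n : ℕ) (p q z : Γ) : Prop where
  sq_eq : p ^ 2 = q ^ 2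
  mul_sq_eq : (p * q) ^ 2 = q ^ 2
  conj_left : z * p * z⁻¹ = q
  conj_right : z * q * z⁻¹ = p * q
  pow_eq_one : z ^ n = 1

namespace IsTetrahedralTriple

lemma sq_sq_eq_one (h : IsTetrahedralTriple n p q z) : (p ^ 2) ^ 2 = 1 :=
  sq_sq_eq_one_of_sq_eq h.sq_eq h.mul_sq_eq

lemma inv_sq (h : IsTetrahedralTriple n p q z) : p⁻¹ ^ 2 = p ^ 2 := by
  rw [inv_pow, inv_eq_iff_mul_eq_one, ← sq, h.sq_sq_eq_one]

lemma commute_sq (h : IsTetrahedralTriple n p q z) : Commute (p ^ 2) z :=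
  (mul_inv_eq_iff_eq_mul.1 (by rw [← conj_pow, h.conj_left, h.sq_eq])).symm

lemma pow_three_commute (h : IsTetrahedralTriple n p q z) : Commute (z ^ 3) p := by
  refine mul_inv_eq_iff_eq_mul.1 ?_
  calc z ^ 3 * p * (z ^ 3)⁻¹ = z * (z * (z * p * z⁻¹) * z⁻¹) * z⁻¹ := by
        simp only [pow_succ, pow_zero]; group
    _ = z * (p * q) * z⁻¹ := by rw [h.conj_left, h.conj_right]
    _ = (z * p * z⁻¹) * (z * q * z⁻¹) := by group
    _ = q * p * q := by rw [h.conj_left, h.conj_right, mul_assoc]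
    _ = p := mul_mul_cancel_right_of_sq_eq h.sq_eq h.mul_sq_eq

lemma sq_pow_odd (h : IsTetrahedralTriple n p q z) (k : ℕ) : (p ^ 2) ^ (2 * k + 1) = p ^ 2 := by
  rw [pow_succ, pow_mul, h.sq_sq_eq_one, one_pow, one_mul]

lemma sq_mul_pow_odd (h : IsTetrahedralTriple n p q z) (k : ℕ) :
    (p ^ 2 * z) ^ (2 * k + 1) = p ^ 2 * z ^ (2 * k + 1) := by
  rw [h.commute_sq.mul_pow, h.sq_pow_odd]

lemma inv_mul_sq_pow_three (h : IsTetrahedralTriple n p q z) :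
    (p⁻¹ * z ^ 2) ^ 3 = p ^ 2 * z ^ 6 :=
  calc (p⁻¹ * z ^ 2) ^ 3
      = p⁻¹ * (z * (z * p * z⁻¹) * z⁻¹)⁻¹ * (z * (z ^ 3 * p * (z ^ 3)⁻¹) * z⁻¹)⁻¹ * z ^ 6 := by
        simp only [pow_succ, pow_zero, one_mul, mul_inv_rev, inv_inv, mul_assoc,
          inv_mul_cancel_left]
    _ = (q * p * q * p)⁻¹ * z ^ 6 := by
        rw [h.pow_three_commute.eq, mul_inv_cancel_right, h.conj_left, h.conj_right]
        group
    _ = p ^ 2 * z ^ 6 := by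
        rw [mul_mul_cancel_right_of_sq_eq h.sq_eq h.mul_sq_eq, ← sq, ← inv_pow, h.inv_sq]

lemma inv_mul_pow_pow_three (h : IsTetrahedralTriple n p q z) (k : ℕ) :
    (p⁻¹ * z ^ (6 * k + 2)) ^ 3 = p ^ 2 * z ^ (18 * k + 6) := by
  have hcomm : Commute (p⁻¹ * z ^ 2) (z ^ (6 * k)) := by
    rw [show 6 * k = 3 * (2 * k) by ring, pow_mul]
    exact (h.pow_three_commute.symm.inv_left.mul_left
      (Commute.pow_pow_self z 2 3)).pow_right (2 * k)
  calc (p⁻¹ * z ^ (6 * k + 2)) ^ 3 = (p⁻¹ * z ^ 2 * z ^ (6 * k)) ^ 3 := by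
        rw [add_comm, pow_add, mul_assoc]
    _ = p ^ 2 * z ^ 6 * z ^ (6 * k * 3) := by
        rw [hcomm.mul_pow, h.inv_mul_sq_pow_three, ← pow_mul]
    _ = p ^ 2 * z ^ (18 * k + 6) := by rw [mul_assoc, ← pow_add]; ring_nf

lemma inv_mul_pow_mul_pow_sq (h : IsTetrahedralTriple n p q z) (k : ℕ) :
    (p⁻¹ * z ^ (6 * k + 2) * (p ^ 2 * z) ^ (3 * k + 1)) ^ 2 = p ^ 2 * z ^ (18 * k + 6) := by
  have hp : Commute ((p ^ 2) ^ (3 * k + 1)) (p⁻¹ * z ^ (9 * k + 3)) :=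
    (((Commute.refl p).pow_left 2).inv_right.mul_right
      (h.commute_sq.pow_right _)).pow_left _
  have hz : Commute p⁻¹ (z ^ (9 * k + 3)) := by
    rw [show 9 * k + 3 = 3 * (3 * k + 1) by ring, pow_mul]
    exact (h.pow_three_commute.symm.pow_right _).inv_left
  calc (p⁻¹ * z ^ (6 * k + 2) * (p ^ 2 * z) ^ (3 * k + 1)) ^ 2
      = ((p ^ 2) ^ (3 * k + 1) * (p⁻¹ * z ^ (9 * k + 3))) ^ 2 := by
        rw [h.commute_sq.mul_pow, (h.commute_sq.pow_pow _ _).eq, hp.eq, mul_assoc, mul_assoc,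
          ← mul_assoc (z ^ _), ← pow_add]
        ring_nf
    _ = p⁻¹ ^ 2 * z ^ ((9 * k + 3) * 2) := by
        rw [hp.mul_pow, hz.mul_pow, pow_right_comm, h.sq_sq_eq_one, one_pow, one_mul, pow_mul]
    _ = p ^ 2 * z ^ (18 * k + 6) := by rw [h.inv_sq]; ring_nf

theorem isRelatorPair (h : IsTetrahedralTriple (18 * k + 9) p q z) :
    IsRelatorPair 3 2 (3 * k + 1) 3 (p ^ 2 * z) (p⁻¹ * z ^ (6 * k + 2)) := by
  have hz : Commute (p ^ 2) (z ^ 3) := h.commute_sq.pow_right 3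
  have hu : (p ^ 2 * z) ^ 3 = p ^ 2 * z ^ 3 := h.sq_mul_pow_odd 1
  have huv : p ^ 2 * z ^ (18 * k + 6) * (p ^ 2 * z) ^ 3 = 1 :=
    calc p ^ 2 * z ^ (18 * k + 6) * (p ^ 2 * z) ^ 3
        = p ^ 2 * z ^ (18 * k + 6) * (z ^ 3 * p ^ 2) := by rw [hu, hz.eq]
      _ = p ^ 2 * z ^ (18 * k + 9) * p ^ 2 := by
          rw [← mul_assoc, mul_assoc (p ^ 2), ← pow_add]
      _ = 1 := by rw [h.pow_eq_one, mul_one, ← sq, h.sq_sq_eq_one]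
  exact ⟨by rw [h.inv_mul_pow_mul_pow_sq, mul_eq_one_comm, huv],
    by rw [h.inv_mul_pow_pow_three, huv]⟩

lemma eq_sq_mul_pow (h : IsTetrahedralTriple (18 * k + 9) p q z) :
    z = (p ^ 2 * z) ^ (18 * k + 10) := by
  have hu : (p ^ 2 * z) ^ (18 * k + 9) = p ^ 2 := by
    rw [show 18 * k + 9 = 2 * (9 * k + 4) + 1 by ring, h.sq_mul_pow_odd,
      show 2 * (9 * k + 4) + 1 = 18 * k + 9 by ring, h.pow_eq_one, mul_one]
  rw [pow_succ, hu, ← mul_assoc, ← sq, h.sq_sq_eq_one, one_mul]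

end IsTetrahedralTriple

namespace IsRelatorPair

lemma mul_pow_pow_three (h : IsRelatorPair 3 2 (3 * k + 1) 3 u v) :
    (v * u ^ (3 * k + 3)) ^ 3 = u ^ (9 * k + 6) := by
  have hcomm : Commute v (u ^ (3 * k + 3)) := by
    rw [show 3 * k + 3 = 3 * (k + 1) by ring, pow_mul]
    exact h.commute_pow.pow_right _
  rw [hcomm.mul_pow, ← pow_mul, show (3 * k + 3) * 3 = 3 + (9 * k + 6) by ring, pow_add,
    ← mul_assoc, h.pow_mul_pow, one_mul]

lemma pow_mul_mul_sq (h : IsRelatorPair 3 2 (3 * k + 1) 3 u v) :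
    u ^ (9 * k + 6) * (v * u ^ (3 * k + 1) * u) ^ 2 = u ^ 2 * (v * u ^ (3 * k + 1)) := by
  have hcube : (v * u ^ (3 * k + 1) * u ^ 2) ^ 3 = u ^ (9 * k + 6) := by
    rw [mul_assoc, ← pow_add, h.mul_pow_pow_three]
  have hsq := h.pow_mul_pow_mul
  generalize v * u ^ (3 * k + 1) = t at *
  have htu : t * u = t⁻¹ * (u ^ 2)⁻¹ := by
    rw [← mul_inv_rev, eq_inv_iff_mul_eq_one]
    calc t * u * (u ^ 2 * t) = t * (u ^ 3 * t ^ 2) * t⁻¹ := by group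
      _ = 1 := by rw [hsq, mul_one, mul_inv_cancel]
  calc u ^ (9 * k + 6) * (t * u) ^ 2
      = u ^ (9 * k + 6) * t⁻¹ * (t * u ^ 2 * ((t * u ^ 2) ^ 3)⁻¹) * t := by
        rw [htu]; simp only [pow_succ, pow_zero]; group
    _ = u ^ 2 * t := by rw [hcube]; group

lemma commute_pow_mul (h : IsRelatorPair 3 2 (3 * k + 1) 3 u v) :
    Commute (u ^ (9 * k + 6)) (v * u ^ (3 * k + 1)) := by
  rw [show 9 * k + 6 = 3 * (3 * k + 2) by ring, pow_mul]
  exact (h.commute_pow.symm.mul_right (Commute.pow_pow_self u 3 _)).pow_left _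

lemma pow_mul_mul_conj (h : IsRelatorPair 3 2 (3 * k + 1) 3 u v) {p : Γ}
    (hp : p = u ^ (9 * k + 6) * (v * u ^ (3 * k + 1))) :
    p * (u * p * u⁻¹) = u * (u * p * u⁻¹) * u⁻¹ := by
  have hsq := h.pow_mul_mul_sq
  have hcomm : Commute (u ^ (9 * k + 6)) (v * u ^ (3 * k + 1) * u) :=
    h.commute_pow_mul.mul_right (Commute.pow_self u _)
  generalize v * u ^ (3 * k + 1) = t at *
  calc p * (u * p * u⁻¹) = u ^ (9 * k + 6) * (t * u * u ^ (9 * k + 6)) * (t * u) * (u ^ 2)⁻¹ := by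
        rw [hp]; group
    _ = u ^ (9 * k + 6) * (u ^ (9 * k + 6) * (t * u) ^ 2) * (u ^ 2)⁻¹ := by
        rw [← hcomm.eq, sq (t * u)]; simp only [mul_assoc]
    _ = u * (u * p * u⁻¹) * u⁻¹ := by rw [hsq, hp]; group

lemma sq_eq_pow (h : IsRelatorPair 3 2 (3 * k + 1) 3 u v) {p : Γ}
    (hp : p = u ^ (9 * k + 6) * (v * u ^ (3 * k + 1))) : p ^ 2 = u ^ (18 * k + 9) := by
  rw [hp, h.commute_pow_mul.mul_pow, eq_inv_of_mul_eq_one_right h.pow_mul_pow_mul, ← pow_mul,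
    mul_inv_eq_iff_eq_mul, ← pow_add]
  ring_nf

lemma inv_mul_pow_eq (h : IsRelatorPair 3 2 (3 * k + 1) 3 u v) {p : Γ}
    (hp : p = u ^ (9 * k + 6) * (v * u ^ (3 * k + 1))) : p⁻¹ * u ^ (6 * k + 2) = v := by
  rw [inv_mul_eq_iff_eq_mul, ← mul_left_inj (u ^ (3 * k + 1)), mul_assoc p, hp, mul_assoc, ← sq,
    eq_inv_of_mul_eq_one_right h.pow_mul_pow_mul, eq_mul_inv_iff_mul_eq, ← pow_add, ← pow_add]
  ring_nf

theorem exists_isTetrahedralTriple (h : IsRelatorPair 3 2 (3 * k + 1) 3 u v) :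
    ∃ p q z, IsTetrahedralTriple (18 * k + 9) p q z ∧
      p ^ 2 * z = u ∧ p⁻¹ * z ^ (6 * k + 2) = v := by
  obtain ⟨p, hp⟩ : ∃ p, p = u ^ (9 * k + 6) * (v * u ^ (3 * k + 1)) := ⟨_, rfl⟩
  have hpq := h.pow_mul_mul_conj hp
  have hpp := h.sq_eq_pow hp
  have hv := h.inv_mul_pow_eq hp
  set q := u * p * u⁻¹
  set e := u ^ (18 * k + 9) with he
  have hpe : Commute e p := hpp ▸ (Commute.refl p).pow_left 2
  have hue : Commute e u := Commute.pow_self u _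
  have hqe : Commute e q := (hue.mul_right hpe).mul_right hue.inv_right
  have conj_sq {g : Γ} (hg : g ^ 2 = e) : (u * g * u⁻¹) ^ 2 = e := by
    rw [conj_pow, hg, ← hue.eq, mul_inv_cancel_right]
  have conj_eq {g : Γ} (hg : Commute e g) : e * u * g * (e * u)⁻¹ = u * g * u⁻¹ := by
    rw [hue.eq, mul_assoc u, hg.eq]; group
  have hqq : q ^ 2 = e := conj_sq hpp
  have hpqpq : (p * q) ^ 2 = e := hpq ▸ conj_sq hqq
  have hee : e ^ 2 = 1 :=
    hpp ▸ sq_sq_eq_one_of_sq_eq (hpp.trans hqq.symm) (hpqpq.trans hqq.symm)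
  have hpow (m : ℕ) : (e * u) ^ (2 * m) = u ^ (2 * m) := by
    rw [hue.mul_pow, pow_mul, hee, one_pow, one_mul]
  refine ⟨p, q, e * u, ⟨hpp.trans hqq.symm, hpqpq.trans hqq.symm, conj_eq hpe,
    (conj_eq hqe).trans hpq.symm, ?_⟩, ?_, ?_⟩
  · rw [hue.mul_pow, ← he, show 18 * k + 9 = 2 * (9 * k + 4) + 1 by ring, pow_succ, pow_mul, hee,
      one_pow, one_mul, ← sq, hee]
  · rw [hpp, ← mul_assoc, ← sq, hee, one_mul]
  · rw [show 6 * k + 2 = 2 * (3 * k + 1) by ring, hpow, ← hv]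
    ring_nf

end IsRelatorPair

end TetrahedralRelations

section Presentation

variable {G ι : Type*} [Group G] {x : ι → G} {R : Set (FreeGroup ι)}

lemma IsPresentation.of_hom (hx : Subgroup.closure (Set.range x) = ⊤)
    (hR : ∀ w ∈ R, FreeGroup.lift x w = 1) (g : G →* PresentedGroup R)
    (hg : ∀ i, g (x i) = .of i) : IsPresentation x R := by
  have hgf : g.comp (PresentedGroup.toGroup hR) = .id _ :=
    PresentedGroup.ext fun i => by simp [hg]
  have hsurj : Function.Surjective (PresentedGroup.toGroup hR) := by
    rw [← MonoidHom.range_eq_top, eq_top_iff, ← hx, Subgroup.closure_le, Set.range_subset_iff]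
    exact fun i => ⟨.of i, PresentedGroup.toGroup.of hR⟩
  exact ⟨.ofBijective _ ⟨Function.LeftInverse.injective (DFunLike.congr_fun hgf), hsurj⟩,
    fun i => PresentedGroup.toGroup.of hR⟩

lemma lift_presentedGroup_of_eq_one {w : FreeGroup ι} (hw : w ∈ R) :
    FreeGroup.lift (PresentedGroup.of (rels := R)) w = 1 := by
  rw [← PresentedGroup.one_of_mem hw]
  exact (FreeGroup.lift_unique (PresentedGroup.mk R) fun _ => rfl).symm

end Presentation

section QuaternionGroup

variable {Γ : Type*} [Group Γ] {m : ℕ} {a x : Γ}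

lemma exists_zmodHom {n : ℕ} (ha : a ^ n = 1) :
    ∃ e : Multiplicative (ZMod n) →* Γ, ∀ k : ℤ, e (.ofAdd (k : ZMod n)) = a ^ k := by
  refine ⟨AddMonoidHom.toMultiplicativeLeft
    (ZMod.lift n ⟨zmultiplesHom (Additive Γ) (.ofMul a), ?_⟩), fun k => ?_⟩
  · simp [← ofMul_pow, ha]
  · simp

theorem exists_quaternionGroupHom (ha : a ^ (2 * m) = 1) (hx : x ^ 2 = a ^ m)
    (hxa : x * a = a⁻¹ * x) : ∃ f : QuaternionGroup m →* Γ, f (.a 1) = a ∧ f (.xa 0) = x := by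
  obtain ⟨e, he⟩ := exists_zmodHom ha
  have hswap (k : ℤ) : a ^ k * x = x * a ^ (-k) := by
    have hsemi : SemiconjBy x (a ^ (-k)) (a⁻¹ ^ (-k)) := SemiconjBy.zpow_right hxa (-k)
    rw [hsemi.eq, inv_zpow', neg_neg]
  let F : QuaternionGroup m → Γ
    | .a i => e (.ofAdd i)
    | .xa i => x * e (.ofAdd i)
  have hF (g h : QuaternionGroup m) : F (g * h) = F g * F h := by
    rcases g with i | i <;> rcases h with j | j <;>
      obtain ⟨i, rfl⟩ := ZMod.intCast_surjective i <;>
      obtain ⟨j, rfl⟩ := ZMod.intCast_surjective j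
    · simp only [QuaternionGroup.a_mul_a, F, ofAdd_add, map_mul]
    · simp only [QuaternionGroup.a_mul_xa, F, ← Int.cast_sub, he]
      rw [← mul_assoc, hswap, mul_assoc, ← zpow_add, neg_add_eq_sub]
    · simp only [QuaternionGroup.xa_mul_a, F, ofAdd_add, map_mul, mul_assoc]
    · simp only [QuaternionGroup.xa_mul_xa, F, ← Int.cast_natCast (R := ZMod (2 * m)) m,
        ← Int.cast_add, ← Int.cast_sub, he]
      rw [mul_assoc, ← mul_assoc (a ^ i), hswap, mul_assoc, ← mul_assoc x, ← sq, hx, ← zpow_add,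
        ← zpow_natCast, ← zpow_add]
      ring_nf
  refine ⟨MonoidHom.mk' F hF, ?_, ?_⟩
  · simpa only [Int.cast_one, zpow_one] using! he 1
  · exact mul_eq_left.2 (map_one e)

lemma quaternionGroupHom_injective {f : QuaternionGroup 2 →* Γ} (hf : f (.a 1) ^ 2 ≠ 1) :
    Function.Injective f := by
  have hpow : ∀ g : QuaternionGroup 2, g ≠ 1 → g = .a 1 ^ 2 ∨ g ^ 2 = .a 1 ^ 2 := by decide
  rw [← map_pow] at hf
  refine (injective_iff_map_eq_one f).2 fun g hg => of_not_not fun hne => hf ?_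
  rcases hpow g hne with rfl | hsq
  · exact hg
  · rw [← hsq, map_pow, hg, one_pow]

end QuaternionGroup

lemma finite_of_sup_zpowers_eq_top {G : Type*} [Group G] {N : Subgroup G} [N.Normal] [Finite N]
    {z : G} (hz : IsOfFinOrder z) (h : N ⊔ Subgroup.zpowers z = ⊤) : Finite G := by
  have : Finite (Subgroup.zpowers z) := hz.finite_zpowers
  rw [← Set.finite_univ_iff, ← Subgroup.coe_top, ← h, Subgroup.normal_mul]
  exact (Set.toFinite _).mul (Set.toFinite _)

section TetrahedralPresentation

variable {Γ : Type*} [Group Γ] {n k : ℕ} {p q z : Γ}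

namespace IsTetrahedralTriple

theorem exists_quaternionGroupHom (h : IsTetrahedralTriple n p q z) :
    ∃ f : QuaternionGroup 2 →* Γ, f (.a 1) = p ∧ f (.xa 0) = q :=
  PeriodicResolution.exists_quaternionGroupHom (by rw [pow_mul, h.sq_sq_eq_one]) h.sq_eq.symm
    (mul_eq_inv_mul_of_sq_eq h.mul_sq_eq)

lemma closure_normal [Finite (Subgroup.closure {p, q})] (h : IsTetrahedralTriple n p q z)
    (htop : Subgroup.closure {p, q, z} = ⊤) : (Subgroup.closure {p, q}).Normal := by
  set N := Subgroup.closure {p, q}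
  have hp : p ∈ N := Subgroup.subset_closure (by simp)
  have hq : q ∈ N := Subgroup.subset_closure (by simp)
  have hconj : N ≤ N.comap (MulAut.conj z).toMonoidHom := by
    rw [Subgroup.closure_le, Set.insert_subset_iff, Set.singleton_subset_iff]
    exact ⟨h.conj_left.symm.subst hq, h.conj_right.symm.subst (N.mul_mem hp hq)⟩
  have hz : z ∈ Subgroup.normalizer (N : Set Γ) :=
    Subgroup.mem_normalizer_fintype fun _ hg => hconj hg
  rw [← Subgroup.normalizer_eq_top_iff, eq_top_iff, ← htop, Subgroup.closure_le]
  rintro g (rfl | rfl | rfl)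
  exacts [Subgroup.le_normalizer hp, Subgroup.le_normalizer hq, hz]

theorem finite (h : IsTetrahedralTriple n p q z) (hn : 0 < n)
    (htop : Subgroup.closure {p, q, z} = ⊤) : Finite Γ := by
  obtain ⟨f, hp, hq⟩ := h.exists_quaternionGroupHom
  have hle : Subgroup.closure {p, q} ≤ f.range := by
    rw [Subgroup.closure_le, Set.insert_subset_iff, Set.singleton_subset_iff]
    exact ⟨⟨_, hp⟩, ⟨_, hq⟩⟩
  have : Finite f.range := .of_surjective _ f.rangeRestrict_surjective
  have : Finite (Subgroup.closure {p, q}) :=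
    Finite.of_injective _ (Subgroup.inclusion_injective hle)
  have := h.closure_normal htop
  refine finite_of_sup_zpowers_eq_top (N := Subgroup.closure {p, q})
    (isOfFinOrder_iff_pow_eq_one.2 ⟨n, hn, h.pow_eq_one⟩) ?_
  rw [Subgroup.zpowers_eq_closure, ← Subgroup.closure_union, ← htop]
  congr 1
  ext
  simp only [Set.mem_union, Set.mem_insert_iff, Set.mem_singleton_iff]
  tauto

end IsTetrahedralTriple

/-- The relators of `rels`, with an arbitrary exponent `n` in place of `3 ^ s`. -/
def tetrahedralRels (n : ℕ) : Set (FreeGroup Gen) :=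
  {.of .p ^ 2 * (.of .q ^ 2)⁻¹, (.of .p * .of .q) ^ 2 * (.of .q ^ 2)⁻¹,
    .of .z * .of .p * (.of .z)⁻¹ * (.of .q)⁻¹, .of .z * .of .q * (.of .z)⁻¹ * (.of .p * .of .q)⁻¹,
    .of .z ^ n}

lemma isTetrahedralTriple_iff_lift {g : Gen → Γ} :
    IsTetrahedralTriple n (g .p) (g .q) (g .z) ↔
      ∀ w ∈ tetrahedralRels n, FreeGroup.lift g w = 1 := by
  simp only [tetrahedralRels, Set.forall_mem_insert, Set.mem_singleton_iff, forall_eq, map_mul,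
    map_pow, map_inv, FreeGroup.lift_apply_of, mul_inv_eq_one]
  exact ⟨fun ⟨h₁, h₂, h₃, h₄, h₅⟩ => ⟨h₁, h₂, h₃, h₄, h₅⟩,
    fun ⟨h₁, h₂, h₃, h₄, h₅⟩ => ⟨h₁, h₂, h₃, h₄, h₅⟩⟩

/-- The generalized binary tetrahedral group `⟨p, q, z | p² = (pq)² = q², z p z⁻¹ = q,
z q z⁻¹ = pq, zⁿ = 1⟩`. -/
abbrev TetrahedralGroup (n : ℕ) : Type := PresentedGroup (tetrahedralRels n)

namespace TetrahedralGroup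

lemma isTetrahedralTriple (n : ℕ) :
    IsTetrahedralTriple (Γ := TetrahedralGroup n) n (.of .p) (.of .q) (.of .z) :=
  isTetrahedralTriple_iff_lift.2 fun _ => lift_presentedGroup_of_eq_one

lemma closure_eq_top (n : ℕ) :
    Subgroup.closure {.of .p, .of .q, .of .z} = (⊤ : Subgroup (TetrahedralGroup n)) := by
  rw [← PresentedGroup.closure_range_of]
  congr 1
  ext g
  exact ⟨by rintro (rfl | rfl | rfl) <;> exact ⟨_, rfl⟩, by rintro ⟨_ | _ | _, rfl⟩ <;> simp⟩

instance finite [NeZero n] : Finite (TetrahedralGroup n) :=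
  (isTetrahedralTriple n).finite (NeZero.pos n) (closure_eq_top n)

theorem exists_hom (h : IsTetrahedralTriple n p q z) :
    ∃ g : TetrahedralGroup n →* Γ, g (.of .p) = p ∧ g (.of .q) = q ∧ g (.of .z) = z := by
  let y : Gen → Γ | .p => p | .q => q | .z => z
  have hy := (isTetrahedralTriple_iff_lift (g := y)).1 h
  exact ⟨PresentedGroup.toGroup hy, PresentedGroup.toGroup.of hy, PresentedGroup.toGroup.of hy,
    PresentedGroup.toGroup.of hy⟩

/-- The matrices generate `SL₂(𝔽₃)`, the binary tetrahedral group. -/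
lemma exists_isTetrahedralTriple_specialLinearGroup (hn : 3 ∣ n) :
    ∃ P Q Z : Matrix.SpecialLinearGroup (Fin 2) (ZMod 3),
      IsTetrahedralTriple n P Q Z ∧ P ^ 2 ≠ 1 := by
  obtain ⟨m, rfl⟩ := hn
  let P : Matrix.SpecialLinearGroup (Fin 2) (ZMod 3) := ⟨!![0, 1; 2, 0], by decide⟩
  let Q : Matrix.SpecialLinearGroup (Fin 2) (ZMod 3) := ⟨!![1, 2; 2, 2], by decide⟩
  let Z : Matrix.SpecialLinearGroup (Fin 2) (ZMod 3) := ⟨!![1, 2; 0, 1], by decide⟩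
  have hZ : Z ^ 3 = 1 := by decide
  refine ⟨P, Q, Z, ⟨by decide, by decide, mul_inv_eq_iff_eq_mul.2 (by decide),
    mul_inv_eq_iff_eq_mul.2 (by decide), ?_⟩, by decide⟩
  rw [pow_mul, hZ, one_pow]

theorem exists_quaternionGroupHom_injective (hn : 3 ∣ n) :
    ∃ f : QuaternionGroup 2 →* TetrahedralGroup n, Function.Injective f := by
  obtain ⟨f, hp, -⟩ := (isTetrahedralTriple n).exists_quaternionGroupHom
  obtain ⟨P, Q, Z, h, hP⟩ := exists_isTetrahedralTriple_specialLinearGroup hn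
  obtain ⟨g, rfl, -⟩ := exists_hom h
  refine ⟨f, quaternionGroupHom_injective fun hf => hP ?_⟩
  rw [← map_pow, ← hp, hf, map_one]

theorem exists_subgroup_mulEquiv_quaternionGroup (hn : 3 ∣ n) :
    ∃ H : Subgroup (TetrahedralGroup n), Nonempty (H ≃* QuaternionGroup 2) := by
  obtain ⟨f, hf⟩ := exists_quaternionGroupHom_injective hn
  exact ⟨f.range, ⟨(MonoidHom.ofInjective hf).symm⟩⟩

lemma two_dvd_card (hn : 3 ∣ n) : 2 ∣ Nat.card (TetrahedralGroup n) := by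
  obtain ⟨H, ⟨e⟩⟩ := exists_subgroup_mulEquiv_quaternionGroup hn
  refine Dvd.dvd.trans ?_ H.card_subgroup_dvd_card
  rw [Nat.card_congr e.toEquiv, Nat.card_eq_fintype_card, QuaternionGroup.card]
  norm_num

/-- The generators `u = p²z` and `v = p⁻¹z^{6k+2}` of the two-relator presentation of
`TetrahedralGroup (18 * k + 9)`. -/
def pairGenerator (k : ℕ) : Fin 2 → TetrahedralGroup (18 * k + 9) :=
  ![.of .p ^ 2 * .of .z, (.of .p)⁻¹ * .of .z ^ (6 * k + 2)]

lemma isRelatorPair (k : ℕ) :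
    IsRelatorPair 3 2 (3 * k + 1) 3 (pairGenerator k 0) (pairGenerator k 1) :=
  (isTetrahedralTriple _).isRelatorPair

lemma closure_pairGenerator (k : ℕ) : Subgroup.closure (Set.range (pairGenerator k)) = ⊤ := by
  set S := Subgroup.closure (Set.range (pairGenerator k))
  have hu : pairGenerator k 0 ∈ S := Subgroup.subset_closure ⟨0, rfl⟩
  have hv : pairGenerator k 1 ∈ S := Subgroup.subset_closure ⟨1, rfl⟩
  have hz : .of .z ∈ S := by
    rw [(isTetrahedralTriple _).eq_sq_mul_pow]
    exact S.pow_mem hu _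
  have hp : .of .p ∈ S := inv_mem_iff.1 ((S.mul_mem_cancel_right (S.pow_mem hz _)).1 hv)
  have hq : .of .q ∈ S := by
    rw [← (isTetrahedralTriple _).conj_left]
    exact S.mul_mem (S.mul_mem hz hp) (S.inv_mem hz)
  rw [eq_top_iff, ← closure_eq_top, Subgroup.closure_le]
  rintro g (rfl | rfl | rfl) <;> assumption

theorem isPresentation (k : ℕ) :
    IsPresentation (pairGenerator k) (Set.range (pairRelator 3 2 (3 * k + 1) 3)) := by
  have hr : IsRelatorPair (G := PresentedGroup (Set.range (pairRelator 3 2 (3 * k + 1) 3)))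
      3 2 (3 * k + 1) 3 (.of 0) (.of 1) :=
    isRelatorPair_iff_lift.2 fun _ => lift_presentedGroup_of_eq_one
  obtain ⟨p, q, z, h, hu, hv⟩ := hr.exists_isTetrahedralTriple
  obtain ⟨g, rfl, -, rfl⟩ := exists_hom h
  refine .of_hom (closure_pairGenerator k) (isRelatorPair_iff_lift.1 (isRelatorPair k)) g
    (Fin.forall_fin_two.2 ⟨?_, ?_⟩)
  · simpa [pairGenerator] using hu
  · simpa [pairGenerator] using hv

/-- The units `-1` and `u³` in the row of the fourth syzygy. -/
noncomputable def pairUnit (k : ℕ) : Fin 2 → ℤ[TetrahedralGroup (18 * k + 9)]ˣ :=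
  ![-1, Units.map (of ℤ _) (toUnits (pairGenerator k 0 ^ 3))]

/-- The generators of `TetrahedralGroup (18 * k + 9)` in the row of the fourth syzygy. -/
def syzygyGenerator (k : ℕ) : Fin 2 → TetrahedralGroup (18 * k + 9) :=
  ![pairGenerator k 1 * pairGenerator k 0 ^ (3 * k + 1), pairGenerator k 1]

lemma closure_syzygyGenerator (k : ℕ) : Subgroup.closure (Set.range (syzygyGenerator k)) = ⊤ :=
  (isRelatorPair k).closure_eq_top (by simp) (closure_pairGenerator k)

lemma twistedGeneratorRow_mul_foxJacobian (k : ℕ) :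
    twistedGeneratorRow (syzygyGenerator k) (pairUnit k) *
      foxJacobian (pairGenerator k) (pairRelator 3 2 (3 * k + 1) 3) = 0 :=
  (isRelatorPair k).twistedGeneratorRow_mul_foxJacobian

lemma exists_hom_pairGenerator_eq_pow {ω : Γ} (hω : ω ^ 3 = 1) (k : ℕ) :
    ∃ χ : TetrahedralGroup (18 * k + 9) →* Γ,
      χ (pairGenerator k 0) = ω ∧ χ (pairGenerator k 1) = ω ^ 2 := by
  have hpow (m : ℕ) : ω ^ (3 * m) = 1 := by rw [pow_mul, hω, one_pow]
  have htriple : IsTetrahedralTriple (18 * k + 9) 1 1 ω :=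
    ⟨rfl, by simp, by simp, by simp, by rw [show 18 * k + 9 = 3 * (6 * k + 3) by ring, hpow]⟩
  obtain ⟨χ, hp, -, hz⟩ := exists_hom htriple
  refine ⟨χ, by simp [pairGenerator, hp, hz], ?_⟩
  simp [pairGenerator, hp, hz, pow_add, show 6 * k = 3 * (2 * k) by ring, hpow]

lemma exists_map_foxJacobian_eq_zero {K : Type*} [Field K] [CharP K 2] {ω : Kˣ}
    (hω : IsPrimitiveRoot ω 3) (k : ℕ) :
    ∃ φ : ℤ[TetrahedralGroup (18 * k + 9)] →+* K,
      (foxJacobian (pairGenerator k) (pairRelator 3 2 (3 * k + 1) 3)).map φ = 0 := by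
  obtain ⟨χ, hu, hv⟩ := exists_hom_pairGenerator_eq_pow hω.pow_eq_one k
  have ht : χ (pairGenerator k 1 * pairGenerator k 0 ^ (3 * k + 1)) = 1 := by
    rw [map_mul, map_pow, hu, hv, ← pow_add, show 2 + (3 * k + 1) = 3 * (k + 1) by ring, pow_mul,
      hω.pow_eq_one, one_pow]
  have hgeom {ζ : Kˣ} (hζ : IsPrimitiveRoot ζ 3) : ∑ i ∈ Finset.range 3, (ζ : K) ^ i = 0 :=
    (IsPrimitiveRoot.coe_units_iff.2 hζ).geom_sum_eq_zero (by norm_num)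
  refine exists_map_foxJacobian_pairRelator_eq_zero (u := pairGenerator k 0)
    (v := pairGenerator k 1) ((Units.coeHom K).comp χ) ?_ ?_ ?_
  · rw [MonoidHom.comp_apply, hu]
    exact hgeom hω
  · rw [MonoidHom.comp_apply, ht]
    simpa using CharTwo.two_eq_zero (R := K)
  · rw [MonoidHom.comp_apply, hv]
    exact hgeom (hω.pow_of_coprime 2 (by norm_num))

end TetrahedralGroup

end TetrahedralPresentation

lemma exists_isPrimitiveRoot_three_charTwo (K : Type*) [Field K] [IsAlgClosed K] [CharP K 2] :
    ∃ ω : Kˣ, IsPrimitiveRoot ω 3 := by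
  have : NeZero ((3 : ℕ) : K) := ⟨by rw [Ne, CharP.cast_eq_zero_iff K 2]; norm_num⟩
  obtain ⟨ω, hω⟩ := HasEnoughRootsOfUnity.exists_primitiveRoot K 3
  exact ⟨_, hω.isUnit_unit three_ne_zero⟩

lemma periodicRank_two : periodicRank 2 = minRank := by
  suffices ∀ h, periodicRank 2 h = minRank h from funext this
  intro h
  induction h using Nat.strongRecOn with
  | ind h ih =>
    match h with
    | 0 | 1 | 2 | 3 => rfl
    | h + 4 => rw [periodicRank, ih h (by omega), minRank, minRank, Nat.add_mod_right]

end PeriodicResolution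

open PeriodicResolution

theorem stmt19_general {n : ℕ} (hodd : Odd n) (hn : 9 ∣ n) :
    (∃ H : Subgroup (TetrahedralGroup n), Nonempty (H ≃* QuaternionGroup 2)) ∧
    (∃ d ε, IsFreeResolution (G := TetrahedralGroup n) minRank d ε) ∧
    (∀ f d ε, IsFreeResolution (G := TetrahedralGroup n) f d ε → ∀ h, minRank h ≤ f h) := by
  have hthree : 3 ∣ n := .trans (by norm_num) hn
  obtain ⟨k, rfl⟩ : ∃ k, n = 18 * k + 9 := by
    obtain ⟨m, rfl⟩ := hn
    obtain ⟨k, rfl⟩ := (Nat.odd_mul.1 hodd).2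
    exact ⟨k, by ring⟩
  have hx := TetrahedralGroup.isPresentation k
  have hy := TetrahedralGroup.closure_syzygyGenerator k
  have hyr := TetrahedralGroup.twistedGeneratorRow_mul_foxJacobian k
  rw [← periodicRank_two]
  refine ⟨TetrahedralGroup.exists_subgroup_mulEquiv_quaternionGroup hthree,
    ⟨_, _, hx.isFreeResolution hy hyr⟩, fun f d ε hd => ?_⟩
  let K := AlgebraicClosure (ZMod 2)
  obtain ⟨ω, hω⟩ := exists_isPrimitiveRoot_three_charTwo K
  have hcard : (Nat.card (TetrahedralGroup (18 * k + 9)) : K) = 0 :=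
    (CharP.cast_eq_zero_iff K 2 _).2 (TetrahedralGroup.two_dvd_card hthree)
  exact hx.periodicRank_le hy hyr hcard (TetrahedralGroup.exists_map_foxJacobian_eq_zero hω k) hd

/-- the generalized binary tetrahedral group `G = P'_{8·3^s}` contains a copy of
`Q₈`, it admits a free resolution of `ℤ` over `ℤ[G]` with ranks `1, 2, 2, 1, 1, 2, 2, 1, …`,
and these ranks are minimal among all free resolutions of `ℤ` over `ℤ[G]`.  A resolution is
encoded by `ℤ[G]`-linear maps `d h : ℤ[G]^{f(h+1)} → ℤ[G]^{f h}` together with a surjective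
`ℤ`-linear, `G`-equivariant augmentation `ε : ℤ[G]^{f 0} → ℤ` (with trivial `G`-action on
`ℤ`), the sequence being exact everywhere. -/
theorem stmt19 (s : ℕ) (hs : 2 ≤ s) :
    (∃ H : Subgroup (PresentedGroup (rels s)), Nonempty (H ≃* QuaternionGroup 2)) ∧
    (∃ (d : (h : ℕ) → (Fin (minRank (h + 1)) → MonoidAlgebra ℤ (PresentedGroup (rels s)))
        →ₗ[MonoidAlgebra ℤ (PresentedGroup (rels s))]
          (Fin (minRank h) → MonoidAlgebra ℤ (PresentedGroup (rels s))))
      (ε : (Fin (minRank 0) → MonoidAlgebra ℤ (PresentedGroup (rels s))) →ₗ[ℤ] ℤ),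
      (∀ (g : PresentedGroup (rels s))
          (x : Fin (minRank 0) → MonoidAlgebra ℤ (PresentedGroup (rels s))),
        ε (MonoidAlgebra.of ℤ (PresentedGroup (rels s)) g • x) = ε x) ∧
      Function.Surjective ε ∧ Function.Exact (d 0) ε ∧
      (∀ h : ℕ, Function.Exact (d (h + 1)) (d h))) ∧
    (∀ (f : ℕ → ℕ)
      (d : (h : ℕ) → (Fin (f (h + 1)) → MonoidAlgebra ℤ (PresentedGroup (rels s)))
        →ₗ[MonoidAlgebra ℤ (PresentedGroup (rels s))]
          (Fin (f h) → MonoidAlgebra ℤ (PresentedGroup (rels s))))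
      (ε : (Fin (f 0) → MonoidAlgebra ℤ (PresentedGroup (rels s))) →ₗ[ℤ] ℤ),
      (∀ (g : PresentedGroup (rels s))
          (x : Fin (f 0) → MonoidAlgebra ℤ (PresentedGroup (rels s))),
        ε (MonoidAlgebra.of ℤ (PresentedGroup (rels s)) g • x) = ε x) →
      Function.Surjective ε → Function.Exact (d 0) ε →
      (∀ h : ℕ, Function.Exact (d (h + 1)) (d h)) →
      ∀ h : ℕ, minRank h ≤ f h) := by
  obtain ⟨hH, ⟨d, ε, hd⟩, hmin⟩ :=
    stmt19_general (n := 3 ^ s) (.pow (by decide)) (pow_dvd_pow 3 hs)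
  exact ⟨hH, ⟨d, ε, hd.apply_of_smul, hd.surjective, hd.exact_zero, hd.exact_succ⟩,
    fun f d ε hsmul hsurj hzero hsucc => hmin f d ε ⟨hsmul, hsurj, hzero, hsucc⟩⟩
end
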